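/- Let n ≥ 2, j ≥ 3, 0 < δ < 1, and let β ≥ 0 and α be real numbers such that either (n−3)/2 < β < (n−1)/2 and α ≤ β + (j−1)(β − (n−3)/2), or β ≥ (n−1)/2 and α < β + (j−1). Let 𝐚 = (a₁,…,a_{j−1}) be a multi-index with each a_i ∈ {0,1}. Then there exist γ > 0 (possibly depending on β) and a constant C = C(n, j, α, β, δ, χ) such that for every Schwartz function q on ℝⁿ and every 𝐫 = (r₁,…,r_{j−1}) with r_i ∈ (1−δ, 1+δ) whenever a_i = 1 and r_i ∈ (0,∞) whenever a_i = 0, the partial derivative ∂_𝐫^𝐚 ( χ(η) S_{j,𝐫}(q)(η) ) := ( ∏_{i : a_i = 1} ∂_{r_i} ) ( χ(η) S_{j,𝐫}(q)(η) ) exists for η ≠ 0 and satisfies ‖ ∂_𝐫^𝐚 ( χ(·) S_{j,𝐫}(q)(·) ) ‖_{L²_{α−|𝐚|}} ≤ C ( ∏_{i=1}^{j−1} (1+r_i)^{−γ} ) ‖q‖^j_{W^{β,2}_4}, where |𝐚| = a₁+⋯+a_{j−1}. -/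

import Mathlib

open MeasureTheory Filter Set
open scoped ENNReal RealInnerProductSpace

noncomputable section

abbrev Euc (n : ℕ) := EuclideanSpace ℝ (Fin n)

/-- The Japanese bracket `⟨x⟩ = (1+|x|²)^{1/2}`. -/
def jap {n : ℕ} (x : Euc n) : ℝ := Real.sqrt (1 + ‖x‖ ^ 2)

/-- The Ewald sphere measure `σ_{rη}`: the `(n-1)`-dimensional Hausdorff measure restricted
to `Γ_r(η) = {ξ : |ξ - η/2| = r|η|/2}`. -/
def ewaldM (n : ℕ) (r : ℝ) (η : Euc n) : Measure (Euc n) :=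
  (MeasureTheory.Measure.hausdorffMeasure ((n : ℝ) - 1)).restrict
    (Metric.sphere ((2 : ℝ)⁻¹ • η) (r * ‖η‖ / 2))

/-- The Fourier transform `f̂(ξ) = ∫ e^{-iξ·x} f(x) dx`. -/
def ft {n : ℕ} (f : Euc n → ℂ) (ξ : Euc n) : ℂ :=
  ∫ x : Euc n, Complex.exp (-Complex.I * ((⟪ξ, x⟫ : ℝ) : ℂ)) * f x

/-- `⟨D⟩^β f`: inverse Fourier transform of `⟨ξ⟩^β f̂(ξ)`. -/
def besselD {n : ℕ} (β : ℝ) (f : Euc n → ℂ) (x : Euc n) : ℂ :=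
  (((2 * Real.pi) ^ n : ℝ)⁻¹ : ℝ) •
    ∫ ξ : Euc n, Complex.exp (Complex.I * ((⟪ξ, x⟫ : ℝ) : ℂ)) *
      (((jap ξ ^ β : ℝ) : ℂ) * ft f ξ)

/-- The weighted Sobolev norm `‖f‖_{W^{β,2}_δ} = ‖⟨·⟩^δ ⟨D⟩^β f‖_{L²}`. -/
def wSobNorm {n : ℕ} (β δ : ℝ) (f : Euc n → ℂ) : ℝ≥0∞ :=
  eLpNorm (fun x : Euc n => (jap x ^ δ : ℝ) • besselD β f x) 2 volume

/-- The spherical operator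
`S_r(q)(η) = (2/(|η|(1+r))) ∫_{Γ_r(η)} q̂(ξ) q̂(η-ξ) dσ_{rη}(ξ)`. -/
def Sr {n : ℕ} (r : ℝ) (q : Euc n → ℂ) (η : Euc n) : ℂ :=
  ((2 / (‖η‖ * (1 + r))) : ℝ) • ∫ ξ, ft q ξ * ft q (η - ξ) ∂(ewaldM n r η)

/-- `K_r(g₁,g₂)(η) = (1/|η|) ∫_{Γ_r(η)} |g₁(ξ)||g₂(η-ξ)| dσ_{rη}(ξ)`. -/
def Kr {n : ℕ} (r : ℝ) (g₁ g₂ : Euc n → ℂ) (η : Euc n) : ℝ :=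
  ‖η‖⁻¹ * ∫ ξ, ‖g₁ ξ‖ * ‖g₂ (η - ξ)‖ ∂(ewaldM n r η)

/-- The `i`-th difference in the chain `η - ξ₀, ξ₀ - ξ₁, …, ξ_{k-2} - ξ_{k-1}, ξ_{k-1}`
(`0`-indexed version of `η-ξ₁, ξ₁-ξ₂, …, ξ_{j-2}-ξ_{j-1}, ξ_{j-1}` with `k = j-1`). -/
def chainDiff {n : ℕ} (k : ℕ) (η : Euc n) (ξ : Fin k → Euc n) (i : Fin (k + 1)) : Euc n :=
  (if h : (i : ℕ) = 0 then η else ξ ⟨(i : ℕ) - 1, by have := i.isLt; omega⟩) -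
    (if h : (i : ℕ) < k then ξ ⟨(i : ℕ), h⟩ else 0)

/-- `S_{j,𝐫}(q)(η)` with `j = k + 1`:
`(∏ᵢ 2/(1+rᵢ)) |η|^{-(j-1)} ∫_{Γ_{r₁}(η)}⋯∫_{Γ_{r_{j-1}}(η)} q̂(η-ξ₁) ∏ q̂(ξᵢ-ξ_{i+1}) q̂(ξ_{j-1}) dσ`. -/
def Sj {n : ℕ} (k : ℕ) (r : Fin k → ℝ) (q : Euc n → ℂ) (η : Euc n) : ℂ :=
  (((∏ i : Fin k, 2 / (1 + r i)) * ‖η‖ ^ (-(k : ℝ))) : ℝ) •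
    ∫ ξ : Fin k → Euc n, ∏ i : Fin (k + 1), ft q (chainDiff k η ξ i)
      ∂(Measure.pi fun i => ewaldM n (r i) η)

/-- Iterated partial derivatives with respect to the variables `r_i`, `i ∈ l`. -/
def partialR {k : ℕ} (l : List (Fin k)) (G : (Fin k → ℝ) → ℂ) : (Fin k → ℝ) → ℂ :=
  l.foldr (fun i H r => deriv (fun t : ℝ => H (Function.update r i t)) (r i)) G

/-- The list of indices `i` with `a i = 1` for a multi-index `a : Fin k → Bool`. -/
def onesList {k : ℕ} (a : Fin k → Bool) : List (Fin k) :=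
  (List.finRange k).filter fun i => a i

section

/-- unit sphere Hausdorff measure -/
def sphM (n : ℕ) : Measure (Euc n) :=
  (MeasureTheory.Measure.hausdorffMeasure ((n : ℝ) - 1)).restrict (Metric.sphere 0 1)

def insE {m : ℕ} (i : Fin (m + 1)) (τ : ℝ) (z : Fin m → ℝ) : Euc (m + 1) :=
  WithLp.toLp 2 (i.insertNth τ z : Fin (m + 1) → ℝ)

lemma insE_same {m : ℕ} (i : Fin (m + 1)) (τ : ℝ) (z : Fin m → ℝ) : insE i τ z i = τ := by
  simp [insE]

lemma insE_succ {m : ℕ} (i : Fin (m + 1)) (τ : ℝ) (z : Fin m → ℝ) (j : Fin m) :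
    insE i τ z (i.succAbove j) = z j := by
  simp [insE]

lemma insE_ext {m : ℕ} (i : Fin (m + 1)) {x y : Euc (m + 1)} (h : x i = y i)
    (h2 : ∀ j, x (i.succAbove j) = y (i.succAbove j)) : x = y := by
  ext l
  rcases Fin.eq_self_or_eq_succAbove i l with rfl | ⟨j, rfl⟩
  · exact h
  · exact h2 j

lemma insE_smul {m : ℕ} (i : Fin (m + 1)) (c τ : ℝ) (z : Fin m → ℝ) :
    c • insE i τ z = insE i (c * τ) (c • z) := by
  apply insE_ext i <;> simp [insE_same, insE_succ]

lemma insE_sub {m : ℕ} (i : Fin (m + 1)) (τ τ' : ℝ) (z z' : Fin m → ℝ) :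
    insE i τ z - insE i τ' z' = insE i (τ - τ') (z - z') := by
  apply insE_ext i <;> simp [insE_same, insE_succ]

lemma insE_norm_sq {m : ℕ} (i : Fin (m + 1)) (τ : ℝ) (z : Fin m → ℝ) :
    ‖insE i τ z‖ ^ 2 = τ ^ 2 + ∑ j, z j ^ 2 := by
  rw [EuclideanSpace.norm_sq_eq, Fin.sum_univ_succAbove _ i]
  simp [insE_same, insE_succ]

lemma insE_abs_le {m : ℕ} (i : Fin (m + 1)) (τ : ℝ) (z : Fin m → ℝ) : |τ| ≤ ‖insE i τ z‖ := by
  have := PiLp.norm_apply_le (insE i τ z) i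
  rwa [insE_same] at this

lemma insE_norm_ge {m : ℕ} (i : Fin (m + 1)) (τ : ℝ) (z : Fin m → ℝ) : ‖z‖ ≤ ‖insE i τ z‖ := by
  rw [pi_norm_le_iff_of_nonneg (norm_nonneg _)]
  intro j
  have := PiLp.norm_apply_le (insE i τ z) (i.succAbove j)
  rwa [insE_succ] at this

lemma insE_norm_le {m : ℕ} (i : Fin (m + 1)) (τ M : ℝ) (z : Fin m → ℝ) (hτ : |τ| ≤ M)
    (hz : ‖z‖ ≤ M) : ‖insE i τ z‖ ≤ ((m : ℝ) + 1) * M := by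
  have hM : 0 ≤ M := (abs_nonneg _).trans hτ
  have h1 : ‖insE i τ z‖ ^ 2 ≤ ((m : ℝ) + 1) * M ^ 2 := by
    rw [insE_norm_sq]
    have h2 : ∑ j, z j ^ 2 ≤ ∑ j : Fin m, M ^ 2 := by
      apply Finset.sum_le_sum
      intro j _
      have := (norm_le_pi_norm z j).trans hz
      exact sq_le_sq' (by rw [Real.norm_eq_abs] at this; linarith [(abs_le.1 this).1])
        (by rw [Real.norm_eq_abs] at this; linarith [(abs_le.1 this).2])
    have h3 : τ ^ 2 ≤ M ^ 2 := sq_le_sq' (by linarith [(abs_le.1 hτ).1]) (by linarith [(abs_le.1 hτ).2])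
    simp at h2
    linarith
  have h4 : ((m : ℝ) + 1) * M ^ 2 ≤ (((m : ℝ) + 1) * M) ^ 2 := by
    have : (0 : ℝ) ≤ m := Nat.cast_nonneg m
    nlinarith [mul_nonneg this (sq_nonneg M), mul_nonneg (mul_nonneg this this) (sq_nonneg M)]
  exact abs_le_of_sq_le_sq' (h1.trans h4) (by positivity) |>.2

lemma measurable_insE {m : ℕ} (i : Fin (m + 1)) :
    Measurable (fun p : ℝ × (Fin m → ℝ) => insE i p.1 p.2) := by
  have h1 := (MeasurableEquiv.piFinSuccAbove (fun _ : Fin (m + 1) => ℝ) i).symm.measurable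
  exact (PiLp.volume_preserving_toLp (Fin (m + 1))).measurable.comp h1

lemma lintegral_insE {m : ℕ} (i : Fin (m + 1)) (F : Euc (m + 1) → ℝ≥0∞) (hF : Measurable F) :
    ∫⁻ x, F x = ∫⁻ τ, ∫⁻ z, F (insE i τ z) := by
  rw [← (PiLp.volume_preserving_toLp (Fin (m + 1))).lintegral_comp hF]
  have h2 := (volume_preserving_piFinSuccAbove (fun _ : Fin (m + 1) => ℝ) i).symm
  change ∫⁻ a, (F ∘ WithLp.toLp 2) a = _
  rw [← h2.lintegral_comp (hF.comp (PiLp.volume_preserving_toLp (Fin (m + 1))).measurable)]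
  have := (hF.comp (measurable_insE i))
  exact lintegral_prod _ this.aemeasurable

lemma lintegral_smul_comp {V : Type*} [NormedAddCommGroup V] [NormedSpace ℝ V]
    [FiniteDimensional ℝ V] [MeasurableSpace V] [BorelSpace V] (μ : Measure V)
    [μ.IsAddHaarMeasure] {r : ℝ} (hr : r ≠ 0) (f : V → ℝ≥0∞) (hf : Measurable f) :
    ∫⁻ x, f (r • x) ∂μ = ENNReal.ofReal |(r ^ Module.finrank ℝ V)⁻¹| * ∫⁻ x, f x ∂μ := by
  rw [← smul_eq_mul, ← lintegral_smul_measure, ← Measure.map_addHaar_smul μ hr,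
    lintegral_map hf (measurable_const_smul r)]

def proE {m : ℕ} (i : Fin (m + 1)) (y : Fin m → ℝ) : Euc (m + 1) :=
  ‖insE i 1 y‖⁻¹ • insE i 1 y

lemma one_le_insE {m : ℕ} (i : Fin (m + 1)) (y : Fin m → ℝ) : 1 ≤ ‖insE i 1 y‖ := by
  have := insE_abs_le i 1 y
  simpa using this

lemma proE_norm {m : ℕ} (i : Fin (m + 1)) (y : Fin m → ℝ) : ‖proE i y‖ = 1 := by
  have := one_le_insE i y
  rw [proE, norm_smul, norm_inv, norm_norm]
  field_simp

lemma normalize_lip {V : Type*} [NormedAddCommGroup V] [NormedSpace ℝ V] (x y : V) (hx : 1 ≤ ‖x‖)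
    (hy : 1 ≤ ‖y‖) : ‖‖x‖⁻¹ • x - ‖y‖⁻¹ • y‖ ≤ 2 * ‖x - y‖ := by
  have e : ‖x‖⁻¹ • x - ‖y‖⁻¹ • y = ‖x‖⁻¹ • (x - y) + (‖x‖⁻¹ - ‖y‖⁻¹) • y := by
    rw [smul_sub, sub_smul]; abel
  rw [e]
  refine (norm_add_le _ _).trans ?_
  rw [norm_smul, norm_smul, norm_inv, norm_norm]
  have hx0 : 0 < ‖x‖ := by linarith
  have hy0 : 0 < ‖y‖ := by linarith
  have h1 : ‖x‖⁻¹ ≤ 1 := inv_le_one_of_one_le₀ hx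
  have h2 : ‖‖x‖⁻¹ - ‖y‖⁻¹‖ * ‖y‖ = ‖x‖⁻¹ * |‖y‖ - ‖x‖| := by
    have : ‖x‖⁻¹ - ‖y‖⁻¹ = (‖x‖⁻¹ * (‖y‖ - ‖x‖)) * ‖y‖⁻¹ := by field_simp
    rw [this, norm_mul, norm_mul, norm_inv, norm_inv, norm_norm, norm_norm, Real.norm_eq_abs]
    field_simp
  rw [h2]
  have h3 : |‖y‖ - ‖x‖| ≤ ‖x - y‖ := by rw [norm_sub_rev]; exact abs_norm_sub_norm_le y x
  nlinarith [norm_nonneg (x - y), inv_pos.2 hx0, abs_nonneg (‖y‖ - ‖x‖)]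

lemma proE_lip {m : ℕ} (i : Fin (m + 1)) :
    LipschitzWith (2 * ((m : NNReal) + 1)) (proE i : (Fin m → ℝ) → Euc (m + 1)) := by
  apply LipschitzWith.of_dist_le_mul
  intro y y'
  rw [dist_eq_norm, dist_eq_norm]
  refine (normalize_lip _ _ (one_le_insE i y) (one_le_insE i y')).trans ?_
  rw [insE_sub]
  have := insE_norm_le i (1 - 1) ‖y - y'‖ (y - y') (by simp) le_rfl
  push_cast
  linarith

lemma sphere_cover {m : ℕ} (θ : Euc (m + 1)) (hθ : ‖θ‖ = 1) :
    ∃ i : Fin (m + 1), ∃ y ∈ Metric.closedBall (0 : Fin m → ℝ) 1, θ = proE i y ∨ θ = -proE i y := by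
  obtain ⟨i, -, hi⟩ := Finset.exists_max_image Finset.univ (fun i => |θ i|) ⟨0, Finset.mem_univ _⟩
  have hi0 : θ i ≠ 0 := by
    intro h
    have : θ = 0 := by
      ext j
      have := hi j (Finset.mem_univ _)
      simp only [h, abs_zero] at this
      simpa using this
    simp [this] at hθ
  have key : insE i 1 (fun j => θ (i.succAbove j) / θ i) = (θ i)⁻¹ • θ := by
    apply insE_ext i
    · simp [insE_same, hi0]
    · intro j; simp [insE_succ, div_eq_inv_mul]
  refine ⟨i, fun j => θ (i.succAbove j) / θ i, ?_, ?_⟩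
  · rw [mem_closedBall_zero_iff, pi_norm_le_iff_of_nonneg zero_le_one]
    intro j
    rw [Real.norm_eq_abs, abs_div, div_le_one (abs_pos.2 hi0)]
    exact hi _ (Finset.mem_univ _)
  · rw [proE, key, norm_smul, hθ, mul_one, norm_inv, inv_inv, smul_smul, Real.norm_eq_abs]
    rcases abs_cases (θ i) with ⟨h, _⟩ | ⟨h, _⟩
    · left; rw [h, mul_inv_cancel₀ hi0, one_smul]
    · right; rw [h, neg_mul, mul_inv_cancel₀ hi0]; simp

lemma measurable_proE {m : ℕ} (i : Fin (m + 1)) : Measurable (proE i : (Fin m → ℝ) → Euc (m + 1)) :=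
  (proE_lip i).continuous.measurable

lemma sphM_piece {m : ℕ} (P : (Fin m → ℝ) → Euc (m + 1)) (K : NNReal) (hP : LipschitzWith K P)
    (A : Set (Euc (m + 1))) (hA : MeasurableSet A) :
    Measure.hausdorffMeasure (((m + 1 : ℕ) : ℝ) - 1) (A ∩ P '' (Metric.closedBall 0 1)) ≤
      (K : ℝ≥0∞) ^ (m : ℝ) * (Measure.map P (volume.restrict (Metric.closedBall 0 1))) A := by
  have e : (((m + 1 : ℕ) : ℝ) - 1) = m := by push_cast; ring
  rw [e, Measure.map_apply hP.continuous.measurable hA,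
    Measure.restrict_apply (hP.continuous.measurable hA)]
  have h1 : A ∩ P '' (Metric.closedBall 0 1) = P '' (P ⁻¹' A ∩ Metric.closedBall 0 1) := by
    rw [Set.image_preimage_inter]
  rw [h1]
  refine (hP.hausdorffMeasure_image_le (Nat.cast_nonneg m) _).trans ?_
  have h2 := hausdorffMeasure_pi_real (ι := Fin m)
  rw [Fintype.card_fin] at h2
  rw [h2]

lemma sphM_le {m : ℕ} : sphM (m + 1) ≤
    ((2 * ((m : NNReal) + 1) : NNReal) : ℝ≥0∞) ^ (m : ℝ) • ∑ i : Fin (m + 1),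
      (Measure.map (proE i) (volume.restrict (Metric.closedBall 0 1)) +
       Measure.map (fun y => - proE i y) (volume.restrict (Metric.closedBall 0 1))) := by
  rw [Measure.le_iff]
  intro A hA
  rw [sphM, Measure.restrict_apply hA, Measure.smul_apply, Measure.finsetSum_apply]
  have hsub : A ∩ Metric.sphere 0 1 ⊆ ⋃ i : Fin (m + 1), ((A ∩ proE i '' (Metric.closedBall 0 1)) ∪
      (A ∩ (fun y => - proE i y) '' (Metric.closedBall 0 1))) := by
    rintro θ ⟨hθA, hθ⟩
    obtain ⟨i, y, hy, h | h⟩ := sphere_cover θ (by simpa using hθ)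
    · exact mem_iUnion.2 ⟨i, Or.inl ⟨hθA, y, hy, h.symm⟩⟩
    · exact mem_iUnion.2 ⟨i, Or.inr ⟨hθA, y, hy, h.symm⟩⟩
  refine (measure_mono hsub).trans ((measure_iUnion_fintype_le _ _).trans ?_)
  rw [smul_eq_mul, Finset.mul_sum]
  apply Finset.sum_le_sum
  intro i _
  refine (measure_union_le _ _).trans ?_
  rw [Measure.add_apply, mul_add]
  exact add_le_add (sphM_piece _ _ (proE_lip i) A hA) (sphM_piece _ _ (proE_lip i).neg A hA)

instance sphM_finite {m : ℕ} : IsFiniteMeasure (sphM (m + 1)) := by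
  refine ⟨(sphM_le univ).trans_lt ?_⟩
  rw [Measure.smul_apply, Measure.finsetSum_apply, smul_eq_mul]
  refine ENNReal.mul_lt_top (ENNReal.rpow_lt_top_of_nonneg (by positivity) ENNReal.coe_ne_top) ?_
  refine ENNReal.sum_lt_top.2 fun i _ => ?_
  have hb : volume (Metric.closedBall (0 : Fin m → ℝ) 1) < ∞ := measure_closedBall_lt_top
  rw [Measure.add_apply, Measure.map_apply (measurable_proE i) MeasurableSet.univ,
    Measure.map_apply (f := fun y => -proE i y) (measurable_proE i).neg MeasurableSet.univ]
  simpa using hb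

def annu (n : ℕ) (ρ : ℝ) : Set (Euc n) := {y | ρ ≤ ‖y‖ ∧ ‖y‖ ≤ ρ + 1}

lemma measurableSet_annu (n : ℕ) (ρ : ℝ) : MeasurableSet (annu n ρ) :=
  (measurableSet_le measurable_const measurable_norm).inter
    (measurableSet_le measurable_norm measurable_const)

lemma polar_s2 {m : ℕ} (i : Fin (m + 1)) (ρ : ℝ) (hρ : 0 < ρ) (F' : Euc (m + 1) → ℝ≥0∞)
    (hF'm : Measurable F') (N : ℝ) (hN : N = (m : ℝ) + 1) (y : Fin m → ℝ)
    (hy : y ∈ Metric.closedBall (0 : Fin m → ℝ) 1) :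
    ∫⁻ t in Ici ρ, F' (t • proE i y) ≤
      ENNReal.ofReal N * ∫⁻ τ in Ici (ρ / N), F' (insE i τ (τ • y)) := by
  have hN0 : 0 < N := by rw [hN]; positivity
  obtain ⟨l, hl⟩ : ∃ l, l = ‖insE i 1 y‖ := ⟨_, rfl⟩
  have hl1 : 1 ≤ l := hl ▸ one_le_insE i y
  have hlN : l ≤ N := by
    have := insE_norm_le i 1 1 y (by simp) (by simpa using hy)
    rw [← hl] at this; simpa [hN] using this
  obtain ⟨f, hf⟩ : ∃ f : ℝ → ℝ≥0∞, f = (Ici (ρ / N)).indicator (fun τ => F' (insE i τ (τ • y))) :=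
    ⟨_, rfl⟩
  have hg : Measurable (fun τ : ℝ => F' (insE i τ (τ • y))) := by
    have h1 : Measurable (fun τ : ℝ => (τ, τ • y)) := by fun_prop
    exact hF'm.comp ((measurable_insE i).comp h1)
  have hfm : Measurable f := by
    rw [hf]; exact hg.indicator measurableSet_Ici
  have hl0 : l⁻¹ ≠ 0 := by positivity
  have := lintegral_smul_comp (volume : Measure ℝ) hl0 f hfm
  rw [← lintegral_indicator measurableSet_Ici, ← lintegral_indicator measurableSet_Ici, ← hf]
  calc ∫⁻ t, (Ici ρ).indicator (fun t => F' (t • proE i y)) t ≤ ∫⁻ t, f (l⁻¹ • t) := by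
        refine lintegral_mono fun t => ?_
        refine indicator_apply_le (g := fun t => f (l⁻¹ • t)) fun ht => ?_
        · show _ ≤ f (l⁻¹ * t)
          have hmem : l⁻¹ * t ∈ Ici (ρ / N) := by
            rw [mem_Ici, div_le_iff₀ hN0]
            rw [mem_Ici] at ht
            have : l⁻¹ * t * N = t * (N / l) := by field_simp
            rw [this]
            have h1 : 1 ≤ N / l := by rw [le_div_iff₀ (by linarith)]; linarith
            nlinarith
          rw [hf, indicator_of_mem hmem, proE, ← hl, smul_smul, insE_smul, mul_one, mul_comm t]
    _ = ENNReal.ofReal l * ∫⁻ t, f t := by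
        rw [this]; congr 2; simp [abs_of_pos (by linarith : 0 < l)]
    _ ≤ _ := by gcongr

lemma polar_piece {m : ℕ} (i : Fin (m + 1)) (ρ : ℝ) (hρ : 0 < ρ) (F : Euc (m + 1) → ℝ≥0∞)
    (hF : Measurable F) :
    ∫⁻ t in Icc ρ (ρ + 1), ∫⁻ y in Metric.closedBall 0 1, F (t • proE i y) ≤
      ENNReal.ofReal (((m : ℝ) + 1) ^ (m + 1) * (ρ ^ m)⁻¹) * ∫⁻ x in annu (m + 1) ρ, F x := by
  set F' := (annu (m + 1) ρ).indicator F with hF'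
  have hF'm : Measurable F' := hF.indicator (measurableSet_annu _ _)
  set N : ℝ := (m : ℝ) + 1 with hN
  have hN0 : 0 < N := by positivity
  rw [← lintegral_indicator (measurableSet_annu _ _), ← hF', lintegral_insE i F' hF'm]
  -- step 1
  have s1 : ∫⁻ t in Icc ρ (ρ + 1), ∫⁻ y in Metric.closedBall 0 1, F (t • proE i y) ≤
      ∫⁻ t in Ici ρ, ∫⁻ y in Metric.closedBall 0 1, F' (t • proE i y) := by
    refine le_trans (le_of_eq ?_) (lintegral_mono_set (Icc_subset_Ici_self : Icc ρ (ρ + 1) ⊆ Ici ρ))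
    refine setLIntegral_congr_fun measurableSet_Icc fun t ht => ?_
    refine lintegral_congr fun y => ?_
    rw [hF', indicator_of_mem]
    have : ‖t • proE i y‖ = t := by
      rw [norm_smul, proE_norm, mul_one, Real.norm_of_nonneg (hρ.le.trans ht.1)]
    simp only [annu, mem_ofPred_eq, this]
    exact ht
  have meas1 : Measurable (fun p : ℝ × (Fin m → ℝ) => F' (p.1 • proE i p.2)) :=
    hF'm.comp (measurable_fst.smul ((measurable_proE i).comp measurable_snd))
  have meas2 : Measurable (fun p : ℝ × (Fin m → ℝ) => F' (insE i p.1 (p.1 • p.2))) :=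
    hF'm.comp ((measurable_insE i).comp (measurable_fst.prodMk (measurable_fst.smul measurable_snd)))
  have s2 := polar_s2 i ρ hρ F' hF'm N hN
  have s3 : ∀ τ ∈ Ici (ρ / N), ∫⁻ y in Metric.closedBall (0 : Fin m → ℝ) 1,
      F' (insE i τ (τ • y)) ≤ ENNReal.ofReal (N ^ m * (ρ ^ m)⁻¹) * ∫⁻ z, F' (insE i τ z) := by
    intro τ hτ
    have hρN : 0 < ρ / N := by positivity
    have hτ0 : 0 < τ := lt_of_lt_of_le hρN hτ
    have hm : Measurable (fun z => F' (insE i τ z)) :=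
      hF'm.comp ((measurable_insE i).comp (measurable_const.prodMk measurable_id))
    refine (setLIntegral_le_lintegral _ _).trans ?_
    rw [lintegral_smul_comp (volume : Measure (Fin m → ℝ)) hτ0.ne' (fun z => F' (insE i τ z)) hm]
    gcongr
    rw [Module.finrank_fin_fun, abs_of_pos (by positivity)]
    have : N ^ m * (ρ ^ m)⁻¹ = ((ρ / N) ^ m)⁻¹ := by rw [div_pow]; field_simp
    rw [this]
    gcongr
    exact hτ
  calc _ ≤ _ := s1
    _ = ∫⁻ y in Metric.closedBall 0 1, ∫⁻ t in Ici ρ, F' (t • proE i y) :=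
        lintegral_lintegral_swap meas1.aemeasurable
    _ ≤ ∫⁻ y in Metric.closedBall 0 1, ENNReal.ofReal N * ∫⁻ τ in Ici (ρ / N), F' (insE i τ (τ • y)) :=
        setLIntegral_mono' Metric.isClosed_closedBall.measurableSet s2
    _ = ENNReal.ofReal N * ∫⁻ y in Metric.closedBall 0 1, ∫⁻ τ in Ici (ρ / N), F' (insE i τ (τ • y)) := by
        rw [lintegral_const_mul']; exact ENNReal.ofReal_ne_top
    _ = ENNReal.ofReal N * ∫⁻ τ in Ici (ρ / N), ∫⁻ y in Metric.closedBall 0 1, F' (insE i τ (τ • y)) := by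
        congr 1
        exact (lintegral_lintegral_swap (f := fun τ y => F' (insE i τ (τ • y))) meas2.aemeasurable).symm
    _ ≤ ENNReal.ofReal N * ∫⁻ τ in Ici (ρ / N), ENNReal.ofReal (N ^ m * (ρ ^ m)⁻¹) * ∫⁻ z, F' (insE i τ z) := by
        gcongr ENNReal.ofReal N * ?_
        exact setLIntegral_mono' measurableSet_Ici s3
    _ ≤ ENNReal.ofReal N * (ENNReal.ofReal (N ^ m * (ρ ^ m)⁻¹) * ∫⁻ τ, ∫⁻ z, F' (insE i τ z)) := by
        gcongr ENNReal.ofReal N * ?_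
        rw [lintegral_const_mul' _ _ ENNReal.ofReal_ne_top]
        gcongr
        exact Measure.restrict_le_self
    _ = _ := by
        rw [← mul_assoc, ← ENNReal.ofReal_mul hN0.le]; congr 2; ring

lemma polar_le (m : ℕ) : ∃ C : NNReal, ∀ ρ : ℝ, 0 < ρ → ∀ F : Euc (m + 1) → ℝ≥0∞, Measurable F →
    ∫⁻ t in Icc ρ (ρ + 1), ∫⁻ θ, F (t • θ) ∂(sphM (m + 1)) ≤
      C * ENNReal.ofReal (ρ ^ m)⁻¹ * ∫⁻ x in annu (m + 1) ρ, F x := by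
  set K : NNReal := (2 * ((m : NNReal) + 1)) ^ (m : ℝ) with hK
  have hKe : ((2 * ((m : NNReal) + 1) : NNReal) : ℝ≥0∞) ^ (m : ℝ) = K := by
    rw [hK, ENNReal.coe_rpow_of_nonneg _ (Nat.cast_nonneg m)]
  refine ⟨K * ((m + 1) * (2 * (((m : NNReal) + 1) ^ (m + 1)))), fun ρ hρ F hF => ?_⟩
  have hle := sphM_le (m := m)
  rw [hKe] at hle
  set c := ENNReal.ofReal (((m : ℝ) + 1) ^ (m + 1) * (ρ ^ m)⁻¹) with hc
  set I := ∫⁻ x in annu (m + 1) ρ, F x with hI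
  have hneg : ∫⁻ x in annu (m + 1) ρ, F (-x) = I := by
    rw [hI, ← lintegral_indicator (measurableSet_annu _ _), ← lintegral_indicator (measurableSet_annu _ _),
      ← lintegral_neg_eq_self]
    refine lintegral_congr fun x => ?_
    simp only [indicator, annu, mem_ofPred_eq, norm_neg, neg_neg]
    congr
  have m1 : ∀ i, Measurable (fun p : ℝ × (Fin m → ℝ) => F (p.1 • proE i p.2)) := fun i =>
    hF.comp (measurable_fst.smul ((measurable_proE i).comp measurable_snd))
  have m2 : ∀ i, Measurable (fun p : ℝ × (Fin m → ℝ) => F (p.1 • -proE i p.2)) := fun i =>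
    hF.comp (measurable_fst.smul ((measurable_proE i).comp measurable_snd).neg)
  have step : ∀ t : ℝ, ∫⁻ θ, F (t • θ) ∂(sphM (m + 1)) ≤ K * ∑ i : Fin (m + 1),
      ((∫⁻ y in Metric.closedBall 0 1, F (t • proE i y)) +
        (∫⁻ y in Metric.closedBall 0 1, F (t • -proE i y))) := by
    intro t
    have hFt : Measurable fun θ : Euc (m + 1) => F (t • θ) := hF.comp (measurable_const_smul t)
    refine (lintegral_mono' hle le_rfl).trans (le_of_eq ?_)
    rw [lintegral_smul_measure, smul_eq_mul, lintegral_finsetSum_measure]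
    congr 1
    refine Finset.sum_congr rfl fun i _ => ?_
    rw [lintegral_add_measure, lintegral_map hFt (measurable_proE i),
      lintegral_map (g := fun y => -proE i y) hFt (measurable_proE i).neg]
  refine (lintegral_mono step).trans ?_
  rw [lintegral_const_mul' _ _ ENNReal.coe_ne_top, lintegral_finsetSum]
  swap
  · intro i _
    exact ((m1 i).lintegral_prod_right').add ((m2 i).lintegral_prod_right')
  have each : ∀ i : Fin (m + 1), ∫⁻ t in Icc ρ (ρ + 1),
      ((∫⁻ y in Metric.closedBall 0 1, F (t • proE i y)) +
        (∫⁻ y in Metric.closedBall 0 1, F (t • -proE i y))) ≤ 2 * c * I := by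
    intro i
    rw [lintegral_add_left ((m1 i).lintegral_prod_right')]
    have h1 := polar_piece i ρ hρ F hF
    have h2 := polar_piece i ρ hρ (fun x => F (-x)) (hF.comp measurable_neg)
    rw [hneg] at h2
    simp only [← smul_neg] at h2
    rw [mul_assoc, two_mul]
    exact add_le_add h1 h2
  refine (mul_le_mul_right (Finset.sum_le_sum fun i _ => each i) _).trans (le_of_eq ?_)
  rw [Finset.sum_const, Finset.card_univ, Fintype.card_fin, nsmul_eq_mul, hc,
    ENNReal.ofReal_mul (by positivity)]
  have : ENNReal.ofReal (((m : ℝ) + 1) ^ (m + 1)) = (((m : NNReal) + 1) ^ (m + 1) : NNReal) := by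
    rw [ENNReal.ofReal, Real.toNNReal_pow (by positivity)]; congr 2
    rw [Real.toNNReal_add (by positivity) (by positivity)]; simp
  rw [this]
  push_cast
  ring

end

section

def japP {m : ℕ} (p : ℝ) (z : Fin m → ℝ) : ℝ≥0∞ := ENNReal.ofReal ((1 + ‖z‖ ^ 2) ^ (-p / 2))

lemma measurable_japP {m : ℕ} (p : ℝ) : Measurable (japP p : (Fin m → ℝ) → ℝ≥0∞) := by
  unfold japP
  fun_prop

lemma japP_le {m : ℕ} {p : ℝ} (hp : 0 ≤ p) {R : ℝ} (hR : 0 < R) (z : Fin m → ℝ) (hz : R ≤ ‖z‖) :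
    japP p z ≤ ENNReal.ofReal (R ^ (-p)) := by
  refine ENNReal.ofReal_le_ofReal ?_
  have h1 : (R ^ 2) ^ (-p / 2) = R ^ (-p) := by
    rw [← Real.rpow_natCast, ← Real.rpow_mul hR.le]; congr 1; push_cast; ring
  rw [← h1]
  apply Real.rpow_le_rpow_of_nonpos (by positivity) _ (by linarith)
  nlinarith

lemma unit_ball_fin {m : ℕ} (hm : 1 ≤ m) {p : ℝ} (hpm : p < m) :
    ∫⁻ w in Metric.ball (0 : Fin m → ℝ) 2, ENNReal.ofReal (‖w‖ ^ (-p)) < ∞ := by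
  have h := integrableOn_ball_of_norm_le_rpow (E := Fin m → ℝ) (F := ℝ) (μ := volume)
    (f := fun w => ‖w‖ ^ (-p)) (C := 1) (α := p) (r := 2) (by simpa using hm)
    (by simpa using hpm) (by
      filter_upwards with w
      rw [one_mul, Real.norm_of_nonneg (by positivity)]) (by
      have : Measurable fun w : Fin m → ℝ => ‖w‖ ^ (-p) := by fun_prop
      exact this.aestronglyMeasurable)
  have := h.2
  rw [hasFiniteIntegral_iff_ofReal] at this
  · exact this
  · filter_upwards with w
    positivity

lemma ball_bound {m : ℕ} (hm : 1 ≤ m) {p : ℝ} (hp : 0 ≤ p) (hpm : p < m) :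
    ∃ C : NNReal, ∀ R : ℝ, 1 ≤ R → ∀ x : Fin m → ℝ,
      ∫⁻ z in Metric.closedBall 0 R, japP p (x - z) ≤ C * ENNReal.ofReal (R ^ ((m : ℝ) - p)) := by
  have hfin := unit_ball_fin hm hpm
  obtain ⟨A, hA⟩ : ∃ A : NNReal, ∫⁻ w in Metric.ball (0 : Fin m → ℝ) 2, ENNReal.ofReal (‖w‖ ^ (-p)) = A :=
    ⟨_, (ENNReal.coe_toNNReal hfin.ne).symm⟩
  refine ⟨A + 2 ^ m, fun R hR x => ?_⟩
  have hR0 : 0 < R := by linarith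
  have hpow : R ^ m * R ^ (-p) = R ^ ((m : ℝ) - p) := by
    rw [← Real.rpow_natCast, ← Real.rpow_add hR0]; rfl
  set g : (Fin m → ℝ) → ℝ≥0∞ := (Metric.closedBall 0 R).indicator (japP p) with hg
  have hgm : Measurable g := (measurable_japP p).indicator Metric.isClosed_closedBall.measurableSet
  have hle : ∀ z, japP p (x - z) ≤ g (x - z) + ENNReal.ofReal (R ^ (-p)) := by
    intro z
    by_cases h : x - z ∈ Metric.closedBall (0 : Fin m → ℝ) R
    · rw [hg, indicator_of_mem h]; exact le_self_add
    · refine le_add_left (japP_le hp hR0 _ ?_)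
      rw [mem_closedBall_zero_iff, not_le] at h; exact h.le
  have hG : ∫⁻ z, g z ≤ A * ENNReal.ofReal (R ^ ((m : ℝ) - p)) := by
    have h1 := lintegral_smul_comp (volume : Measure (Fin m → ℝ)) hR0.ne' g hgm
    have h2 : ∫⁻ z, g z = ENNReal.ofReal (R ^ m) * ∫⁻ z, g (R • z) := by
      rw [h1, ← mul_assoc, Module.finrank_fin_fun, abs_of_pos (by positivity),
        ← ENNReal.ofReal_mul (by positivity), mul_inv_cancel₀ (by positivity)]
      simp
    have h3 : ∫⁻ z, g (R • z) ≤ ENNReal.ofReal (R ^ (-p)) * A := by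
      rw [← hA, ← lintegral_const_mul' _ _ ENNReal.ofReal_ne_top,
        ← lintegral_indicator Metric.isOpen_ball.measurableSet]
      have hne : ∀ᵐ z : Fin m → ℝ, z ≠ 0 := by
        have : Nonempty (Fin m) := ⟨⟨0, hm⟩⟩
        exact Measure.ae_ne volume 0
      refine lintegral_mono_ae ?_
      filter_upwards [hne] with z hz
      have hz0 : 0 < ‖z‖ := norm_pos_iff.2 hz
      rw [hg]
      by_cases h : R • z ∈ Metric.closedBall (0 : Fin m → ℝ) R
      · rw [indicator_of_mem h]
        rw [mem_closedBall_zero_iff, norm_smul, Real.norm_of_nonneg hR0.le] at h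
        have h1 : ‖z‖ ≤ 1 := by nlinarith
        rw [indicator_of_mem (by rw [mem_ball_zero_iff]; linarith), ← ENNReal.ofReal_mul (by positivity),
          ← Real.mul_rpow hR0.le hz0.le]
        refine japP_le hp (by positivity) _ ?_
        rw [norm_smul, Real.norm_of_nonneg hR0.le]
      · rw [indicator_of_notMem h]; exact zero_le
    rw [h2]
    calc _ ≤ ENNReal.ofReal (R ^ m) * (ENNReal.ofReal (R ^ (-p)) * A) := by gcongr
      _ = _ := by rw [← mul_assoc, ← ENNReal.ofReal_mul (by positivity), hpow, mul_comm]
  calc ∫⁻ z in Metric.closedBall 0 R, japP p (x - z)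
      ≤ ∫⁻ z in Metric.closedBall 0 R, (g (x - z) + ENNReal.ofReal (R ^ (-p))) :=
        lintegral_mono hle
    _ = (∫⁻ z in Metric.closedBall 0 R, g (x - z)) +
        ENNReal.ofReal (R ^ (-p)) * volume (Metric.closedBall (0 : Fin m → ℝ) R) := by
        rw [lintegral_add_right _ measurable_const, setLIntegral_const]
    _ ≤ (∫⁻ z, g (x - z)) + ENNReal.ofReal (R ^ (-p)) * ENNReal.ofReal ((2 * R) ^ m) := by
        gcongr
        · exact Measure.restrict_le_self
        · rw [Real.volume_pi_closedBall _ hR0.le, Fintype.card_fin]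
    _ ≤ A * ENNReal.ofReal (R ^ ((m : ℝ) - p)) + 2 ^ m * ENNReal.ofReal (R ^ ((m : ℝ) - p)) := by
        refine add_le_add ?_ ?_
        · rw [lintegral_sub_left_eq_self]; exact hG
        · rw [mul_pow, mul_comm, ENNReal.ofReal_mul (by positivity), mul_assoc,
            ← ENNReal.ofReal_mul (by positivity), hpow]
          simp
    _ = _ := by push_cast; ring

def annuI {m : ℕ} (ρ : ℝ) (i : Fin (m + 1)) : Set (Euc (m + 1)) :=
  {y | y ∈ annu (m + 1) ρ ∧ ∀ j, |y j| ≤ |y i|}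

lemma measurableSet_annuI {m : ℕ} (ρ : ℝ) (i : Fin (m + 1)) : MeasurableSet (annuI ρ i) := by
  have h : ∀ j : Fin (m + 1), Measurable fun y : Euc (m + 1) => |y j| := fun j => by
    have : Continuous fun y : Euc (m + 1) => |y j| := by fun_prop
    exact this.measurable
  refine (measurableSet_annu _ ρ).inter ?_
  have : {y : Euc (m + 1) | ∀ j, |y j| ≤ |y i|} = ⋂ j, {y | |y j| ≤ |y i|} := by
    ext y; simp
  show MeasurableSet {y : Euc (m + 1) | ∀ j, |y j| ≤ |y i|}
  rw [this]
  exact MeasurableSet.iInter fun j => measurableSet_le (h j) (h i)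

lemma annu_subset {m : ℕ} (ρ : ℝ) : annu (m + 1) ρ ⊆ ⋃ i, annuI ρ i := by
  intro y hy
  obtain ⟨i, -, hi⟩ := Finset.exists_max_image Finset.univ (fun i => |y i|) ⟨0, Finset.mem_univ _⟩
  exact mem_iUnion.2 ⟨i, hy, fun j => hi j (Finset.mem_univ _)⟩

lemma fib_diff {m : ℕ} {ρ : ℝ} (i : Fin (m + 1)) (z : Fin m → ℝ) {s t : ℝ}
    (hs : insE i s z ∈ annuI ρ i) (ht : insE i t z ∈ annuI ρ i) : |t| - |s| ≤ (m : ℝ) + 1 := by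
  have nb : ∀ s, insE i s z ∈ annuI ρ i → ‖insE i s z‖ ≤ ((m : ℝ) + 1) * |s| := by
    intro s hs
    refine insE_norm_le i s |s| z le_rfl ?_
    rw [pi_norm_le_iff_of_nonneg (abs_nonneg _)]
    intro j
    have := hs.2 (i.succAbove j)
    rwa [insE_succ, insE_same] at this
  have h1 := nb s hs
  have h2 := nb t ht
  have e1 := insE_norm_sq i s z
  have e2 := insE_norm_sq i t z
  have b1 := hs.1.1
  have b2 := ht.1.2
  have n1 := norm_nonneg (insE i s z)
  have n2 := norm_nonneg (insE i t z)
  have a1 := sq_abs s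
  have a2 := sq_abs t
  by_contra! hcon
  have hp : 0 < |t| := by
    have : (0 : ℝ) ≤ m := Nat.cast_nonneg m
    have := abs_nonneg s
    linarith
  have hs0 := abs_nonneg s
  have k1 : (|t| - |s|) * (|t| + |s|) = (‖insE i t z‖ - ‖insE i s z‖) * (‖insE i t z‖ + ‖insE i s z‖) := by
    ring_nf; nlinarith
  have k2 : (‖insE i t z‖ - ‖insE i s z‖) * (‖insE i t z‖ + ‖insE i s z‖) ≤
      1 * (((m : ℝ) + 1) * (|t| + |s|)) := by
    apply mul_le_mul <;> [linarith; linarith; positivity; norm_num]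
  nlinarith

lemma fib_vol {m : ℕ} (ρ : ℝ) (i : Fin (m + 1)) (z : Fin m → ℝ) :
    volume {τ : ℝ | insE i τ z ∈ annuI ρ i} ≤ ENNReal.ofReal (2 * ((m : ℝ) + 1)) := by
  set S := {τ : ℝ | insE i τ z ∈ annuI ρ i} with hS
  have hsub : S ⊆ (S ∩ Ici 0) ∪ (S ∩ Iic 0) := by
    intro t ht
    rcases le_total 0 t with h | h
    · exact Or.inl ⟨ht, h⟩
    · exact Or.inr ⟨ht, h⟩
  have d1 : volume (S ∩ Ici 0) ≤ ENNReal.ofReal ((m : ℝ) + 1) := by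
    refine (Real.volume_le_diam _).trans (Metric.ediam_le fun s hs t ht => ?_)
    rw [edist_dist]
    refine ENNReal.ofReal_le_ofReal ?_
    have h1 := fib_diff i z hs.1 ht.1
    have h2 := fib_diff i z ht.1 hs.1
    rw [abs_of_nonneg (show 0 ≤ s from hs.2), abs_of_nonneg (show 0 ≤ t from ht.2)] at h1 h2
    rw [Real.dist_eq, abs_le]; constructor <;> linarith
  have d2 : volume (S ∩ Iic 0) ≤ ENNReal.ofReal ((m : ℝ) + 1) := by
    refine (Real.volume_le_diam _).trans (Metric.ediam_le fun s hs t ht => ?_)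
    rw [edist_dist]
    refine ENNReal.ofReal_le_ofReal ?_
    have h1 := fib_diff i z hs.1 ht.1
    have h2 := fib_diff i z ht.1 hs.1
    rw [abs_of_nonpos (show s ≤ 0 from hs.2), abs_of_nonpos (show t ≤ 0 from ht.2)] at h1 h2
    rw [Real.dist_eq, abs_le]; constructor <;> linarith
  refine (measure_mono hsub).trans ((measure_union_le _ _).trans ((add_le_add d1 d2).trans ?_))
  rw [← ENNReal.ofReal_add (by positivity) (by positivity), ← two_mul]

lemma jap_pos {n : ℕ} (x : Euc n) : 0 < jap x := Real.sqrt_pos.2 (by positivity)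

lemma jap_ge_one {n : ℕ} (x : Euc n) : 1 ≤ jap x := by
  rw [jap, Real.one_le_sqrt]; nlinarith [sq_nonneg ‖x‖]

lemma continuous_jap {n : ℕ} : Continuous (jap : Euc n → ℝ) := by
  unfold jap; fun_prop

lemma measurable_jap {n : ℕ} : Measurable (jap : Euc n → ℝ) := continuous_jap.measurable

lemma jap_rpow {n : ℕ} (x : Euc n) (p : ℝ) : jap x ^ p = (1 + ‖x‖ ^ 2) ^ (p / 2) := by
  rw [jap, Real.sqrt_eq_rpow, ← Real.rpow_mul (by positivity)]; congr 1; ring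

lemma annu_bound {m : ℕ} (hm : 1 ≤ m) {p : ℝ} (hp : 0 ≤ p) (hpm : p < m) :
    ∃ C : NNReal, ∀ ρ : ℝ, 0 < ρ → ∀ x : Euc (m + 1),
      ∫⁻ y in annu (m + 1) ρ, ENNReal.ofReal (jap (x - y) ^ (-p)) ≤
        C * ENNReal.ofReal ((1 + ρ) ^ ((m : ℝ) - p)) := by
  obtain ⟨C, hC⟩ := ball_bound hm hp hpm
  refine ⟨(m + 1) * ((2 * ((m : NNReal) + 1)) * C), fun ρ hρ x => ?_⟩
  set g : Euc (m + 1) → ℝ≥0∞ := fun y => ENNReal.ofReal (jap (x - y) ^ (-p)) with hg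
  have hgm : Measurable g := by
    have : Measurable fun y : Euc (m + 1) => jap (x - y) := measurable_jap.comp (measurable_const.sub measurable_id)
    exact (this.pow_const _).ennreal_ofReal
  have each : ∀ i : Fin (m + 1), ∫⁻ y in annuI ρ i, g y ≤
      ENNReal.ofReal (2 * ((m : ℝ) + 1)) * (C * ENNReal.ofReal ((1 + ρ) ^ ((m : ℝ) - p))) := by
    intro i
    have hFm : Measurable ((annuI ρ i).indicator g) := hgm.indicator (measurableSet_annuI ρ i)
    have hFm2 : Measurable fun p : ℝ × (Fin m → ℝ) => (annuI ρ i).indicator g (insE i p.1 p.2) :=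
      hFm.comp (measurable_insE i)
    set x' : Fin m → ℝ := fun j => x (i.succAbove j) with hx'
    have hx : x = insE i (x i) x' := by
      apply insE_ext i
      · rw [insE_same]
      · intro j; rw [insE_succ]
    rw [← lintegral_indicator (measurableSet_annuI ρ i), lintegral_insE i _ hFm,
      lintegral_lintegral_swap hFm2.aemeasurable]
    have hz : ∀ z : Fin m → ℝ, ∫⁻ τ, (annuI ρ i).indicator g (insE i τ z) ≤
        (Metric.closedBall 0 (1 + ρ)).indicator
          (fun z => ENNReal.ofReal (2 * ((m : ℝ) + 1)) * japP p (x' - z)) z := by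
      intro z
      have hSm : MeasurableSet {τ : ℝ | insE i τ z ∈ annuI ρ i} := by
        have h1 : Measurable fun τ : ℝ => insE i τ z := by
          have h1 : Measurable (fun τ : ℝ => (τ, z)) := by fun_prop
          exact (measurable_insE i).comp h1
        exact h1 (measurableSet_annuI ρ i)
      have hpt : ∀ τ, (annuI ρ i).indicator g (insE i τ z) ≤
          {τ : ℝ | insE i τ z ∈ annuI ρ i}.indicator (fun _ => (Metric.closedBall 0 (1 + ρ)).indicator
            (fun z => japP p (x' - z)) z) τ := by
        intro τ
        by_cases h : insE i τ z ∈ annuI ρ i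
        · rw [indicator_of_mem h, indicator_of_mem (by exact h)]
          have hzb : z ∈ Metric.closedBall (0 : Fin m → ℝ) (1 + ρ) := by
            rw [mem_closedBall_zero_iff]
            have h2 := h.1.2
            have := insE_norm_ge i τ z
            linarith
          rw [indicator_of_mem hzb]
          refine ENNReal.ofReal_le_ofReal ?_
          rw [jap_rpow]
          apply Real.rpow_le_rpow_of_nonpos (by positivity) _ (by linarith)
          have := insE_norm_ge i (x i - τ) (x' - z)
          rw [← insE_sub, ← hx] at this
          gcongr
        · rw [indicator_of_notMem h]; exact zero_le
      refine (lintegral_mono hpt).trans ?_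
      rw [lintegral_indicator hSm, setLIntegral_const]
      by_cases h : z ∈ Metric.closedBall (0 : Fin m → ℝ) (1 + ρ)
      · rw [indicator_of_mem h, indicator_of_mem h, mul_comm]
        gcongr
        exact fib_vol ρ i z
      · rw [indicator_of_notMem h]; simp
    refine (lintegral_mono hz).trans ?_
    rw [lintegral_indicator Metric.isClosed_closedBall.measurableSet,
      lintegral_const_mul' _ _ ENNReal.ofReal_ne_top]
    gcongr
    exact hC (1 + ρ) (by linarith) x'
  calc ∫⁻ y in annu (m + 1) ρ, g y ≤ ∫⁻ y in ⋃ i, annuI ρ i, g y := lintegral_mono_set (annu_subset ρ)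
    _ ≤ ∑ i : Fin (m + 1), ∫⁻ y in annuI ρ i, g y := by
        refine (lintegral_iUnion_le _ _).trans ?_
        rw [tsum_fintype]
    _ ≤ ∑ i : Fin (m + 1), ENNReal.ofReal (2 * ((m : ℝ) + 1)) * (C * ENNReal.ofReal ((1 + ρ) ^ ((m : ℝ) - p))) :=
        Finset.sum_le_sum fun i _ => each i
    _ = _ := by
        rw [Finset.sum_const, Finset.card_univ, Fintype.card_fin, nsmul_eq_mul]
        have : ENNReal.ofReal (2 * ((m : ℝ) + 1)) = ((2 * ((m : NNReal) + 1) : NNReal) : ℝ≥0∞) := by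
          rw [ENNReal.ofReal]; congr 1
          apply NNReal.eq
          rw [Real.coe_toNNReal _ (by positivity)]; push_cast; ring
        rw [this]
        push_cast
        ring

end

section

open scoped Pointwise in
lemma ewaldM_eq {m : ℕ} (c : Euc (m + 1)) {ρ : ℝ} (hρ : 0 < ρ) :
    (MeasureTheory.Measure.hausdorffMeasure (((m + 1 : ℕ) : ℝ) - 1)).restrict (Metric.sphere c ρ) =
      ENNReal.ofReal (ρ ^ m) • Measure.map (fun θ => c + ρ • θ) (sphM (m + 1)) := by
  have e : (((m + 1 : ℕ) : ℝ) - 1) = m := by push_cast; ring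
  have hT : Measurable fun θ : Euc (m + 1) => c + ρ • θ := by fun_prop
  ext A hA
  rw [Measure.restrict_apply hA, Measure.smul_apply, Measure.map_apply hT hA, sphM,
    Measure.restrict_apply (hT hA), e]
  have h1 : A ∩ Metric.sphere c ρ = (IsometryEquiv.addLeft c) ''
      (ρ • ((fun θ : Euc (m + 1) => c + ρ • θ) ⁻¹' A ∩ Metric.sphere 0 1)) := by
    ext x
    constructor
    · rintro ⟨hxA, hx⟩
      refine ⟨x - c, ⟨ρ⁻¹ • (x - c), ⟨?_, ?_⟩, ?_⟩, ?_⟩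
      · show c + ρ • ρ⁻¹ • (x - c) ∈ A
        rw [smul_inv_smul₀ hρ.ne']; simpa using hxA
      · rw [mem_sphere_zero_iff_norm, norm_smul, mem_sphere_iff_norm.1 hx, norm_inv,
          Real.norm_of_nonneg hρ.le, inv_mul_cancel₀ hρ.ne']
      · exact smul_inv_smul₀ hρ.ne' _
      · simp
    · rintro ⟨y, ⟨θ, ⟨h1, h2⟩, rfl⟩, rfl⟩
      refine ⟨by simpa using h1, ?_⟩
      rw [mem_sphere_iff_norm]
      rw [mem_sphere_zero_iff_norm] at h2
      simp [norm_smul, h2, abs_of_pos hρ]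
  rw [h1, IsometryEquiv.hausdorffMeasure_image,
    Measure.hausdorffMeasure_smul₀ (Nat.cast_nonneg m) hρ.ne']
  rw [ENNReal.smul_def, smul_eq_mul, smul_eq_mul]
  congr 1
  rw [NNReal.rpow_natCast, ENNReal.ofReal]
  congr 1
  apply NNReal.eq
  rw [Real.coe_toNNReal _ (by positivity)]
  simp [abs_of_pos hρ]

lemma pi_smul_measure {ι X : Type*} [Fintype ι] [MeasurableSpace X] (μ : ι → Measure X)
    [∀ i, IsFiniteMeasure (μ i)] (c : ι → NNReal) :
    Measure.pi (fun i => (c i : ℝ≥0∞) • μ i) = (∏ i, (c i : ℝ≥0∞)) • Measure.pi μ := by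
  have : ∀ i, IsFiniteMeasure ((c i : ℝ≥0∞) • μ i) := fun i => by
    rw [← ENNReal.smul_def]; infer_instance
  refine Measure.pi_eq fun s _ => ?_
  rw [Measure.smul_apply, Measure.pi_pi, smul_eq_mul, ← Finset.prod_mul_distrib]
  rfl

def sphPi (n k : ℕ) : Measure (Fin k → Euc n) := Measure.pi fun _ : Fin k => sphM n

instance sphPi_finite {m k : ℕ} : IsFiniteMeasure (sphPi (m + 1) k) := by
  unfold sphPi; infer_instance

lemma sphPi_ae {m k : ℕ} : ∀ᵐ θ ∂(sphPi (m + 1) k), ∀ i, ‖θ i‖ = 1 := by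
  rw [ae_all_iff]
  intro i
  have h : ∀ᵐ x ∂(sphM (m + 1)), ‖x‖ = 1 := by
    rw [sphM]
    filter_upwards [ae_restrict_mem Metric.isClosed_sphere.measurableSet] with x hx
    simpa using hx
  have : SigmaFinite (sphM (m + 1)) := inferInstance
  exact (Measure.tendsto_eval_ae_ae (μ := fun _ : Fin k => sphM (m + 1)) (i := i)).eventually h

def PP (m : ℕ) (s : ℝ) : ℝ := 2 / (1 + s) * s ^ m

def shell {n k : ℕ} (η : Euc n) (s : Fin k → ℝ) (θ : Fin k → Euc n) (j : Fin k) : Euc n :=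
  (2 : ℝ)⁻¹ • η + (s j * (‖η‖ / 2)) • θ j

lemma Sj_eq {m k : ℕ} (q : Euc (m + 1) → ℂ) (hq : Continuous (ft q)) (η : Euc (m + 1)) (hη : η ≠ 0) (s : Fin k → ℝ)
    (hs : ∀ i, 0 < s i) :
    Sj k s q η = (((∏ i, PP m (s i)) * (‖η‖ ^ (-(k : ℝ)) * ((‖η‖ / 2) ^ m) ^ k) : ℝ)) •
      ∫ θ, ∏ i, ft q (chainDiff k η (shell η s θ) i) ∂(sphPi (m + 1) k) := by
  have hη0 : 0 < ‖η‖ := norm_pos_iff.2 hη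
  have hρ : ∀ i, 0 < s i * ‖η‖ / 2 := fun i => by have := hs i; positivity
  have h1 : (Measure.pi fun i => ewaldM (m + 1) (s i) η) =
      (∏ i, ((Real.toNNReal ((s i * ‖η‖ / 2) ^ m) : NNReal) : ℝ≥0∞)) • Measure.map
        (fun θ => shell η s θ) (sphPi (m + 1) k) := by
    have : ∀ i, ewaldM (m + 1) (s i) η = ((Real.toNNReal ((s i * ‖η‖ / 2) ^ m) : NNReal) : ℝ≥0∞) •
        Measure.map (fun θ => (2 : ℝ)⁻¹ • η + (s i * (‖η‖ / 2)) • θ) (sphM (m + 1)) := fun i => by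
      rw [ewaldM, ewaldM_eq _ (hρ i), mul_div_assoc]; rfl
    simp only [this]
    rw [pi_smul_measure]
    congr 1
    rw [sphPi, ← Measure.pi_map_pi]
    · rfl
    · intro i
      fun_prop
  have hshell : Measurable fun θ : Fin k → Euc (m + 1) => shell η s θ := by
    unfold shell; fun_prop
  have hcont : Continuous fun ξ : Fin k → Euc (m + 1) => ∏ i : Fin (k + 1), ft q (chainDiff k η ξ i) := by
    refine continuous_finsetProd _ fun i _ => hq.comp ?_
    unfold chainDiff
    refine Continuous.sub ?_ ?_ <;> split_ifs <;> fun_prop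
  rw [Sj, h1, integral_smul_measure, integral_map hshell.aemeasurable hcont.aestronglyMeasurable,
    smul_smul]
  congr 1
  rw [← ENNReal.ofNNReal_finsetProd, ENNReal.coe_toReal, NNReal.coe_prod]
  have : ∀ i, ((Real.toNNReal ((s i * ‖η‖ / 2) ^ m) : NNReal) : ℝ) = (s i) ^ m * (‖η‖ / 2) ^ m := fun i => by
    rw [Real.coe_toNNReal _ (by have := hρ i; positivity), mul_div_assoc, mul_pow]
  simp only [this, PP, Finset.prod_mul_distrib, Finset.prod_const, Finset.card_univ, Fintype.card_fin]
  ring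

lemma contDiff_param {P G : Type*} [NormedAddCommGroup P] [NormedSpace ℝ P] [NormedAddCommGroup G]
    [NormedSpace ℝ G] [FiniteDimensional ℝ G] [MeasurableSpace G] [BorelSpace G] (μ : Measure G)
    [IsFiniteMeasure μ] (F : P → G → ℂ) (hF : ContDiff ℝ (⊤ : ℕ∞) (fun p : P × G => F p.1 p.2)) (R : ℝ)
    (hR : 0 < R) (hμ : ∀ᵐ x ∂μ, ‖x‖ ≤ R) : ContDiff ℝ (⊤ : ℕ∞) fun p => ∫ x, F p x ∂μ := by
  let φ : ContDiffBump (0 : G) := ⟨R, R + 1, hR, by linarith⟩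
  have := contDiffOn_convolution_right_with_param_comp (n := ⊤) (𝕜 := ℝ) (P := P) (μ := μ)
    (ContinuousLinearMap.lsmul ℝ ℝ : ℝ →L[ℝ] ℂ →L[ℝ] ℂ) (s := univ) (v := fun _ => (0 : G)) contDiffOn_const
    (f := fun _ => (1 : ℝ)) (g := fun p x => φ x • F p (-x)) (k := Metric.closedBall 0 (R + 1)) isOpen_univ
    (isCompact_closedBall _ _) (by
      intro p x _ hx
      rw [φ.zero_of_le_dist, zero_smul]
      rw [Metric.mem_closedBall, not_le] at hx
      exact hx.le) (integrable_const _).locallyIntegrable (by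
      apply ContDiff.contDiffOn
      have h1 : ContDiff ℝ (⊤ : ℕ∞) fun p : P × G => F p.1 (-p.2) :=
        hF.comp (contDiff_fst.prodMk contDiff_snd.neg)
      exact (φ.contDiff.comp contDiff_snd).smul h1)
  rw [contDiffOn_univ] at this
  convert this using 1
  ext p : 1
  rw [convolution_def]
  refine integral_congr_ae ?_
  filter_upwards [hμ] with x hx
  rw [zero_sub, φ.one_of_mem_closedBall]
  · simp
  · simpa using hx

lemma Sj_contDiffOn {m k : ℕ} (q : Euc (m + 1) → ℂ) (hq : ContDiff ℝ (⊤ : ℕ∞) (ft q)) (η : Euc (m + 1))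
    (hη : η ≠ 0) (x : ℂ) :
    ContDiffOn ℝ (⊤ : ℕ∞) (fun s : Fin k → ℝ => x * Sj k s q η) {s | ∀ i, 0 < s i} := by
  have h1 : ContDiff ℝ (⊤ : ℕ∞) fun s : Fin k → ℝ => ∫ θ, ∏ i, ft q (chainDiff k η (shell η s θ) i) ∂(sphPi (m + 1) k) := by
    refine contDiff_param _ _ ?_ 1 one_pos ?_
    · refine contDiff_prod fun i _ => hq.comp ?_
      unfold chainDiff shell
      have hj : ∀ j : Fin k, ContDiff ℝ (⊤ : ℕ∞) fun p : (Fin k → ℝ) × (Fin k → Euc (m + 1)) =>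
          (2 : ℝ)⁻¹ • η + (p.1 j * (‖η‖ / 2)) • p.2 j := by
        intro j
        fun_prop
      refine ContDiff.sub ?_ ?_ <;> split_ifs
      · exact contDiff_const
      · exact hj _
      · exact hj _
      · exact contDiff_const
    · filter_upwards [sphPi_ae] with θ hθ
      rw [pi_norm_le_iff_of_nonneg zero_le_one]
      exact fun i => (hθ i).le
  have h2 : ContDiffOn ℝ (⊤ : ℕ∞) (fun s : Fin k → ℝ => ((∏ i, PP m (s i)) * (‖η‖ ^ (-(k : ℝ)) * ((‖η‖ / 2) ^ m) ^ k) : ℝ))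
      {s | ∀ i, 0 < s i} := by
    refine ContDiffOn.mul ?_ contDiffOn_const
    refine contDiffOn_prod fun i _ => ?_
    unfold PP
    refine ContDiffOn.mul (ContDiffOn.div contDiffOn_const ?_ ?_) ?_
    · fun_prop
    · intro s hs
      have := hs i
      positivity
    · fun_prop
  refine ((contDiffOn_const (c := x)).mul (h2.smul h1.contDiffOn)).congr fun s hs => ?_
  rw [Sj_eq q hq.continuous η hη s hs]; rfl

end

section

def cc {k : ℕ} (i : Fin (k + 1)) (j : Fin k) : ℝ :=
  (if i = j.succ then 1 else 0) - (if i = j.castSucc then 1 else 0)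

lemma chainDiff_eq {n k : ℕ} (η : Euc n) (ξ : Fin k → Euc n) (i : Fin (k + 1)) :
    chainDiff k η ξ i = (if i = 0 then η else 0) + ∑ j, cc i j • ξ j := by
  have h1 : (if h : (i : ℕ) = 0 then η else ξ ⟨(i : ℕ) - 1, by have := i.isLt; omega⟩) =
      (if i = 0 then η else 0) + ∑ j : Fin k, (if i = j.succ then (1 : ℝ) else 0) • ξ j := by
    refine Fin.cases ?_ (fun l => ?_) i
    · simp [(Fin.succ_ne_zero _).symm]
    · simp [Fin.succ_ne_zero]
  have h2 : (if h : (i : ℕ) < k then ξ ⟨(i : ℕ), h⟩ else 0) =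
      ∑ j : Fin k, (if i = j.castSucc then (1 : ℝ) else 0) • ξ j := by
    refine Fin.lastCases ?_ (fun l => ?_) i
    · simp [(Fin.castSucc_ne_last _).symm]
    · simp
  rw [chainDiff, h1, h2]
  simp only [cc, sub_smul, Finset.sum_sub_distrib]
  abel

def VV {n k : ℕ} (f : Euc n → ℂ) : List (Fin k) → (Fin k → Euc n) × Euc n → ℂ
  | [] => fun p => f p.2
  | j :: w => fun p => fderiv ℝ (VV f w) p (0, p.1 j)

lemma VV_contDiff {n k : ℕ} {f : Euc n → ℂ} (hf : ContDiff ℝ (⊤ : ℕ∞) f) (w : List (Fin k)) :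
    ContDiff ℝ (⊤ : ℕ∞) (VV f w) := by
  induction w with
  | nil => exact hf.comp contDiff_snd
  | cons j w ih =>
    refine ContDiff.clm_apply (ih.fderiv_right (by simp)) ?_
    fun_prop

lemma VV_eq {n k : ℕ} {f : Euc n → ℂ} (hf : ContDiff ℝ (⊤ : ℕ∞) f) (w : List (Fin k))
    (θ : Fin k → Euc n) (x : Euc n) :
    VV f w (θ, x) = iteratedFDeriv ℝ w.length f x (fun i => θ (w.get i)) := by
  induction w generalizing x with
  | nil => simp [VV]
  | cons j w ih =>
    have hd := ((VV_contDiff hf w).differentiable (by simp)) (θ, x)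
    have h1 : HasFDerivAt (fun y => VV f w (θ, y))
        ((fderiv ℝ (VV f w) (θ, x)).comp (ContinuousLinearMap.inr ℝ (Fin k → Euc n) (Euc n))) x :=
      hd.hasFDerivAt.comp x (hasFDerivAt_prodMk_right θ x)
    have h2 : (fun y => VV f w (θ, y)) =
        fun y => iteratedFDeriv ℝ w.length f y (fun i => θ (w.get i)) := funext ih
    rw [h2] at h1
    have h3 : DifferentiableAt ℝ (iteratedFDeriv ℝ w.length f) x :=
      (hf.differentiable_iteratedFDeriv (by exact_mod_cast ENat.natCast_lt_top _)) x
    have h4 := (ContinuousMultilinearMap.apply ℝ (fun _ : Fin w.length => Euc n) ℂ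
      (fun i => θ (w.get i))).hasFDerivAt.comp x h3.hasFDerivAt
    have h5 := congrArg (fun L => L (θ j)) (h1.unique h4)
    simp only [ContinuousLinearMap.comp_apply, ContinuousLinearMap.inr_apply] at h5
    simp only [VV, List.length_cons]
    rw [h5, iteratedFDeriv_succ_apply_left]
    rfl

lemma VV_norm_le {n k : ℕ} {f : Euc n → ℂ} (hf : ContDiff ℝ (⊤ : ℕ∞) f) (w : List (Fin k))
    (θ : Fin k → Euc n) (hθ : ∀ j, ‖θ j‖ ≤ 1) (x : Euc n) :
    ‖VV f w (θ, x)‖ ≤ ‖iteratedFDeriv ℝ w.length f x‖ := by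
  rw [VV_eq hf]
  refine (ContinuousMultilinearMap.le_opNorm _ _).trans ?_
  refine mul_le_of_le_one_right (norm_nonneg _) ?_
  exact Finset.prod_le_one (fun _ _ => norm_nonneg _) fun i _ => hθ _

lemma VV_deriv {n k : ℕ} {f : Euc n → ℂ} (hf : ContDiff ℝ (⊤ : ℕ∞) f) (w : List (Fin k))
    (θ : Fin k → Euc n) (j : Fin k) (γ : ℝ → Euc n) (c t : ℝ) (hγ : HasDerivAt γ (c • θ j) t) :
    HasDerivAt (fun t => VV f w (θ, γ t)) (c • VV f (j :: w) (θ, γ t)) t := by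
  have hd := ((VV_contDiff hf w).differentiable (by simp)) (θ, γ t)
  have h1 : HasDerivAt (fun t => (θ, γ t)) ((0 : Fin k → Euc n), c • θ j) t :=
    (hasDerivAt_const t θ).prodMk hγ
  have h2 := hd.hasFDerivAt.comp_hasDerivAt t h1
  have h3 : (((0 : Fin k → Euc n), c • θ j) : (Fin k → Euc n) × Euc n) = c • (0, θ j) := by simp
  rw [h3, map_smul] at h2
  exact h2

-- the product with derivative words
def TT {n k : ℕ} (f : Euc n → ℂ) (η c : Euc n) (w : Fin (k + 1) → List (Fin k)) (θ : Fin k → Euc n)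
    (ρ : Fin k → ℝ) : ℂ :=
  ∏ i, VV f (w i) (θ, chainDiff k η (fun j => c + ρ j • θ j) i)

def wcons {k : ℕ} (w : Fin (k + 1) → List (Fin k)) (i : Fin (k + 1)) (j : Fin k) :
    Fin (k + 1) → List (Fin k) := Function.update w i (j :: w i)

lemma chain_deriv {n k : ℕ} (η c : Euc n) (θ : Fin k → Euc n) (ρ : Fin k → ℝ) (j : Fin k) (i : Fin (k + 1)) :
    HasDerivAt (fun t => chainDiff k η (fun l => c + (Function.update ρ j t) l • θ l) i) (cc i j • θ j) (ρ j) := by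
  simp only [chainDiff_eq]
  have h : ∀ l ∈ (Finset.univ : Finset (Fin k)), HasDerivAt (fun t => cc i l • (c + (Function.update ρ j t) l • θ l))
      (if l = j then cc i j • θ j else 0) (ρ j) := by
    intro l _
    by_cases hl : l = j
    · subst hl
      simp only [Function.update_self, if_true]
      have := (((hasDerivAt_id (ρ l)).smul_const (θ l)).const_add c).const_smul (cc i l)
      exact this.congr_deriv (by simp)
    · simp only [Function.update_of_ne hl, hl, if_false]
      exact hasDerivAt_const _ _
  have := (HasDerivAt.fun_sum h).const_add (if i = 0 then η else 0)
  simpa using this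

lemma prod_update_eq {n k : ℕ} (f : Euc n → ℂ) (w : Fin (k + 1) → List (Fin k)) (j : Fin k) (θ : Fin k → Euc n)
    (z : Fin (k + 1) → Euc n) (i : Fin (k + 1)) :
    ∏ l, VV f (wcons w i j l) (θ, z l) =
      (∏ l ∈ Finset.univ.erase i, VV f (w l) (θ, z l)) * VV f (j :: w i) (θ, z i) := by
  rw [← Finset.prod_erase_mul Finset.univ _ (Finset.mem_univ i)]
  congr 1
  · refine Finset.prod_congr rfl fun l hl => ?_
    rw [wcons, Function.update_of_ne (Finset.ne_of_mem_erase hl)]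
  · rw [wcons, Function.update_self]

lemma TT_deriv {n k : ℕ} {f : Euc n → ℂ} (hf : ContDiff ℝ (⊤ : ℕ∞) f) (η c : Euc n)
    (w : Fin (k + 1) → List (Fin k)) (θ : Fin k → Euc n) (ρ : Fin k → ℝ) (j : Fin k) :
    HasDerivAt (fun t => TT f η c w θ (Function.update ρ j t))
      (TT f η c (wcons w j.succ j) θ ρ - TT f η c (wcons w j.castSucc j) θ ρ) (ρ j) := by
  have h : ∀ i ∈ (Finset.univ : Finset (Fin (k + 1))), HasDerivAt
      (fun t => VV f (w i) (θ, chainDiff k η (fun l => c + (Function.update ρ j t) l • θ l) i))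
      (cc i j • VV f (j :: w i) (θ, chainDiff k η (fun l => c + ρ l • θ l) i)) (ρ j) := by
    intro i _
    have := VV_deriv hf (w i) θ j _ _ _ (chain_deriv η c θ ρ j i)
    simpa using this
  have := HasDerivAt.fun_finsetProd h
  refine this.congr_deriv ?_
  simp only [Function.update_eq_self]
  have e : ∀ i, (∏ l ∈ Finset.univ.erase i, VV f (w l) (θ, chainDiff k η (fun l => c + ρ l • θ l) l)) •
      cc i j • VV f (j :: w i) (θ, chainDiff k η (fun l => c + ρ l • θ l) i) =
      (if i = j.succ then TT f η c (wcons w i j) θ ρ else 0) -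
      (if i = j.castSucc then TT f η c (wcons w i j) θ ρ else 0) := by
    intro i
    rw [TT, prod_update_eq, cc]
    split_ifs <;> simp
  simp only [e, Finset.sum_sub_distrib]
  simp

lemma TT_continuous {n k : ℕ} {f : Euc n → ℂ} (hf : ContDiff ℝ (⊤ : ℕ∞) f) (η c : Euc n)
    (w : Fin (k + 1) → List (Fin k)) :
    Continuous (fun p : (Fin k → Euc n) × (Fin k → ℝ) => TT f η c w p.1 p.2) := by
  unfold TT
  simp only [chainDiff_eq]
  refine continuous_finsetProd _ fun i _ => (VV_contDiff hf (w i)).continuous.comp ?_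
  fun_prop

end

section

def BddF {n : ℕ} (f : Euc n → ℂ) : Prop := ∀ N : ℕ, ∃ B, ∀ x, ‖iteratedFDeriv ℝ N f x‖ ≤ B

lemma TT_bdd {n k : ℕ} {f : Euc n → ℂ} (hf : ContDiff ℝ (⊤ : ℕ∞) f) (hb : BddF f) (η c : Euc n)
    (w : Fin (k + 1) → List (Fin k)) :
    ∃ B : ℝ, ∀ θ : Fin k → Euc n, (∀ j, ‖θ j‖ ≤ 1) → ∀ ρ, ‖TT f η c w θ ρ‖ ≤ B := by
  choose B hB using hb
  refine ⟨∏ i, B (w i).length, fun θ hθ ρ => ?_⟩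
  rw [TT, norm_prod]
  exact Finset.prod_le_prod (fun _ _ => norm_nonneg _) fun i _ =>
    (VV_norm_le hf (w i) θ hθ _).trans (hB _ _)

def II {n k : ℕ} (f : Euc n → ℂ) (η : Euc n) (w : Fin (k + 1) → List (Fin k)) (s : Fin k → ℝ) : ℂ :=
  ∫ θ, TT f η ((2 : ℝ)⁻¹ • η) w θ (fun j => s j * (‖η‖ / 2)) ∂(sphPi n k)

lemma TT_deriv2 {n k : ℕ} {f : Euc n → ℂ} (hf : ContDiff ℝ (⊤ : ℕ∞) f) (η c : Euc n) (b : ℝ)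
    (w : Fin (k + 1) → List (Fin k)) (θ : Fin k → Euc n) (s : Fin k → ℝ) (j : Fin k) :
    HasDerivAt (fun t => TT f η c w θ (fun l => Function.update s j t l * b))
      (b • (TT f η c (wcons w j.succ j) θ (fun l => s l * b) -
        TT f η c (wcons w j.castSucc j) θ (fun l => s l * b))) (s j) := by
  have h1 := TT_deriv hf η c w θ (fun l => s l * b) j
  have h2 : HasDerivAt (fun t : ℝ => t * b) b (s j) := by
    simpa using (hasDerivAt_id (s j)).mul_const b
  have h3 := HasDerivAt.scomp (s j) h1 h2
  refine h3.congr_of_eventuallyEq (Eventually.of_forall fun t => ?_)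
  simp only [Function.comp]
  congr 1
  ext l
  by_cases hl : l = j
  · subst hl; simp
  · simp [Function.update_of_ne hl]

lemma TT_meas {n k : ℕ} {f : Euc n → ℂ} (hf : ContDiff ℝ (⊤ : ℕ∞) f) (η c : Euc n)
    (w : Fin (k + 1) → List (Fin k)) (ρ : Fin k → ℝ) : Continuous (fun θ => TT f η c w θ ρ) :=
  (TT_continuous hf η c w).comp (by fun_prop : Continuous fun θ : Fin k → Euc n => (θ, ρ))

lemma II_deriv {m k : ℕ} {f : Euc (m + 1) → ℂ} (hf : ContDiff ℝ (⊤ : ℕ∞) f) (hb : BddF f) (η : Euc (m + 1))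
    (w : Fin (k + 1) → List (Fin k)) (s : Fin k → ℝ) (j : Fin k) :
    HasDerivAt (fun t => II f η w (Function.update s j t))
      ((‖η‖ / 2) • (II f η (wcons w j.succ j) s - II f η (wcons w j.castSucc j) s)) (s j) := by
  set c := (2 : ℝ)⁻¹ • η with hc
  set b := ‖η‖ / 2 with hbdef
  obtain ⟨B0, hB0⟩ := TT_bdd hf hb η c w
  obtain ⟨B1, hB1⟩ := TT_bdd hf hb η c (wcons w j.succ j)
  obtain ⟨B2, hB2⟩ := TT_bdd hf hb η c (wcons w j.castSucc j)
  have integ : ∀ (w : Fin (k + 1) → List (Fin k)) (ρ : Fin k → ℝ),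
      Integrable (fun θ => TT f η c w θ ρ) (sphPi (m + 1) k) := by
    intro w ρ
    obtain ⟨B, hB⟩ := TT_bdd hf hb η c w
    refine Integrable.of_bound (TT_meas hf η c w ρ).aestronglyMeasurable B ?_
    filter_upwards [sphPi_ae] with θ hθ
    exact hB θ (fun j => (hθ j).le) ρ
  have key := hasDerivAt_integral_of_dominated_loc_of_deriv_le (𝕜 := ℝ) (μ := sphPi (m + 1) k)
    (F := fun t θ => TT f η c w θ (fun l => Function.update s j t l * b))
    (F' := fun t θ => b • (TT f η c (wcons w j.succ j) θ (fun l => Function.update s j t l * b) -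
        TT f η c (wcons w j.castSucc j) θ (fun l => Function.update s j t l * b)))
    (x₀ := s j) (s := univ) (bound := fun _ => ‖b‖ * (B1 + B2)) univ_mem
    (Eventually.of_forall fun t => (TT_meas hf η c w _).aestronglyMeasurable)
    (integ _ _)
    (((TT_meas hf η c _ _).sub (TT_meas hf η c _ _)).const_smul b).aestronglyMeasurable
    (by
      filter_upwards [sphPi_ae] with θ hθ t _
      rw [norm_smul]
      gcongr
      exact (norm_sub_le _ _).trans (add_le_add (hB1 θ (fun j => (hθ j).le) _) (hB2 θ (fun j => (hθ j).le) _)))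
    (integrable_const _)
    (by
      refine Eventually.of_forall fun θ t _ => ?_
      have := TT_deriv2 hf η c b w θ (Function.update s j t) j
      simpa using this)
  refine key.2.congr_deriv ?_
  simp only [Function.update_eq_self]
  rw [integral_smul, integral_sub (integ _ _) (integ _ _)]
  rfl

abbrev Trm (k : ℕ) := ℝ × (Fin k → Bool) × (Fin (k + 1) → List (Fin k))

def pe (m : ℕ) (e : Bool) : ℝ → ℝ := if e then deriv (PP m) else PP m

def tval {n k : ℕ} (m : ℕ) (f : Euc n → ℂ) (η : Euc n) (s : Fin k → ℝ) (T : Trm k) : ℂ :=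
  ((T.1 * ∏ i, pe m (T.2.1 i) (s i) : ℝ) : ℂ) * II f η T.2.2 s

def tstep {k : ℕ} (b : ℝ) (j : Fin k) (T : Trm k) : List (Trm k) :=
  [(T.1, Function.update T.2.1 j true, T.2.2), (T.1 * b, T.2.1, wcons T.2.2 j.succ j),
    (-(T.1 * b), T.2.1, wcons T.2.2 j.castSucc j)]

def terms {k : ℕ} (κ b : ℝ) : List (Fin k) → List (Trm k)
  | [] => [(κ, fun _ => false, fun _ => [])]
  | j :: l => (terms κ b l).flatMap (tstep b j)

lemma PP_diff (m : ℕ) {s : ℝ} (hs : 0 < s) : DifferentiableAt ℝ (PP m) s := by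
  unfold PP
  have : 1 + s ≠ 0 := by positivity
  fun_prop (disch := assumption)

lemma pe_prod_deriv {k : ℕ} (m : ℕ) (e : Fin k → Bool) (s : Fin k → ℝ) (j : Fin k) (he : e j = false)
    (hs : 0 < s j) :
    HasDerivAt (fun t => ∏ i, pe m (e i) (Function.update s j t i))
      (∏ i, pe m (Function.update e j true i) (s i)) (s j) := by
  have h1 : ∀ t, ∏ i, pe m (e i) (Function.update s j t i) =
      (∏ i ∈ Finset.univ.erase j, pe m (e i) (s i)) * PP m t := by
    intro t
    rw [← Finset.prod_erase_mul Finset.univ _ (Finset.mem_univ j)]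
    congr 1
    · refine Finset.prod_congr rfl fun l hl => ?_
      rw [Function.update_of_ne (Finset.ne_of_mem_erase hl)]
    · simp [pe, he]
  have h2 : ∏ i, pe m (Function.update e j true i) (s i) =
      (∏ i ∈ Finset.univ.erase j, pe m (e i) (s i)) * deriv (PP m) (s j) := by
    rw [← Finset.prod_erase_mul Finset.univ _ (Finset.mem_univ j)]
    congr 1
    · refine Finset.prod_congr rfl fun l hl => ?_
      rw [Function.update_of_ne (Finset.ne_of_mem_erase hl)]
    · simp [pe]
  simp only [h1]
  rw [h2]
  exact (PP_diff m hs).hasDerivAt.const_mul _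

lemma tval_deriv {m k : ℕ} {f : Euc (m + 1) → ℂ} (hf : ContDiff ℝ (⊤ : ℕ∞) f) (hb : BddF f) (η : Euc (m + 1))
    (T : Trm k) (s : Fin k → ℝ) (j : Fin k) (he : T.2.1 j = false) (hs : 0 < s j) :
    HasDerivAt (fun t => tval m f η (Function.update s j t) T)
      ((tstep (‖η‖ / 2) j T).map (tval m f η s)).sum (s j) := by
  have h1 := ((pe_prod_deriv m T.2.1 s j he hs).const_mul T.1).ofReal_comp
  have h2 := h1.mul (II_deriv hf hb η T.2.2 s j)
  refine h2.congr_deriv ?_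
  simp only [tstep, tval, List.map_cons, List.map_nil, List.sum_cons, List.sum_nil, Function.update_eq_self,
    Complex.real_smul]
  push_cast
  ring

lemma listsum_deriv {X : Type*} (L : List X) (F : X → ℝ → ℂ) (F' : X → ℂ) (x : ℝ)
    (h : ∀ T ∈ L, HasDerivAt (F T) (F' T) x) :
    HasDerivAt (fun t => (L.map fun T => F T t).sum) (L.map F').sum x := by
  induction L with
  | nil => simpa using hasDerivAt_const x (0 : ℂ)
  | cons T L ih =>
    simp only [List.map_cons, List.sum_cons]
    exact (h T (by simp)).add (ih fun T' hT' => h T' (by simp [hT']))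

lemma terms_e {k : ℕ} (κ b : ℝ) (l : List (Fin k)) (T : Trm k) (hT : T ∈ terms κ b l) (i : Fin k)
    (hi : T.2.1 i = true) : i ∈ l := by
  induction l generalizing T with
  | nil =>
    simp only [terms, List.mem_singleton] at hT
    subst hT
    simp at hi
  | cons j l ih =>
    simp only [terms, List.mem_flatMap] at hT
    obtain ⟨T', hT', h⟩ := hT
    simp only [tstep, List.mem_cons, List.not_mem_nil, or_false] at h
    rcases h with rfl | rfl | rfl
    · by_cases hij : i = j
      · simp [hij]
      · simp only [Function.update_of_ne hij] at hi
        exact List.mem_cons_of_mem _ (ih T' hT' hi)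
    · exact List.mem_cons_of_mem _ (ih T' hT' hi)
    · exact List.mem_cons_of_mem _ (ih T' hT' hi)

lemma terms_w {k : ℕ} (κ b : ℝ) (l : List (Fin k)) (T : Trm k) (hT : T ∈ terms κ b l) (i : Fin (k + 1)) :
    (T.2.2 i).length ≤ l.countP (fun j => i = j.succ ∨ i = j.castSucc) := by
  induction l generalizing T with
  | nil =>
    simp only [terms, List.mem_singleton] at hT
    subst hT
    simp
  | cons j l ih =>
    simp only [terms, List.mem_flatMap] at hT
    obtain ⟨T', hT', h⟩ := hT
    have := ih T' hT'
    rw [List.countP_cons]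
    have aux : ∀ i', (i' = j.succ ∨ i' = j.castSucc) → (wcons T'.2.2 i' j i).length ≤
      List.countP (fun j => decide (i = j.succ ∨ i = j.castSucc)) l +
        if decide (i = j.succ ∨ i = j.castSucc) = true then 1 else 0 := by
      intro i' hi'
      by_cases hii : i = i'
      · subst hii
        simp only [wcons, Function.update_self, List.length_cons, hi', decide_true, if_true]
        omega
      · simp only [wcons, Function.update_of_ne hii]
        omega
    simp only [tstep, List.mem_cons, List.not_mem_nil, or_false] at h
    rcases h with rfl | rfl | rfl
    · exact this.trans (Nat.le_add_right _ _)
    · exact aux _ (Or.inl rfl)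
    · exact aux _ (Or.inr rfl)

lemma terms_w2 {k : ℕ} (κ b : ℝ) (l : List (Fin k)) (hl : l.Nodup) (T : Trm k) (hT : T ∈ terms κ b l)
    (i : Fin (k + 1)) : (T.2.2 i).length ≤ 2 := by
  refine (terms_w κ b l T hT i).trans ?_
  rw [List.countP_eq_length_filter, ← List.toFinset_card_of_nodup (hl.filter _)]
  have hsub : (l.filter (fun j => i = j.succ ∨ i = j.castSucc)).toFinset.map Fin.valEmbedding ⊆
      {(i : ℕ) - 1, (i : ℕ)} := by
    intro x hx
    simp only [Finset.mem_map, List.mem_toFinset, List.mem_filter, decide_eq_true_eq] at hx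
    obtain ⟨j, ⟨_, h | h⟩, rfl⟩ := hx
    · simp [h]
    · simp [h]
  have := Finset.card_le_card hsub
  rw [Finset.card_map] at this
  exact this.trans Finset.card_le_two

lemma terms_c {k : ℕ} (κ b B : ℝ) (hB : 1 ≤ B) (hbB : |b| ≤ B) (l : List (Fin k)) (T : Trm k)
    (hT : T ∈ terms κ b l) : |T.1| ≤ |κ| * B ^ l.length := by
  induction l generalizing T with
  | nil =>
    simp only [terms, List.mem_singleton] at hT
    subst hT
    simp
  | cons j l ih =>
    simp only [terms, List.mem_flatMap] at hT
    obtain ⟨T', hT', h⟩ := hT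
    have h0 := ih T' hT'
    have hn : 0 ≤ |κ| * B ^ l.length := by positivity
    have h1 : |T'.1 * b| ≤ |κ| * B ^ l.length * B := by
      rw [abs_mul]; gcongr
    rw [List.length_cons, pow_succ, ← mul_assoc]
    simp only [tstep, List.mem_cons, List.not_mem_nil, or_false] at h
    rcases h with rfl | rfl | rfl
    · exact h0.trans (le_mul_of_one_le_right hn hB)
    · exact h1
    · simpa using h1

lemma terms_len {k : ℕ} (κ b : ℝ) (l : List (Fin k)) : (terms κ b l).length = 3 ^ l.length := by
  induction l with
  | nil => simp [terms]
  | cons j l ih =>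
    simp only [terms, List.length_flatMap, tstep, List.length_cons, List.length_nil]
    simp [ih, pow_succ]

lemma my_flatMap_sum {X Y : Type*} (L : List X) (g : X → List Y) (F : Y → ℂ) :
    ((L.flatMap g).map F).sum = (L.map fun T => ((g T).map F).sum).sum := by
  induction L with
  | nil => simp
  | cons T L ih => simp [List.flatMap_cons, ih]

lemma partialR_eq {m k : ℕ} {f : Euc (m + 1) → ℂ} (hf : ContDiff ℝ (⊤ : ℕ∞) f) (hb : BddF f) (η : Euc (m + 1))
    (κ : ℝ) (G : (Fin k → ℝ) → ℂ)
    (hG : ∀ s : Fin k → ℝ, (∀ i, 0 < s i) → G s = tval m f η s (κ, fun _ => false, fun _ => []))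
    (l : List (Fin k)) (hl : l.Nodup) (s : Fin k → ℝ) (hs : ∀ i, 0 < s i) :
    partialR l G s = ((terms κ (‖η‖ / 2) l).map (tval m f η s)).sum := by
  induction l generalizing s with
  | nil => simp [partialR, terms, hG s hs]
  | cons j l ih =>
    have hl' := List.nodup_cons.1 hl
    have e1 : partialR (j :: l) G s = deriv (fun t => partialR l G (Function.update s j t)) (s j) := rfl
    have hev : (fun t => partialR l G (Function.update s j t)) =ᶠ[nhds (s j)]
        fun t => ((terms κ (‖η‖ / 2) l).map fun T => tval m f η (Function.update s j t) T).sum := by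
      filter_upwards [lt_mem_nhds (hs j)] with t ht
      refine ih hl'.2 _ fun i => ?_
      by_cases hi : i = j
      · subst hi; simpa using ht
      · rw [Function.update_of_ne hi]; exact hs i
    rw [e1, hev.deriv_eq]
    have hd := listsum_deriv (terms κ (‖η‖ / 2) l) (fun T t => tval m f η (Function.update s j t) T)
      (fun T => ((tstep (‖η‖ / 2) j T).map (tval m f η s)).sum) (s j) (by
        intro T hT
        refine tval_deriv hf hb η T s j ?_ (hs j)
        by_contra hcon
        rw [Bool.not_eq_false] at hcon
        exact hl'.1 (terms_e _ _ l T hT j hcon))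
    rw [hd.deriv, terms, my_flatMap_sum]

lemma list_sum_enorm_le {X : Type*} (L : List X) (F : X → ℂ) (M : ℝ≥0∞) (h : ∀ T ∈ L, ‖F T‖ₑ ≤ M) :
    ‖(L.map F).sum‖ₑ ≤ L.length * M := by
  induction L with
  | nil => simp
  | cons T L ih =>
    simp only [List.map_cons, List.sum_cons, List.length_cons]
    refine (enorm_add_le _ _).trans ?_
    push_cast
    rw [add_mul, one_mul, add_comm]
    exact add_le_add (ih fun T' hT' => h T' (by simp [hT'])) (h T (by simp))

lemma partialR_bound {m k : ℕ} {f : Euc (m + 1) → ℂ} (hf : ContDiff ℝ (⊤ : ℕ∞) f) (hb : BddF f) (η : Euc (m + 1))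
    (κ : ℝ) (G : (Fin k → ℝ) → ℂ)
    (hG : ∀ s : Fin k → ℝ, (∀ i, 0 < s i) → G s = tval m f η s (κ, fun _ => false, fun _ => []))
    (l : List (Fin k)) (hl : l.Nodup) (s : Fin k → ℝ) (hs : ∀ i, 0 < s i) (B : ℝ) (hB1 : 1 ≤ B)
    (hB : ‖η‖ / 2 ≤ B) (K : ℝ) (hK1 : 1 ≤ K) (hK : ∀ i ∈ l, |deriv (PP m) (s i)| ≤ K * PP m (s i)) (M : ℝ≥0∞)
    (hM : ∀ w : Fin (k + 1) → List (Fin k), (∀ i, (w i).length ≤ 2) →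
      ∫⁻ θ, ‖TT f η ((2 : ℝ)⁻¹ • η) w θ (fun j => s j * (‖η‖ / 2))‖ₑ ∂(sphPi (m + 1) k) ≤ M) :
    ‖partialR l G s‖ₑ ≤ 3 ^ l.length *
      (ENNReal.ofReal (|κ| * B ^ l.length * (K ^ k * ∏ i, PP m (s i))) * M) := by
  rw [partialR_eq hf hb η κ G hG l hl s hs]
  have := list_sum_enorm_le (terms κ (‖η‖ / 2) l) (tval m f η s)
    (ENNReal.ofReal (|κ| * B ^ l.length * (K ^ k * ∏ i, PP m (s i))) * M) (by
      intro T hT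
      rw [tval, enorm_mul]
      refine mul_le_mul' ?_ ?_
      · rw [← ofReal_norm, Complex.norm_real, norm_mul, Real.norm_eq_abs]
        refine ENNReal.ofReal_le_ofReal ?_
        refine mul_le_mul (terms_c κ _ B hB1 (by rw [abs_of_nonneg (by positivity)]; exact hB) l T hT) ?_
          (norm_nonneg _) (by positivity)
        rw [norm_prod]
        calc _ ≤ ∏ i, K * PP m (s i) := by
              refine Finset.prod_le_prod (fun _ _ => norm_nonneg _) fun i _ => ?_
              have hPP : 0 ≤ PP m (s i) := by have := hs i; unfold PP; positivity
              rw [Real.norm_eq_abs]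
              by_cases hi : T.2.1 i = true
              · simp only [pe, hi, if_true]
                exact hK i (terms_e _ _ l T hT i hi)
              · simp only [pe, hi, abs_of_nonneg hPP]
                simpa [abs_of_nonneg hPP] using le_mul_of_one_le_left hPP hK1
          _ = _ := by
              rw [Finset.prod_mul_distrib, Finset.prod_const, Finset.card_univ, Fintype.card_fin]
      · exact (enorm_integral_le_lintegral_enorm _).trans (hM _ (terms_w2 _ _ l hl T hT)))
  rw [terms_len] at this
  exact_mod_cast this

lemma PP_deriv_bound (m : ℕ) {δ : ℝ} (hδ : δ < 1) : ∃ K : ℝ, 1 ≤ K ∧ ∀ s, s ∈ Ioo (1 - δ) (1 + δ) →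
    |deriv (PP m) s| ≤ K * PP m s := by
  refine ⟨1 + m / (1 - δ), ?_, fun s hs => ?_⟩
  · have : 0 < 1 - δ := by linarith
    have : 0 ≤ m / (1 - δ) := by positivity
    linarith
  have h0 : 0 < 1 - δ := by linarith
  have hs0 : 0 < s := h0.trans hs.1
  have h1 : 1 + s ≠ 0 := by positivity
  have hd : HasDerivAt (PP m) (-(2 / (1 + s) ^ 2) * s ^ m + 2 / (1 + s) * (m * s ^ (m - 1))) s := by
    have a1 : HasDerivAt (fun s : ℝ => 2 / (1 + s)) (-(2 / (1 + s) ^ 2)) s := by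
      have := ((hasDerivAt_const s (2 : ℝ)).div ((hasDerivAt_id s).const_add 1) h1)
      refine this.congr_deriv ?_
      simp
      ring
    exact a1.mul (hasDerivAt_pow m s)
  rw [hd.deriv]
  have hP : 0 < 2 / (1 + s) * s ^ m := by positivity
  have e1 : (m : ℝ) * s ^ (m - 1) = (m / s) * s ^ m := by
    rcases m with _ | m
    · simp
    · simp only [Nat.add_sub_cancel, pow_succ]; field_simp
  have e2 : -(2 / (1 + s) ^ 2) * s ^ m + 2 / (1 + s) * (m * s ^ (m - 1)) =
      (-(1 / (1 + s)) + m / s) * (2 / (1 + s) * s ^ m) := by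
    rw [e1]; field_simp
  rw [e2, abs_mul, abs_of_pos hP]
  unfold PP
  gcongr
  refine (abs_add_le _ _).trans ?_
  rw [abs_neg, abs_of_pos (by positivity), abs_of_nonneg (by positivity)]
  gcongr
  · rw [div_le_one (by positivity)]; linarith
  · exact hs.1.le

end

section

lemma oneD (F F' : ℝ → ℂ) (hF : ∀ t, HasDerivAt F (F' t) t) (hc : Continuous F') (a : ℝ) :
    ‖F a‖ₑ ≤ ∫⁻ t in Icc a (a + 1), (‖F t‖ₑ + ‖F' t‖ₑ) := by
  have hvol : (volume : Measure ℝ) (Icc a (a + 1)) = 1 := by simp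
  have hFc : Continuous F := continuous_iff_continuousAt.2 fun t => (hF t).continuousAt
  have h1 : ∀ t ∈ Icc a (a + 1), ‖F a‖ₑ ≤ ‖F t‖ₑ + ∫⁻ u in Icc a (a + 1), ‖F' u‖ₑ := by
    intro t ht
    have e := intervalIntegral.integral_eq_sub_of_hasDerivAt (f := F) (f' := F') (a := a) (b := t)
      (fun x _ => hF x) (hc.intervalIntegrable _ _)
    have e2 : F a = F t - ∫ u in a..t, F' u := by rw [e]; ring
    rw [e2]
    refine (enorm_sub_le).trans (add_le_add le_rfl ?_)
    rw [intervalIntegral.integral_of_le ht.1]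
    refine (enorm_integral_le_lintegral_enorm _).trans ?_
    refine lintegral_mono_set fun u hu => ⟨hu.1.le, hu.2.trans ht.2⟩
  calc ‖F a‖ₑ = ∫⁻ t in Icc a (a + 1), ‖F a‖ₑ := by simp [hvol]
    _ ≤ ∫⁻ t in Icc a (a + 1), (‖F t‖ₑ + ∫⁻ u in Icc a (a + 1), ‖F' u‖ₑ) :=
        setLIntegral_mono' measurableSet_Icc h1
    _ = _ := by
        rw [lintegral_add_left (by fun_prop), lintegral_add_left (by fun_prop)]
        simp [hvol]

def Gf {n : ℕ} (f : Euc n → ℂ) (x : Euc n) : ℝ≥0∞ := ∑ N ∈ Finset.range 5, ‖iteratedFDeriv ℝ N f x‖ₑ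

lemma Gf_continuous {n : ℕ} {f : Euc n → ℂ} (hf : ContDiff ℝ (⊤ : ℕ∞) f) : Continuous (Gf f) := by
  unfold Gf
  refine continuous_finsetSum _ fun N _ => ?_
  exact (hf.continuous_iteratedFDeriv (by exact_mod_cast le_top)).enorm

lemma my_enorm_prod {ι : Type*} (s : Finset ι) (u : ι → ℂ) : ‖∏ i ∈ s, u i‖ₑ = ∏ i ∈ s, ‖u i‖ₑ := by
  classical
  induction s using Finset.induction_on with
  | empty => simp
  | insert a s ha ih => rw [Finset.prod_insert ha, Finset.prod_insert ha, enorm_mul, ih]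

lemma thick {n k : ℕ} {f : Euc n → ℂ} (hf : ContDiff ℝ (⊤ : ℕ∞) f) (η c : Euc n)
    (θ : Fin k → Euc n) (hθ : ∀ j, ‖θ j‖ ≤ 1) (ρ0 : Fin k → ℝ) (J : Finset (Fin k)) :
    ∀ (w : Fin (k + 1) → List (Fin k)),
    (∀ i, (w i).length + (J.filter fun j => i = j.succ ∨ i = j.castSucc).card ≤ 4) →
    ∀ ρ : Fin k → ℝ, (∀ j ∈ J, ρ j = ρ0 j) →
    ‖TT f η c w θ ρ‖ₑ ≤ 3 ^ J.card *
      lmarginal (fun j => (volume : Measure ℝ).restrict (Icc (ρ0 j) (ρ0 j + 1))) J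
        (fun x => ∏ i, Gf f (chainDiff k η (fun j => c + x j • θ j) i)) ρ := by
  have hG : Measurable (fun x : Fin k → ℝ => ∏ i, Gf f (chainDiff k η (fun j => c + x j • θ j) i)) := by
    simp only [chainDiff_eq]
    have : ∀ i, Continuous (fun x : Fin k → ℝ =>
        Gf f ((if i = 0 then η else 0) + ∑ j, cc i j • (c + x j • θ j))) := fun i =>
      (Gf_continuous hf).comp (by fun_prop)
    exact Finset.measurable_prod _ fun i _ => (this i).measurable
  induction J using Finset.induction_on with
  | empty =>
    intro w hw ρ _
    simp only [Finset.card_empty, pow_zero, one_mul, lmarginal_empty, TT, my_enorm_prod]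
    refine Finset.prod_le_prod' fun i _ => ?_
    have h1 := VV_norm_le hf (w i) θ hθ (chainDiff k η (fun j => c + ρ j • θ j) i)
    have h2 : ‖VV f (w i) (θ, chainDiff k η (fun j => c + ρ j • θ j) i)‖ₑ ≤
        ‖iteratedFDeriv ℝ (w i).length f (chainDiff k η (fun j => c + ρ j • θ j) i)‖ₑ := by
      rw [← ofReal_norm, ← ofReal_norm]; exact ENNReal.ofReal_le_ofReal h1
    refine h2.trans ?_
    refine Finset.single_le_sum (f := fun N => ‖iteratedFDeriv ℝ N f (chainDiff k η (fun j => c + ρ j • θ j) i)‖ₑ)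
      (fun _ _ => zero_le) ?_
    have := hw i
    simp only [Finset.mem_range]; omega
  | insert j J hj ih =>
    intro w hw ρ hρ
    have hcard : ∀ i, (J.filter fun l => i = l.succ ∨ i = l.castSucc).card ≤
        ((insert j J).filter fun l => i = l.succ ∨ i = l.castSucc).card := fun i =>
      Finset.card_le_card (Finset.filter_subset_filter _ (Finset.subset_insert _ _))
    have hcard' : ∀ i, (i = j.succ ∨ i = j.castSucc) → (J.filter fun l => i = l.succ ∨ i = l.castSucc).card + 1 ≤
        ((insert j J).filter fun l => i = l.succ ∨ i = l.castSucc).card := by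
      intro i hi
      rw [Finset.filter_insert, if_pos hi, Finset.card_insert_of_notMem (by simp [hj])]
    have hwc : ∀ i0, (i0 = j.succ ∨ i0 = j.castSucc) → ∀ i, (wcons w i0 j i).length +
        (J.filter fun l => i = l.succ ∨ i = l.castSucc).card ≤ 4 := by
      intro i0 hi0 i
      by_cases h : i = i0
      · subst h
        have := hw i
        have := hcard' i hi0
        simp only [wcons, Function.update_self, List.length_cons]; omega
      · have := hw i
        have := hcard i
        simp only [wcons, Function.update_of_ne h]; omega
    have hcont : ∀ w : Fin (k + 1) → List (Fin k), Continuous fun t => TT f η c w θ (Function.update ρ j t) := by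
      intro w
      exact (TT_continuous hf η c w).comp (by fun_prop : Continuous fun t : ℝ => (θ, Function.update ρ j t))
    have h1 := oneD (fun t => TT f η c w θ (Function.update ρ j t))
      (fun t => TT f η c (wcons w j.succ j) θ (Function.update ρ j t) -
        TT f η c (wcons w j.castSucc j) θ (Function.update ρ j t)) (by
        intro t
        have := TT_deriv hf η c w θ (Function.update ρ j t) j
        simpa using this) ((hcont _).sub (hcont _)) (ρ j)
    simp only [Function.update_eq_self] at h1
    refine h1.trans ?_
    rw [Finset.card_insert_of_notMem hj, lmarginal_insert _ hG hj, hρ j (by simp), ← lintegral_const_mul _ (by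
      exact (hG.lmarginal _).comp (measurable_update ρ))]
    refine lintegral_mono fun t => ?_
    have hρ' : ∀ l ∈ J, Function.update ρ j t l = ρ0 l := by
      intro l hl
      rw [Function.update_of_ne (by rintro rfl; exact hj hl)]
      exact hρ l (by simp [hl])
    have a1 := ih w (fun i => by have := hw i; have := hcard i; omega) _ hρ'
    have a2 := ih _ (hwc j.succ (by simp)) _ hρ'
    have a3 := ih _ (hwc j.castSucc (by simp)) _ hρ'
    refine (add_le_add a1 (enorm_sub_le.trans (add_le_add a2 a3))).trans (le_of_eq ?_)
    rw [pow_succ]; ring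

end

section

lemma pi_mono_meas {ι X : Type*} [Fintype ι] [MeasurableSpace X] (μ ν : ι → Measure X)
    [∀ i, SigmaFinite (μ i)] [∀ i, SigmaFinite (ν i)] (c : ι → ℝ≥0∞)
    (h : ∀ i, ∀ F : X → ℝ≥0∞, Measurable F → ∫⁻ x, F x ∂(μ i) ≤ c i * ∫⁻ x, F x ∂(ν i))
    (F : (ι → X) → ℝ≥0∞) (hF : Measurable F) :
    ∫⁻ x, F x ∂(Measure.pi μ) ≤ (∏ i, c i) * ∫⁻ x, F x ∂(Measure.pi ν) := by
  classical
  have key : ∀ s : Finset ι, ∀ x, lmarginal μ s F x ≤ (∏ i ∈ s, c i) * lmarginal ν s F x := by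
    intro s
    induction s using Finset.induction_on with
    | empty => simp
    | insert j s hj ih =>
      intro x
      rw [lmarginal_insert _ hF hj, lmarginal_insert _ hF hj, Finset.prod_insert hj]
      have hm : Measurable fun y => lmarginal ν s F (Function.update x j y) :=
        (hF.lmarginal _).comp (measurable_update x)
      calc _ ≤ ∫⁻ y, (∏ i ∈ s, c i) * lmarginal ν s F (Function.update x j y) ∂(μ j) :=
            lintegral_mono fun y => ih _
        _ ≤ c j * ∫⁻ y, (∏ i ∈ s, c i) * lmarginal ν s F (Function.update x j y) ∂(ν j) :=
            h j _ (hm.const_mul _)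
        _ = _ := by rw [lintegral_const_mul _ hm, mul_assoc]
  rcases isEmpty_or_nonempty (ι → X) with he | ⟨⟨x⟩⟩
  · simp [lintegral_of_isEmpty]
  have := key Finset.univ x
  simpa [lmarginal_univ] using this

lemma polar_pi (m k : ℕ) : ∃ C : NNReal, ∀ ρ : Fin k → ℝ, (∀ i, 0 < ρ i) →
    ∀ F : (Fin k → Euc (m + 1)) → ℝ≥0∞, Measurable F →
    ∫⁻ θ, ∫⁻ t, F (fun j => t j • θ j)
      ∂(Measure.pi fun j => (volume : Measure ℝ).restrict (Icc (ρ j) (ρ j + 1))) ∂(sphPi (m + 1) k) ≤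
    C * ENNReal.ofReal (∏ i, (ρ i ^ m))⁻¹ *
      ∫⁻ y, F y ∂(Measure.pi fun j => (volume : Measure (Euc (m + 1))).restrict (annu (m + 1) (ρ j))) := by
  obtain ⟨C, hC⟩ := polar_le m
  refine ⟨C ^ k, fun ρ hρ F hF => ?_⟩
  have hsf : SigmaFinite (sphM (m + 1)) := inferInstance
  have hsf2 : SFinite (sphM (m + 1)) := inferInstance
  have hmeas : Measurable fun z : ℝ × Euc (m + 1) => z.1 • z.2 := by fun_prop
  obtain ⟨vv, hvv⟩ : ∃ vv : Fin k → Measure ℝ, vv = fun j => (volume : Measure ℝ).restrict (Icc (ρ j) (ρ j + 1)) :=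
    ⟨_, rfl⟩
  have hfin : ∀ j, IsFiniteMeasure (vv j) := by
    intro j; rw [hvv]; constructor; simp
  obtain ⟨ss, hss⟩ : ∃ ss : Fin k → Measure (Euc (m + 1)), ss = fun _ => sphM (m + 1) := ⟨_, rfl⟩
  have hfin2 : ∀ j, IsFiniteMeasure (ss j) := by
    intro j; rw [hss]; exact sphM_finite
  have hfin3 : ∀ j, IsFiniteMeasure (((vv j).prod (ss j)).map (fun z : ℝ × Euc (m + 1) => z.1 • z.2)) :=
    fun j => inferInstance
  have hpp : sphPi (m + 1) k = Measure.pi ss := by rw [hss]; rfl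
  have e1 : ∫⁻ θ, ∫⁻ t, F (fun j => t j • θ j) ∂(Measure.pi vv) ∂(Measure.pi ss) =
      ∫⁻ y, F y ∂(Measure.pi fun j => ((vv j).prod (ss j)).map (fun z : ℝ × Euc (m + 1) => z.1 • z.2)) := by
    have hH : Measurable fun p : (Fin k → ℝ) × (Fin k → Euc (m + 1)) => F (fun j => p.1 j • p.2 j) :=
      hF.comp (by fun_prop)
    rw [← lintegral_prod_symm' _ hH,
      ← (measurePreserving_arrowProdEquivProdArrow ℝ (Euc (m + 1)) (Fin k) vv ss).lintegral_comp hH,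
      ← Measure.pi_map_pi (fun j => hmeas.aemeasurable), lintegral_map hF (by fun_prop)]
    rfl
  rw [← hvv, hpp, e1]
  have h := pi_mono_meas (fun j => ((vv j).prod (ss j)).map (fun z : ℝ × Euc (m + 1) => z.1 • z.2))
    (fun j => (volume : Measure (Euc (m + 1))).restrict (annu (m + 1) (ρ j)))
    (fun j => C * ENNReal.ofReal (ρ j ^ m)⁻¹) (by
      intro j F hF
      rw [lintegral_map hF hmeas, lintegral_prod (fun z : ℝ × Euc (m + 1) => F (z.1 • z.2)) (hF.comp hmeas).aemeasurable, hvv, hss]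
      exact hC (ρ j) (hρ j) F hF) F hF
  refine h.trans (le_of_eq ?_)
  rw [Finset.prod_mul_distrib, ← ENNReal.ofReal_prod_of_nonneg (fun i _ => by have := hρ i; positivity),
    Finset.prod_inv_distrib]
  simp

lemma TT_int_bound (m k : ℕ) : ∃ C : NNReal, ∀ f : Euc (m + 1) → ℂ, ContDiff ℝ (⊤ : ℕ∞) f →
    ∀ η c : Euc (m + 1), ∀ w : Fin (k + 1) → List (Fin k), (∀ i, (w i).length ≤ 2) →
    ∀ ρ : Fin k → ℝ, (∀ i, 0 < ρ i) →
    ∫⁻ θ, ‖TT f η c w θ ρ‖ₑ ∂(sphPi (m + 1) k) ≤ C * ENNReal.ofReal (∏ i, (ρ i ^ m))⁻¹ *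
      ∫⁻ y, ∏ i, Gf f (chainDiff k η (fun j => c + y j) i)
        ∂(Measure.pi fun j => (volume : Measure (Euc (m + 1))).restrict (annu (m + 1) (ρ j))) := by
  obtain ⟨C, hC⟩ := polar_pi m k
  refine ⟨3 ^ k * C, fun f hf η c w hw ρ hρ => ?_⟩
  obtain ⟨F, hFd⟩ : ∃ F : (Fin k → Euc (m + 1)) → ℝ≥0∞,
    F = fun y => ∏ i, Gf f (chainDiff k η (fun j => c + y j) i) := ⟨_, rfl⟩
  have hF : Measurable F := by
    rw [hFd]
    refine Finset.measurable_prod _ fun i _ => (Gf_continuous hf).measurable.comp ?_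
    simp only [chainDiff_eq]
    fun_prop
  have hpt : ∀ θ : Fin k → Euc (m + 1), (∀ j, ‖θ j‖ = 1) → ‖TT f η c w θ ρ‖ₑ ≤ 3 ^ k *
      ∫⁻ t, F (fun j => t j • θ j) ∂(Measure.pi fun j => (volume : Measure ℝ).restrict (Icc (ρ j) (ρ j + 1))) := by
    intro θ hθ
    have := thick hf η c θ (fun j => (hθ j).le) ρ Finset.univ w (by
      intro i
      have h1 := hw i
      have h2 : (Finset.univ.filter fun j : Fin k => i = j.succ ∨ i = j.castSucc).card ≤ 2 := by
        rw [Finset.filter_or]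
        refine (Finset.card_union_le _ _).trans ?_
        have a1 : (Finset.univ.filter fun j : Fin k => i = j.succ).card ≤ 1 := by
          rw [Finset.card_le_one]
          intro a ha b hb
          simp only [Finset.mem_filter, Finset.mem_univ, true_and] at ha hb
          exact Fin.succ_injective _ (ha.symm.trans hb)
        have a2 : (Finset.univ.filter fun j : Fin k => i = j.castSucc).card ≤ 1 := by
          rw [Finset.card_le_one]
          intro a ha b hb
          simp only [Finset.mem_filter, Finset.mem_univ, true_and] at ha hb
          exact Fin.castSucc_injective _ (ha.symm.trans hb)
        omega
      omega) ρ (fun _ _ => rfl)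
    rw [lmarginal_univ] at this
    rw [hFd]
    simpa using this
  calc _ ≤ ∫⁻ θ, 3 ^ k * ∫⁻ t, F (fun j => t j • θ j)
          ∂(Measure.pi fun j => (volume : Measure ℝ).restrict (Icc (ρ j) (ρ j + 1))) ∂(sphPi (m + 1) k) := by
        refine lintegral_mono_ae ?_
        filter_upwards [sphPi_ae (m := m) (k := k)] with θ hθ
        exact hpt θ hθ
    _ = 3 ^ k * ∫⁻ θ, ∫⁻ t, F (fun j => t j • θ j)
          ∂(Measure.pi fun j => (volume : Measure ℝ).restrict (Icc (ρ j) (ρ j + 1))) ∂(sphPi (m + 1) k) := by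
        rw [lintegral_const_mul' _ _ (by simp)]
    _ ≤ 3 ^ k * _ := mul_le_mul' le_rfl (hC ρ hρ F hF)
    _ = _ := by rw [hFd]; push_cast; ring

end

section

lemma rank_lemma {ι X : Type*} [Fintype ι] [MeasurableSpace X] [Nonempty X] (ν : ι → Measure X)
    [∀ i, SigmaFinite (ν i)] [DecidableEq ι] (u : ι → (ι → X) → ℝ≥0∞) (hu : ∀ i, Measurable (u i)) (rank : ι → ℕ)
    (hr : ∀ i a, a ≠ i → rank i ≤ rank a → ∀ x y, u i (Function.update x a y) = u i x)
    (M : ι → ℝ≥0∞) (hM : ∀ i x, ∫⁻ y, u i (Function.update x i y) ∂(ν i) ≤ M i) :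
    ∫⁻ x, ∏ i, u i x ∂(Measure.pi ν) ≤ ∏ i, M i := by
  have key : ∀ s : Finset ι, ∀ x, lmarginal ν s (fun x => ∏ i ∈ s, u i x) x ≤ ∏ i ∈ s, M i := by
    intro s
    induction s using Finset.induction_on_max_value rank with
    | empty => simp
    | insert a s ha hmax ih =>
      intro x
      have hme : Measurable fun x => ∏ i ∈ insert a s, u i x := Finset.measurable_prod _ fun i _ => hu i
      have hme2 : Measurable fun x => ∏ i ∈ s, u i x := Finset.measurable_prod _ fun i _ => hu i
      rw [lmarginal_insert' _ hme ha, Finset.prod_insert ha]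
      have hle : (fun x => ∫⁻ y, (fun x => ∏ i ∈ insert a s, u i x) (Function.update x a y) ∂(ν a)) ≤
          fun x => M a * ∏ i ∈ s, u i x := by
        intro x
        have e : ∀ y, (fun x => ∏ i ∈ insert a s, u i x) (Function.update x a y) =
            u a (Function.update x a y) * ∏ i ∈ s, u i x := by
          intro y
          simp only [Finset.prod_insert ha]
          congr 1
          refine Finset.prod_congr rfl fun i hi => hr i a ?_ (hmax i hi) x y
          rintro rfl; exact ha hi
        simp only [e]
        have hmu : Measurable fun y => u a (Function.update x a y) := (hu a).comp (measurable_update x)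
        rw [lintegral_mul_const _ hmu]
        exact mul_le_mul' (hM a x) le_rfl
      refine (lmarginal_mono hle x).trans ?_
      refine le_trans (le_of_eq ?_) (mul_le_mul' le_rfl (ih x))
      unfold lmarginal
      exact lintegral_const_mul (M a) (hme2.comp (measurable_updateFinset (x := x)))
  have := key Finset.univ (fun _ => Classical.arbitrary X)
  simpa [lmarginal_univ] using this

def rk {k : ℕ} (i0 : Fin (k + 1)) (i : Fin k) : ℕ := if i.castSucc < i0 then i else k - i

lemma chain_indep {n k : ℕ} (η : Euc n) (i0 : Fin (k + 1)) (i a : Fin k) (hai : a ≠ i) (h : rk i0 i ≤ rk i0 a)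
    (x : Fin k → Euc n) (y : Euc n) :
    chainDiff k η (Function.update x a y) (i0.succAbove i) = chainDiff k η x (i0.succAbove i) := by
  have hai' : (a : ℕ) ≠ i := fun h => hai (Fin.ext h)
  have h1 := i.isLt
  have h2 := a.isLt
  have h3 := i0.isLt
  rw [chainDiff_eq, chainDiff_eq]
  congr 1
  refine Finset.sum_congr rfl fun j _ => ?_
  by_cases hj : j = a
  · subst hj
    have : cc (i0.succAbove i) j = 0 := by
      unfold cc
      have e1 : i0.succAbove i ≠ j.succ := by
        intro e
        have e' := congrArg Fin.val e
        unfold rk at h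
        simp only [Fin.lt_def, Fin.val_castSucc] at h
        unfold Fin.succAbove at e'
        simp only [Fin.lt_def, Fin.val_castSucc] at e'
        split_ifs at h e' <;> simp at e' <;> omega
      have e2 : i0.succAbove i ≠ j.castSucc := by
        intro e
        have e' := congrArg Fin.val e
        unfold rk at h
        simp only [Fin.lt_def, Fin.val_castSucc] at h
        unfold Fin.succAbove at e'
        simp only [Fin.lt_def, Fin.val_castSucc] at e'
        split_ifs at h e' <;> simp at e' <;> omega
      simp [e1, e2]
    simp [this]
  · rw [Function.update_of_ne hj]

lemma chain_dep {n k : ℕ} (η : Euc n) (i0 : Fin (k + 1)) (i : Fin k) (x : Fin k → Euc n) :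
    ∃ z : Euc n, (∀ y, chainDiff k η (Function.update x i y) (i0.succAbove i) = z - y) ∨
      (∀ y, chainDiff k η (Function.update x i y) (i0.succAbove i) = y - z) := by
  have e : ∀ y, chainDiff k η (Function.update x i y) (i0.succAbove i) =
      cc (i0.succAbove i) i • y + ((if i0.succAbove i = 0 then η else 0) +
        ∑ j ∈ Finset.univ.erase i, cc (i0.succAbove i) j • x j) := by
    intro y
    rw [chainDiff_eq, ← Finset.add_sum_erase _ _ (Finset.mem_univ i), Function.update_self]
    rw [Finset.sum_congr rfl (g := fun j => cc (i0.succAbove i) j • x j)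
      (fun j hj => by rw [Function.update_of_ne (Finset.ne_of_mem_erase hj)])]
    abel
  have hc : cc (i0.succAbove i) i = 1 ∨ cc (i0.succAbove i) i = -1 := by
    have hne : i.castSucc ≠ i.succ := by
      intro h; have := congrArg Fin.val h; simp at this
    unfold cc Fin.succAbove
    by_cases h1 : i.castSucc < i0
    · right; simp [h1, hne]
    · left; simp [h1, hne.symm]
  obtain ⟨Z, hZ⟩ : ∃ Z, Z = ((if i0.succAbove i = 0 then η else 0) +
        ∑ j ∈ Finset.univ.erase i, cc (i0.succAbove i) j • x j) := ⟨_, rfl⟩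
  rw [← hZ] at e
  rcases hc with hc | hc
  · refine ⟨-Z, Or.inr fun y => ?_⟩
    rw [e, hc]; simp
  · refine ⟨Z, Or.inl fun y => ?_⟩
    rw [e, hc]; simp; abel

lemma measurable_chain {n k : ℕ} (η : Euc n) (i : Fin (k + 1)) : Measurable fun x : Fin k → Euc n => chainDiff k η x i := by
  simp only [chainDiff_eq]
  fun_prop

lemma rank_chain {n k : ℕ} (η c : Euc n) (i0 : Fin (k + 1)) (ν : Fin k → Measure (Euc n)) [∀ i, SigmaFinite (ν i)]
    (F : Euc n → ℝ≥0∞) (hF : Measurable F) (M : Fin k → ℝ≥0∞)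
    (h1 : ∀ i z, ∫⁻ y, F (z - y) ∂(ν i) ≤ M i) (h2 : ∀ i z, ∫⁻ y, F (y - z) ∂(ν i) ≤ M i) :
    ∫⁻ x, ∏ i, F (chainDiff k η (fun j => c + x j) (i0.succAbove i)) ∂(Measure.pi ν) ≤ ∏ i, M i := by
  have hupd : ∀ (x : Fin k → Euc n) a y, (fun j => c + Function.update x a y j) =
      Function.update (fun j => c + x j) a (c + y) := by
    intro x a y
    ext1 j
    by_cases hj : j = a
    · subst hj; simp
    · simp [Function.update_of_ne hj]
  refine rank_lemma ν (fun i x => F (chainDiff k η (fun j => c + x j) (i0.succAbove i))) ?_ (rk i0) ?_ M ?_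
  · intro i
    have hsh : Measurable fun x : Fin k → Euc n => fun j => c + x j := by fun_prop
    exact hF.comp ((measurable_chain η (i0.succAbove i)).comp hsh)
  · intro i a hai hr x y
    simp only [hupd]
    rw [chain_indep η i0 i a hai hr]
  · intro i x
    simp only [hupd]
    obtain ⟨z, hz | hz⟩ := chain_dep η i0 i (fun j => c + x j)
    · simp only [hz]
      convert h1 i (z - c) using 4
      abel
    · simp only [hz]
      convert h2 i (z - c) using 4
      abel

lemma sum_chain {n k : ℕ} (η : Euc n) (ξ : Fin k → Euc n) : ∑ i, chainDiff k η ξ i = η := by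
  simp only [chainDiff_eq, Finset.sum_add_distrib]
  rw [Finset.sum_comm]
  simp [← Finset.sum_smul, cc]

lemma full_int {n k : ℕ} (H : Euc n → ℝ≥0∞) (hH : Measurable H) :
    ∫⁻ η : Euc n, ∫⁻ y : Fin k → Euc n, ∏ i, H (chainDiff k η (fun j => (2 : ℝ)⁻¹ • η + y j) i)
      ∂(Measure.pi fun _ => volume) ≤ (∫⁻ x, H x) ^ (k + 1) := by
  have hmm : ∀ i, Measurable fun p : Euc n × (Fin k → Euc n) => H (chainDiff k p.1 p.2 i) := by
    intro i
    refine hH.comp ?_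
    simp only [chainDiff_eq]
    by_cases hi : i = 0
    · simp only [hi, if_true]; fun_prop
    · simp only [hi, if_false]; fun_prop
  have e1 : ∀ η : Euc n, ∫⁻ y : Fin k → Euc n, ∏ i, H (chainDiff k η (fun j => (2 : ℝ)⁻¹ • η + y j) i)
      ∂(Measure.pi fun _ => volume) = ∫⁻ y : Fin k → Euc n, ∏ i, H (chainDiff k η y i)
      ∂(Measure.pi fun _ => volume) := by
    intro η
    exact lintegral_add_left_eq_self (μ := (Measure.pi fun _ : Fin k => (volume : Measure (Euc n))))
      (fun y => ∏ i, H (chainDiff k η y i)) (fun _ => (2 : ℝ)⁻¹ • η)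
  simp only [e1]
  rw [lintegral_lintegral_swap (by
    exact (Finset.measurable_prod _ fun i _ => hmm i).aemeasurable)]
  have e2 : ∀ (η : Euc n) (y : Fin k → Euc n) (i : Fin k), chainDiff k η y i.succ = chainDiff k 0 y i.succ := by
    intro η y i
    simp [chainDiff_eq, Fin.succ_ne_zero]
  have e3 : ∀ (y : Fin k → Euc n), ∫⁻ η : Euc n, ∏ i, H (chainDiff k η y i) =
      (∫⁻ x, H x) * ∏ i : Fin k, H (chainDiff k 0 y i.succ) := by
    intro y
    simp only [Fin.prod_univ_succ, e2]
    rw [lintegral_mul_const _ (by exact (Measurable.of_uncurry_right (f := fun η y => H (chainDiff k η y 0)) (hmm 0)))]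
    congr 1
    simp only [chainDiff_eq, if_true]
    exact lintegral_add_right_eq_self (fun η => H η) _
  simp only [e3]
  have hmp : Measurable fun y : Fin k → Euc n => ∏ i : Fin k, H (chainDiff k 0 y i.succ) :=
    Finset.measurable_prod _ fun i _ => hH.comp (measurable_chain 0 i.succ)
  rw [lintegral_const_mul _ hmp, pow_succ']
  refine mul_le_mul' le_rfl ?_
  have := rank_chain (0 : Euc n) 0 (0 : Fin (k + 1)) (fun _ => volume) H hH (fun _ => ∫⁻ x, H x) (by
    intro i z
    rw [lintegral_sub_left_eq_self]) (by
    intro i z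
    rw [lintegral_sub_right_eq_self])
  simpa [Fin.succAbove_zero] using this

end

section

lemma jap_ge_norm {n : ℕ} (x : Euc n) : ‖x‖ ≤ jap x := by
  unfold jap
  refine Real.le_sqrt_of_sq_le ?_
  linarith

lemma jap_le_mul {n : ℕ} (x y : Euc n) (c : ℝ) (hc : 1 ≤ c) (h : ‖x‖ ≤ c * ‖y‖) : jap x ≤ c * jap y := by
  unfold jap
  rw [Real.sqrt_le_left (by positivity), mul_pow, Real.sq_sqrt (by positivity)]
  have : ‖x‖ ^ 2 ≤ (c * ‖y‖) ^ 2 := by gcongr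
  nlinarith

lemma jap_prod_le {n k : ℕ} (β p : ℝ) (hβ : 0 ≤ β) (hpβ : p ≤ 2 * β) (η : Euc n) (x : Fin (k + 1) → Euc n)
    (hx : ∑ i, x i = η) :
    ∏ i, jap (x i) ^ (-β) ≤ ((k : ℝ) + 1) ^ β * jap η ^ (-β) *
      ∑ i0 : Fin (k + 1), ∏ i : Fin k, jap (x (i0.succAbove i)) ^ (-(p / 2)) := by
  have hk : (1 : ℝ) ≤ (k : ℝ) + 1 := by have : (0 : ℝ) ≤ k := Nat.cast_nonneg k; linarith
  obtain ⟨i0, hi0⟩ : ∃ i0, ‖η‖ ≤ ((k : ℝ) + 1) * ‖x i0‖ := by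
    by_contra! hcon
    have h1 : ‖η‖ ≤ ∑ i, ‖x i‖ := by rw [← hx]; exact norm_sum_le _ _
    have h2 : ∑ i, ((k : ℝ) + 1) * ‖x i‖ < ∑ i : Fin (k + 1), ‖η‖ :=
      Finset.sum_lt_sum_of_nonempty Finset.univ_nonempty fun i _ => hcon i
    rw [← Finset.mul_sum] at h2
    simp at h2
    nlinarith
  have hj := jap_le_mul η (x i0) _ hk hi0
  have hpos : ∀ z : Euc n, 0 < jap z := jap_pos
  have h1 : jap (x i0) ^ (-β) ≤ ((k : ℝ) + 1) ^ β * jap η ^ (-β) := by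
    rw [Real.rpow_neg (hpos _).le, Real.rpow_neg (hpos _).le, ← div_eq_mul_inv, inv_eq_one_div,
      div_le_div_iff₀ (Real.rpow_pos_of_pos (hpos _) _) (Real.rpow_pos_of_pos (hpos _) _), one_mul,
      ← Real.mul_rpow (by positivity) (hpos _).le]
    exact Real.rpow_le_rpow (hpos _).le hj hβ
  have h2 : ∏ i : Fin k, jap (x (i0.succAbove i)) ^ (-β) ≤ ∏ i : Fin k, jap (x (i0.succAbove i)) ^ (-(p / 2)) := by
    refine Finset.prod_le_prod (fun i _ => (Real.rpow_pos_of_pos (hpos _) _).le) fun i _ => ?_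
    exact Real.rpow_le_rpow_of_exponent_le (jap_ge_one _) (by linarith)
  have hnn : ∀ i1 : Fin (k + 1), 0 ≤ ∏ i : Fin k, jap (x (i1.succAbove i)) ^ (-(p / 2)) := fun i1 =>
    Finset.prod_nonneg fun i _ => (Real.rpow_pos_of_pos (hpos _) _).le
  rw [Fin.prod_univ_succAbove _ i0]
  refine mul_le_mul h1 (h2.trans ?_) (Finset.prod_nonneg fun i _ => (Real.rpow_pos_of_pos (hpos _) _).le) ?_
  · exact Finset.single_le_sum (f := fun i1 : Fin (k + 1) => ∏ i : Fin k, jap (x (i1.succAbove i)) ^ (-(p / 2)))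
      (fun i1 _ => hnn i1) (Finset.mem_univ i0)
  · have := Real.rpow_pos_of_pos (hpos η) (-β)
    positivity

lemma jap_sub_comm {n : ℕ} (x y : Euc n) : jap (x - y) = jap (y - x) := by
  unfold jap; rw [norm_sub_rev]

lemma P_bound (m k : ℕ) (hm : 1 ≤ m) (β p : ℝ) (hβ : 0 ≤ β) (hp : 0 ≤ p) (hpm : p < m) (hpβ : p ≤ 2 * β) :
    ∃ C : NNReal, ∀ (η : Euc (m + 1)) (ρ : Fin k → ℝ), (∀ i, 0 < ρ i) → ∀ G h : Euc (m + 1) → ℝ≥0∞, Measurable h →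
    (∀ x, G x ≤ ENNReal.ofReal (jap x ^ (-β)) * h x) →
    ∫⁻ y, ∏ i, G (chainDiff k η (fun j => (2 : ℝ)⁻¹ • η + y j) i)
        ∂(Measure.pi fun j => (volume : Measure (Euc (m + 1))).restrict (annu (m + 1) (ρ j))) ≤
      C * ENNReal.ofReal (jap η ^ (-β) * ∏ i, (1 + ρ i) ^ (((m : ℝ) - p) / 2)) *
      (∫⁻ y, ∏ i, h (chainDiff k η (fun j => (2 : ℝ)⁻¹ • η + y j) i) ^ 2
        ∂(Measure.pi fun _ : Fin k => (volume : Measure (Euc (m + 1))))) ^ (1 / 2 : ℝ) := by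
  obtain ⟨C, hC⟩ := annu_bound hm hp hpm
  refine ⟨((k : NNReal) + 1) ^ β * ((k + 1) * (C ^ k) ^ (1 / 2 : ℝ)), fun η ρ hρ G h hh hG => ?_⟩
  obtain ⟨ν, hν⟩ : ∃ ν : Fin k → Measure (Euc (m + 1)), ν = fun j => (volume : Measure (Euc (m + 1))).restrict (annu (m + 1) (ρ j)) :=
    ⟨_, rfl⟩
  have hσ : ∀ j, SigmaFinite (ν j) := by intro j; rw [hν]; infer_instance
  obtain ⟨Z, hZ⟩ : ∃ Z : (Fin k → Euc (m + 1)) → Fin (k + 1) → Euc (m + 1),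
    Z = fun y i => chainDiff k η (fun j => (2 : ℝ)⁻¹ • η + y j) i := ⟨_, rfl⟩
  have hZm : ∀ i, Measurable fun y => Z y i := by
    intro i
    have hsh : Measurable fun x : Fin k → Euc (m + 1) => fun j => (2 : ℝ)⁻¹ • η + x j := by fun_prop
    rw [hZ]
    exact (measurable_chain η i).comp hsh
  have hZs : ∀ y, ∑ i, Z y i = η := by intro y; rw [hZ]; exact sum_chain _ _
  rw [← hν]
  obtain ⟨A, hA⟩ : ∃ A : Fin (k + 1) → (Fin k → Euc (m + 1)) → ℝ≥0∞,
    A = fun i0 y => ∏ i : Fin k, ENNReal.ofReal (jap (Z y (i0.succAbove i)) ^ (-(p / 2))) := ⟨_, rfl⟩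
  obtain ⟨B, hB⟩ : ∃ B : (Fin k → Euc (m + 1)) → ℝ≥0∞, B = fun y => ∏ i, h (Z y i) := ⟨_, rfl⟩
  have hBm : Measurable B := by rw [hB]; exact Finset.measurable_prod _ fun i _ => hh.comp (hZm i)
  have hjm : ∀ s : ℝ, Measurable fun x : Euc (m + 1) => ENNReal.ofReal (jap x ^ s) := by
    intro s
    exact (measurable_jap.pow_const s).ennreal_ofReal
  have hAm : ∀ i0, Measurable (A i0) := by
    intro i0; rw [hA]
    exact Finset.measurable_prod _ fun i _ => (hjm _).comp (hZm _)
  have hjpos : ∀ (x : Euc (m + 1)) (s : ℝ), 0 ≤ jap x ^ s := fun x s => (Real.rpow_pos_of_pos (jap_pos x) s).le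
  have hpt : ∀ y, ∏ i, G (Z y i) ≤ ENNReal.ofReal (((k : ℝ) + 1) ^ β * jap η ^ (-β)) * ∑ i0, A i0 y * B y := by
    intro y
    calc ∏ i, G (Z y i) ≤ ∏ i, (ENNReal.ofReal (jap (Z y i) ^ (-β)) * h (Z y i)) :=
          Finset.prod_le_prod' fun i _ => hG _
      _ = ENNReal.ofReal (∏ i, jap (Z y i) ^ (-β)) * B y := by
          rw [Finset.prod_mul_distrib, ENNReal.ofReal_prod_of_nonneg (fun i _ => hjpos _ _), hB]
      _ ≤ ENNReal.ofReal (((k : ℝ) + 1) ^ β * jap η ^ (-β) *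
            ∑ i0 : Fin (k + 1), ∏ i : Fin k, jap (Z y (i0.succAbove i)) ^ (-(p / 2))) * B y := by
          refine mul_le_mul' (ENNReal.ofReal_le_ofReal ?_) le_rfl
          exact jap_prod_le β p hβ hpβ η (Z y) (hZs y)
      _ = _ := by
          rw [ENNReal.ofReal_mul (mul_nonneg (by positivity) (hjpos _ _)),
            ENNReal.ofReal_sum_of_nonneg (fun i _ => Finset.prod_nonneg fun _ _ => hjpos _ _), mul_assoc,
            ← Finset.sum_mul, hA]
          congr 3
          ext i0
          rw [ENNReal.ofReal_prod_of_nonneg (fun i _ => hjpos _ _)]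
  have hA2 : ∀ i0, ∫⁻ y, A i0 y ^ (2 : ℝ) ∂(Measure.pi ν) ≤ ∏ i, (C * ENNReal.ofReal ((1 + ρ i) ^ ((m : ℝ) - p))) := by
    intro i0
    have e : ∀ y, A i0 y ^ (2 : ℝ) = ∏ i : Fin k, ENNReal.ofReal (jap (Z y (i0.succAbove i)) ^ (-p)) := by
      intro y
      rw [hA]
      simp only
      rw [← ENNReal.prod_rpow_of_nonneg (by norm_num)]
      refine Finset.prod_congr rfl fun i _ => ?_
      rw [ENNReal.ofReal_rpow_of_nonneg (hjpos _ _) (by norm_num), ← Real.rpow_mul (jap_pos _).le]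
      congr 2; ring
    simp only [e, hZ]
    refine rank_chain η ((2 : ℝ)⁻¹ • η) i0 ν _ (hjm (-p)) _ ?_ ?_
    · intro i z
      rw [hν]
      exact hC (ρ i) (hρ i) z
    · intro i z
      rw [hν]
      simp only [jap_sub_comm _ z]
      exact hC (ρ i) (hρ i) z
  have hB2 : ∫⁻ y, B y ^ (2 : ℝ) ∂(Measure.pi ν) ≤ ∫⁻ y, ∏ i, h (Z y i) ^ 2
        ∂(Measure.pi fun _ : Fin k => (volume : Measure (Euc (m + 1)))) := by
    have e : ∀ y, B y ^ (2 : ℝ) = ∏ i, h (Z y i) ^ 2 := by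
      intro y
      rw [hB]; simp only
      rw [Finset.prod_pow, ENNReal.rpow_two]
    simp only [e]
    have := pi_mono_meas ν (fun _ : Fin k => (volume : Measure (Euc (m + 1)))) (fun _ => 1) (by
      intro i F _
      rw [hν, one_mul]
      exact setLIntegral_le_lintegral _ _) (fun y => ∏ i, h (Z y i) ^ 2)
      (Finset.measurable_prod _ fun i _ => (hh.comp (hZm i)).pow_const 2)
    simpa using this
  have hCS : ∀ i0, ∫⁻ y, A i0 y * B y ∂(Measure.pi ν) ≤
      (∏ i, (C * ENNReal.ofReal ((1 + ρ i) ^ ((m : ℝ) - p)))) ^ (1 / 2 : ℝ) * (∫⁻ y, ∏ i, h (Z y i) ^ 2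
        ∂(Measure.pi fun _ : Fin k => (volume : Measure (Euc (m + 1))))) ^ (1 / 2 : ℝ) := by
    intro i0
    refine (ENNReal.lintegral_mul_le_Lp_mul_Lq (Measure.pi ν) Real.HolderConjugate.two_two (hAm i0).aemeasurable
      hBm.aemeasurable).trans ?_
    exact mul_le_mul' (ENNReal.rpow_le_rpow (hA2 i0) (by norm_num)) (ENNReal.rpow_le_rpow hB2 (by norm_num))
  have hM : (∏ i, ((C : ℝ≥0∞) * ENNReal.ofReal ((1 + ρ i) ^ ((m : ℝ) - p)))) ^ (1 / 2 : ℝ) =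
      ((C ^ k) ^ (1 / 2 : ℝ) : NNReal) * ENNReal.ofReal (∏ i, (1 + ρ i) ^ (((m : ℝ) - p) / 2)) := by
    have hpos : ∀ i, 0 < 1 + ρ i := fun i => by have := hρ i; linarith
    rw [Finset.prod_mul_distrib, ENNReal.mul_rpow_of_nonneg _ _ (by norm_num),
      ENNReal.coe_rpow_of_nonneg _ (by norm_num), Finset.prod_const, Finset.card_univ, Fintype.card_fin,
      ENNReal.coe_pow, ← ENNReal.prod_rpow_of_nonneg (by norm_num),
      ENNReal.ofReal_prod_of_nonneg (fun i _ => (Real.rpow_pos_of_pos (hpos i) _).le)]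
    congr 1
    refine Finset.prod_congr rfl fun i _ => ?_
    rw [ENNReal.ofReal_rpow_of_nonneg (Real.rpow_pos_of_pos (hpos i) _).le (by norm_num), ← Real.rpow_mul (hpos i).le]
    congr 2; ring
  obtain ⟨Q, hQ⟩ : ∃ Q, Q = (∫⁻ y, ∏ i, h (Z y i) ^ 2
        ∂(Measure.pi fun _ : Fin k => (volume : Measure (Euc (m + 1))))) ^ (1 / 2 : ℝ) := ⟨_, rfl⟩
  rw [hM, ← hQ] at hCS
  have goal : ∫⁻ y, ∏ i, G (Z y i) ∂(Measure.pi ν) ≤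
      ((((k : NNReal) + 1) ^ β * ((k + 1) * (C ^ k) ^ (1 / 2 : ℝ)) : NNReal) : ℝ≥0∞) *
      ENNReal.ofReal (jap η ^ (-β) * ∏ i, (1 + ρ i) ^ (((m : ℝ) - p) / 2)) * Q := by
    calc _ ≤ ∫⁻ y, ENNReal.ofReal (((k : ℝ) + 1) ^ β * jap η ^ (-β)) * ∑ i0, A i0 y * B y ∂(Measure.pi ν) :=
          lintegral_mono hpt
      _ = ENNReal.ofReal (((k : ℝ) + 1) ^ β * jap η ^ (-β)) * ∑ i0, ∫⁻ y, A i0 y * B y ∂(Measure.pi ν) := by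
          rw [lintegral_const_mul' _ _ ENNReal.ofReal_ne_top, lintegral_finsetSum _ (f := fun i0 y => A i0 y * B y) fun i0 _ => (hAm i0).mul hBm]
      _ ≤ ENNReal.ofReal (((k : ℝ) + 1) ^ β * jap η ^ (-β)) * ∑ i0 : Fin (k + 1), (((C ^ k) ^ (1 / 2 : ℝ) : NNReal) *
            ENNReal.ofReal (∏ i, (1 + ρ i) ^ (((m : ℝ) - p) / 2)) * Q) :=
          mul_le_mul' le_rfl (Finset.sum_le_sum fun i0 _ => hCS i0)
      _ = _ := by
          rw [ENNReal.ofReal_mul (by positivity), ENNReal.ofReal_mul (hjpos _ _)]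
          have e : ENNReal.ofReal (((k : ℝ) + 1) ^ β) = ((((k : NNReal) + 1) ^ β : NNReal) : ℝ≥0∞) := by
            rw [ENNReal.ofReal]
            congr 1
            rw [← NNReal.coe_inj, Real.coe_toNNReal _ (by positivity)]
            push_cast; rfl
          rw [e]
          simp only [Finset.sum_const, Finset.card_univ, Fintype.card_fin, nsmul_eq_mul]
          push_cast
          ring
  rw [hQ, hZ] at goal
  exact goal

end

section

lemma id_deriv_bound {n : ℕ} (x : Euc n) (i : ℕ) :
    ‖iteratedFDeriv ℝ i (fun y : Euc n => y) x‖ ≤ if i = 0 then ‖x‖ else 1 := by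
  rcases i with _ | _ | i
  · simp
  · simp only [zero_add, one_ne_zero, if_false]
    rw [← zero_add 1, ← norm_iteratedFDeriv_fderiv, norm_iteratedFDeriv_zero]
    simpa using ContinuousLinearMap.norm_id_le (𝕜 := ℝ) (E := Euc n)
  · have h2 : iteratedFDeriv ℝ (i + 1 + 1) (fun y : Euc n => y) x = 0 := by
      rw [iteratedFDeriv_succ_eq_comp_right]
      have : fderiv ℝ (fun y : Euc n => y) = fun _ => ContinuousLinearMap.id ℝ (Euc n) := by
        ext1 y; simp
      rw [this]
      simp [iteratedFDeriv_succ_const]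
    rw [h2]; simp

lemma normsq_deriv_bound {n : ℕ} (x : Euc n) (i : ℕ) (hi : 1 ≤ i) :
    ‖iteratedFDeriv ℝ i (fun y : Euc n => ‖y‖ ^ 2) x‖ ≤ 2 ^ i * (1 + ‖x‖ ^ 2) := by
  have h0 : (fun y : Euc n => ‖y‖ ^ 2) = fun y => (innerSL ℝ) y y := by
    ext y; simp
  rw [h0]
  have h1 := ContinuousLinearMap.norm_iteratedFDeriv_le_of_bilinear_of_le_one (innerSL ℝ)
    (f := fun y : Euc n => y) (g := fun y : Euc n => y) (N := (⊤ : ℕ∞)) contDiff_id contDiff_id x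
    (n := i) (by exact_mod_cast le_top) (norm_innerSL_le _)
  refine h1.trans ?_
  have h2 : (2 : ℝ) ^ i = ∑ j ∈ Finset.range (i + 1), (i.choose j : ℝ) := by
    exact_mod_cast (Nat.sum_range_choose i).symm
  rw [h2, Finset.sum_mul]
  refine Finset.sum_le_sum fun j hj => ?_
  rw [mul_assoc]
  refine mul_le_mul_of_nonneg_left ?_ (by positivity)
  have hx : ‖x‖ ≤ 1 + ‖x‖ ^ 2 := by nlinarith [sq_nonneg (‖x‖ - 1), norm_nonneg x]
  have hA := id_deriv_bound x j
  have hB := id_deriv_bound x (i - j)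
  have hx0 := norm_nonneg x
  have key : (if j = 0 then ‖x‖ else 1) * (if i - j = 0 then ‖x‖ else 1) ≤ 1 + ‖x‖ ^ 2 := by
    have : j ≤ i := by simpa [Nat.lt_succ_iff] using hj
    split_ifs with ha hb hb
    · omega
    · simpa using hx
    · simpa using hx
    · nlinarith
  refine le_trans (mul_le_mul hA hB (norm_nonneg _) ?_) key
  split_ifs <;> positivity

/-- derivatives of the weight are controlled by the weight. -/
lemma weight_deriv (n : ℕ) (r : ℝ) (N : ℕ) : ∃ C : ℝ, 0 ≤ C ∧ ∀ x : Euc n,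
    ‖iteratedFDeriv ℝ N (fun y : Euc n => (1 + ‖y‖ ^ 2) ^ r) x‖ ≤ C * (1 + ‖x‖ ^ 2) ^ r := by
  obtain ⟨A, hA⟩ : ∃ A : ℝ, A = ∑ i ∈ Finset.range (N + 1),
    ‖iteratedFDerivWithin ℝ i (fun t : ℝ => t ^ r) (Ioi 0) 1‖ := ⟨_, rfl⟩
  have hA0 : 0 ≤ A := by rw [hA]; positivity
  refine ⟨N.factorial * A * 2 ^ N, by positivity, fun x => ?_⟩
  have ht : 0 < 1 + ‖x‖ ^ 2 := by positivity
  have e1 : (fun y : Euc n => (1 + ‖y‖ ^ 2) ^ r) = (1 + ‖x‖ ^ 2) ^ r •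
      ((fun t : ℝ => t ^ r) ∘ (fun y : Euc n => (1 + ‖x‖ ^ 2)⁻¹ * (1 + ‖y‖ ^ 2))) := by
    ext y
    simp only [Pi.smul_apply, Function.comp, smul_eq_mul]
    rw [← Real.mul_rpow ht.le (by positivity), mul_inv_cancel_left₀ ht.ne']
  have hsm : ContDiff ℝ (⊤ : ℕ∞) (fun y : Euc n => (1 + ‖x‖ ^ 2)⁻¹ * (1 + ‖y‖ ^ 2)) :=
    contDiff_const.mul (contDiff_const.add (contDiff_id.norm_sq ℝ))
  have hpw : ContDiffOn ℝ (⊤ : ℕ∞) (fun t : ℝ => t ^ r) (Ioi 0) :=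
    contDiffOn_id.rpow_const_of_ne fun t ht => (ne_of_gt ht)
  have hmaps : MapsTo (fun y : Euc n => (1 + ‖x‖ ^ 2)⁻¹ * (1 + ‖y‖ ^ 2)) univ (Ioi 0) := by
    intro y _; simp only [mem_Ioi]; positivity
  have hcomp := norm_iteratedFDerivWithin_comp_le (n := N) (x := x) hpw hsm.contDiffOn
    (by exact_mod_cast le_top) (uniqueDiffOn_Ioi 0) uniqueDiffOn_univ hmaps (mem_univ x)
    (C := A) (D := 2) ?_ ?_
  · rw [iteratedFDerivWithin_univ] at hcomp
    rw [e1, iteratedFDeriv_const_smul_apply, norm_smul, Real.norm_of_nonneg (by positivity), mul_comm]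
    · exact mul_le_mul_of_nonneg_right hcomp (by positivity)
    · have h := hpw.comp hsm.contDiffOn hmaps
      rw [contDiffOn_univ] at h
      exact (h.of_le (by exact_mod_cast le_top)).contDiffAt
  · intro i hi
    simp only [inv_mul_cancel₀ ht.ne']
    rw [hA]
    exact Finset.single_le_sum (f := fun i => ‖iteratedFDerivWithin ℝ i (fun t : ℝ => t ^ r) (Ioi 0) 1‖)
      (fun _ _ => norm_nonneg _) (Finset.mem_range.2 (by omega))
  · intro i hi1 hi
    rw [iteratedFDerivWithin_univ]
    have e2 : (fun y : Euc n => (1 + ‖x‖ ^ 2)⁻¹ * (1 + ‖y‖ ^ 2)) =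
      (1 + ‖x‖ ^ 2)⁻¹ • (fun y : Euc n => 1 + ‖y‖ ^ 2) := rfl
    have hs1 : ContDiff ℝ (⊤ : ℕ∞) (fun y : Euc n => ‖y‖ ^ 2) := contDiff_id.norm_sq ℝ
    have hs2 : ContDiff ℝ (⊤ : ℕ∞) (fun y : Euc n => 1 + ‖y‖ ^ 2) := contDiff_const.add hs1
    rw [e2, iteratedFDeriv_const_smul_apply ((hs2.of_le (by exact_mod_cast le_top)).contDiffAt),
      norm_smul, Real.norm_of_nonneg (by positivity)]
    have e3 : iteratedFDeriv ℝ i (fun y : Euc n => 1 + ‖y‖ ^ 2) x =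
        iteratedFDeriv ℝ i (fun y : Euc n => ‖y‖ ^ 2) x := by
      have := iteratedFDeriv_add_apply (x := x) (𝕜 := ℝ) (i := i) (f := fun _ : Euc n => (1:ℝ)) (g := fun y : Euc n => ‖y‖ ^ 2)
        contDiffAt_const ((hs1.of_le (by exact_mod_cast le_top)).contDiffAt)
      refine Eq.trans this ?_
      obtain ⟨l, rfl⟩ : ∃ l, i = l + 1 := ⟨i - 1, by omega⟩
      rw [iteratedFDeriv_succ_const]; simp
    rw [e3]
    refine (mul_le_mul_of_nonneg_left (normsq_deriv_bound x i hi1) (by positivity)).trans ?_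
    rw [mul_comm ((2:ℝ)^i), inv_mul_cancel_left₀ ht.ne']

end

section

open scoped FourierTransform SchwartzMap LineDeriv

lemma four_word {n : ℕ} : ∀ (N : ℕ) (w : Fin N → Euc n), (∀ i, ‖w i‖ ≤ 1) → ∀ v : 𝓢(Euc n, ℂ),
    ∃ V : 𝓢(Euc n, ℂ), ∂^{w} (𝓕 v) = 𝓕 V ∧ ∀ x, ‖V x‖ ≤ (2 * Real.pi * ‖x‖) ^ N * ‖v x‖ := by
  intro N
  induction N with
  | zero => intro w _ v; exact ⟨v, rfl, by simp⟩
  | succ N ih =>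
    intro w hw v
    obtain ⟨V, hV, hb⟩ := ih (Fin.tail w) (fun i => hw _) v
    refine ⟨-(2 * Real.pi * Complex.I) • SchwartzMap.smulLeftCLM ℂ (inner ℝ · (w 0)) V, ?_, ?_⟩
    · rw [LineDeriv.iteratedLineDerivOp_succ_left, hV, SchwartzMap.lineDerivOp_fourier_eq]
    · intro x
      have ht : Function.HasTemperateGrowth (fun x : Euc n => (inner ℝ x (w 0) : ℝ)) := by fun_prop
      rw [smul_apply, SchwartzMap.smulLeftCLM_apply_apply ht]
      rw [norm_smul, norm_smul]
      have h1 : ‖(inner ℝ x (w 0) : ℝ)‖ ≤ ‖x‖ := by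
        refine (norm_inner_le_norm x (w 0)).trans ?_
        exact mul_le_of_le_one_right (norm_nonneg _) (hw 0)
      have h2 : ‖-(2 * (Real.pi : ℂ) * Complex.I)‖ = 2 * Real.pi := by
        simp [abs_of_pos Real.pi_pos]
      rw [h2, pow_succ]
      have hp := Real.pi_pos
      calc 2 * Real.pi * (‖(inner ℝ x (w 0) : ℝ)‖ * ‖V x‖)
          ≤ 2 * Real.pi * (‖x‖ * ((2 * Real.pi * ‖x‖) ^ N * ‖v x‖)) := by
            gcongr; exact hb x
        _ = _ := by ring

lemma lint_sq_schwartz {n : ℕ} (f : 𝓢(Euc n, ℂ)) :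
    ∫⁻ x, ‖f x‖ₑ ^ 2 = ENNReal.ofReal (∫ x, ‖f x‖ ^ 2) := by
  rw [ofReal_integral_eq_lintegral_ofReal ?_ (Eventually.of_forall fun x => by positivity)]
  · refine lintegral_congr fun x => ?_
    rw [ENNReal.ofReal_pow (norm_nonneg _), ofReal_norm]
  · exact (f.memLp 2 volume).integrable_norm_pow (by norm_num)

lemma planch {n : ℕ} (f : 𝓢(Euc n, ℂ)) : ∫⁻ x, ‖(𝓕 f : 𝓢(Euc n, ℂ)) x‖ₑ ^ 2 = ∫⁻ x, ‖f x‖ₑ ^ 2 := by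
  rw [lint_sq_schwartz, lint_sq_schwartz, SchwartzMap.integral_norm_sq_fourier]

lemma multilin_bound {n N : ℕ} (L : ContinuousMultilinearMap ℝ (fun _ : Fin N => Euc n) ℂ) :
    ‖L‖ ≤ ∑ w : Fin N → Fin n, ‖L (fun i => EuclideanSpace.basisFun (Fin n) ℝ (w i))‖ := by
  refine ContinuousMultilinearMap.opNorm_le_bound (by positivity) fun x => ?_
  have h1 : x = fun i => ∑ j : Fin n, x i j • EuclideanSpace.basisFun (Fin n) ℝ j := by
    ext1 i
    conv_lhs => rw [← (EuclideanSpace.basisFun (Fin n) ℝ).sum_repr (x i)]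
    simp
  have h2 : L x = ∑ w : Fin N → Fin n, (∏ i, x i (w i)) •
      L (fun i => EuclideanSpace.basisFun (Fin n) ℝ (w i)) := by
    conv_lhs => rw [h1]
    rw [ContinuousMultilinearMap.map_sum]
    refine Finset.sum_congr rfl fun w _ => ?_
    rw [ContinuousMultilinearMap.map_smul_univ]
  rw [h2, Finset.sum_mul]
  refine (norm_sum_le _ _).trans (Finset.sum_le_sum fun w _ => ?_)
  rw [norm_smul, mul_comm, norm_prod]
  refine mul_le_mul_of_nonneg_left ?_ (norm_nonneg _)
  exact Finset.prod_le_prod (fun _ _ => norm_nonneg _) fun i _ => PiLp.norm_apply_le (x i) (w i)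

lemma deriv_L2 (n N : ℕ) (hN : N ≤ 4) : ∃ C : NNReal, ∀ v : 𝓢(Euc n, ℂ),
    ∫⁻ x, ‖iteratedFDeriv ℝ N (⇑(𝓕 v : 𝓢(Euc n, ℂ))) x‖ₑ ^ 2 ≤
      C * ∫⁻ x, (ENNReal.ofReal (jap x ^ 4) * ‖v x‖ₑ) ^ 2 := by
  obtain ⟨c, hc⟩ : ∃ c : ℝ≥0∞, c = ((Fintype.card (Fin N → Fin n) : ℕ) : ℝ≥0∞) := ⟨_, rfl⟩
  obtain ⟨b, hb⟩ : ∃ b : ℝ≥0∞, b = ENNReal.ofReal ((2 * Real.pi) ^ N) := ⟨_, rfl⟩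
  have hcf : c * (c * b ^ 2) ≠ ∞ := by
    subst hc hb
    exact ENNReal.mul_ne_top (ENNReal.natCast_ne_top _) (ENNReal.mul_ne_top (ENNReal.natCast_ne_top _)
      (ENNReal.pow_ne_top ENNReal.ofReal_ne_top))
  refine ⟨(c * (c * b ^ 2)).toNNReal, fun v => ?_⟩
  rw [ENNReal.coe_toNNReal hcf]
  obtain ⟨e, he⟩ : ∃ e : Fin n → Euc n, e = EuclideanSpace.basisFun (Fin n) ℝ := ⟨_, rfl⟩
  have hw : ∀ w : Fin N → Fin n, ∫⁻ x, ‖iteratedFDeriv ℝ N (⇑(𝓕 v : 𝓢(Euc n, ℂ))) x (fun i => e (w i))‖ₑ ^ 2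
      ≤ b ^ 2 * ∫⁻ x, (ENNReal.ofReal (jap x ^ 4) * ‖v x‖ₑ) ^ 2 := by
    intro w
    obtain ⟨V, hV, hVb⟩ := four_word N (fun i => e (w i)) (fun i => by rw [he]; simp) v
    simp_rw [← SchwartzMap.iteratedLineDerivOp_eq_iteratedFDeriv, hV]
    rw [planch, ← lintegral_const_mul' _ _ (by rw [hb]; exact ENNReal.pow_ne_top ENNReal.ofReal_ne_top)]
    refine lintegral_mono fun x => ?_
    rw [← mul_pow]
    refine pow_le_pow_left' ?_ 2
    rw [hb, ← ofReal_norm, ← ofReal_norm, ← mul_assoc, ← ENNReal.ofReal_mul (by positivity),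
      ← ENNReal.ofReal_mul (by have := jap_pos x; have := Real.pi_pos; positivity)]
    refine ENNReal.ofReal_le_ofReal ((hVb x).trans ?_)
    rw [mul_pow]
    have h1 := jap_ge_one x
    have h2 := jap_ge_norm x
    have h3 : ‖x‖ ^ N ≤ jap x ^ 4 := (pow_le_pow_left₀ (norm_nonneg _) h2 N).trans (pow_le_pow_right₀ h1 hN)
    gcongr
  have hpt : ∀ x, ‖iteratedFDeriv ℝ N (⇑(𝓕 v : 𝓢(Euc n, ℂ))) x‖ₑ ^ 2 ≤
      c * ∑ w : Fin N → Fin n, ‖iteratedFDeriv ℝ N (⇑(𝓕 v : 𝓢(Euc n, ℂ))) x (fun i => e (w i))‖ₑ ^ 2 := by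
    intro x
    have h1 := multilin_bound (iteratedFDeriv ℝ N (⇑(𝓕 v : 𝓢(Euc n, ℂ))) x)
    rw [← he] at h1
    have h2 := pow_le_pow_left₀ (norm_nonneg _) h1 2
    have h3 := h2.trans (sq_sum_le_card_mul_sum_sq)
    have h4 := ENNReal.ofReal_le_ofReal h3
    rw [ENNReal.ofReal_mul (by positivity), ENNReal.ofReal_sum_of_nonneg (fun _ _ => by positivity),
      ENNReal.ofReal_pow (norm_nonneg _), ofReal_norm] at h4
    refine h4.trans (le_of_eq ?_)
    rw [hc]
    congr 1
    · simp
    · refine Finset.sum_congr rfl fun w _ => ?_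
      rw [ENNReal.ofReal_pow (norm_nonneg _), ofReal_norm]
  have hmeas : ∀ w : Fin N → Fin n, Measurable fun x => ‖iteratedFDeriv ℝ N (⇑(𝓕 v : 𝓢(Euc n, ℂ))) x (fun i => e (w i))‖ₑ ^ 2 := by
    intro w
    simp_rw [← SchwartzMap.iteratedLineDerivOp_eq_iteratedFDeriv]
    exact ((SchwartzMap.continuous _).enorm.measurable).pow_const 2
  calc ∫⁻ x, ‖iteratedFDeriv ℝ N (⇑(𝓕 v : 𝓢(Euc n, ℂ))) x‖ₑ ^ 2
      ≤ ∫⁻ x, c * ∑ w : Fin N → Fin n, ‖iteratedFDeriv ℝ N (⇑(𝓕 v : 𝓢(Euc n, ℂ))) x (fun i => e (w i))‖ₑ ^ 2 :=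
        lintegral_mono hpt
    _ = c * ∑ w : Fin N → Fin n, ∫⁻ x, ‖iteratedFDeriv ℝ N (⇑(𝓕 v : 𝓢(Euc n, ℂ))) x (fun i => e (w i))‖ₑ ^ 2 := by
        rw [lintegral_const_mul' _ _ (by rw [hc]; exact ENNReal.natCast_ne_top _),
          lintegral_finsetSum _ fun w _ => hmeas w]
    _ ≤ c * ∑ w : Fin N → Fin n, b ^ 2 * ∫⁻ x, (ENNReal.ofReal (jap x ^ 4) * ‖v x‖ₑ) ^ 2 := by
        gcongr with w; exact hw w
    _ = _ := by
        rw [Finset.sum_const, nsmul_eq_mul, Finset.card_univ, ← hc]; ring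

end

section

open scoped FourierTransform SchwartzMap

lemma eLpNorm_two_eq {X E : Type*} [MeasurableSpace X] [NormedAddCommGroup E] (μ : Measure X) (f : X → E) :
    eLpNorm f 2 μ = (∫⁻ x, ‖f x‖ₑ ^ 2 ∂μ) ^ (1/2 : ℝ) := by
  rw [eLpNorm_eq_lintegral_rpow_enorm_toReal (by norm_num) (by norm_num)]
  simp

lemma eLpNorm_two_sq {X E : Type*} [MeasurableSpace X] [NormedAddCommGroup E] (μ : Measure X) (f : X → E) :
    eLpNorm f 2 μ ^ 2 = ∫⁻ x, ‖f x‖ₑ ^ 2 ∂μ := by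
  rw [eLpNorm_two_eq, ← ENNReal.rpow_natCast, ← ENNReal.rpow_mul]; norm_num

lemma ft_schwartz {n : ℕ} (q : 𝓢(Euc n, ℂ)) : ∃ F : 𝓢(Euc n, ℂ), ⇑F = ft (⇑q) := by
  have hp : (2 * Real.pi)⁻¹ ≠ 0 := by have := Real.pi_pos; positivity
  refine ⟨SchwartzMap.compCLMOfContinuousLinearEquiv ℂ
    (ContinuousLinearEquiv.smulLeft (R₁ := ℝ) (M₁ := Euc n) (Units.mk0 ((2 * Real.pi)⁻¹ : ℝ) hp)) (𝓕 q), ?_⟩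
  ext ξ
  simp only [SchwartzMap.compCLMOfContinuousLinearEquiv_apply, Function.comp]
  rw [SchwartzMap.fourier_coe, Real.fourier_eq']
  unfold ft
  refine integral_congr_ae (Eventually.of_forall fun x => ?_)
  simp only [smul_eq_mul]
  congr 2
  have : (ContinuousLinearEquiv.smulLeft (R₁ := ℝ) (M₁ := Euc n) (Units.mk0 ((2 * Real.pi)⁻¹ : ℝ) hp)) ξ = (2 * Real.pi)⁻¹ • ξ := rfl
  rw [this, real_inner_smul_right, real_inner_comm x ξ]
  have e : -2 * Real.pi * ((2 * Real.pi)⁻¹ * inner ℝ ξ x) = - inner ℝ ξ x := by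
    have := Real.pi_pos; field_simp
  rw [real_inner_comm x ξ] at e
  rw [e]; push_cast; ring

lemma bessel_v {n : ℕ} (β : ℝ) (q g : 𝓢(Euc n, ℂ)) (hg : ∀ x, g x = ((jap x ^ β : ℝ) : ℂ) * ft (⇑q) x)
    (x : Euc n) : (𝓕⁻ g : 𝓢(Euc n, ℂ)) x = (((2 * Real.pi) ^ n : ℝ) : ℂ) * besselD β (⇑q) ((2 * Real.pi) • x) := by
  rw [SchwartzMap.fourierInv_coe, Real.fourierInv_eq']
  unfold besselD
  rw [Complex.real_smul, ← mul_assoc, ← Complex.ofReal_mul,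
    mul_inv_cancel₀ (by have := Real.pi_pos; positivity), Complex.ofReal_one, one_mul]
  refine integral_congr_ae (Eventually.of_forall fun ξ => ?_)
  simp only [smul_eq_mul]
  rw [hg, real_inner_smul_right]
  congr 2
  ring

lemma lint_scale {n : ℕ} (R : ℝ) (hR : R ≠ 0) (F : Euc n → ℝ≥0∞) (hF : Measurable F) :
    ∫⁻ x, F (R • x) = ENNReal.ofReal (|(R ^ n)⁻¹|) * ∫⁻ x, F x := by
  have h := Measure.map_addHaar_smul (E := Euc n) volume hR
  have h2 := lintegral_map (μ := volume) hF (measurable_const_smul R : Measurable fun x : Euc n => R • x)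
  rw [← h2, h, lintegral_smul_measure]
  simp

lemma v_bound (n : ℕ) (β : ℝ) : ∃ C : NNReal, ∀ q g : 𝓢(Euc n, ℂ),
    (∀ x, g x = ((jap x ^ β : ℝ) : ℂ) * ft (⇑q) x) →
    ∫⁻ x, (ENNReal.ofReal (jap x ^ 4) * ‖(𝓕⁻ g : 𝓢(Euc n, ℂ)) x‖ₑ) ^ 2 ≤ C * wSobNorm β 4 (⇑q) ^ 2 := by
  obtain ⟨c, hc⟩ : ∃ c : ℝ≥0∞, c = ENNReal.ofReal ((2 * Real.pi) ^ n) := ⟨_, rfl⟩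
  obtain ⟨d, hd⟩ : ∃ d : ℝ≥0∞, d = ENNReal.ofReal (|((2 * Real.pi) ^ n)⁻¹|) := ⟨_, rfl⟩
  have hfin : c ^ 2 * d ≠ ∞ := by
    rw [hc, hd]; exact ENNReal.mul_ne_top (ENNReal.pow_ne_top ENNReal.ofReal_ne_top) ENNReal.ofReal_ne_top
  refine ⟨(c ^ 2 * d).toNNReal, fun q g hg => ?_⟩
  rw [ENNReal.coe_toNNReal hfin]
  have hpi := Real.pi_gt_three
  have hb : besselD β (⇑q) = fun y => ((((2 * Real.pi) ^ n : ℝ) : ℂ))⁻¹ * (𝓕⁻ g : 𝓢(Euc n, ℂ)) ((2 * Real.pi)⁻¹ • y) := by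
    ext y
    rw [bessel_v β q g hg, smul_smul, mul_inv_cancel₀ (by positivity), one_smul, inv_mul_cancel_left₀]
    exact_mod_cast (by positivity : ((2 * Real.pi) ^ n : ℝ) ≠ 0)
  have hbc : Continuous (besselD β (⇑q)) := by
    rw [hb]
    exact continuous_const.mul ((SchwartzMap.continuous _).comp (continuous_const_smul _))
  have hcf : c ^ 2 ≠ ∞ := by rw [hc]; exact ENNReal.pow_ne_top ENNReal.ofReal_ne_top
  have hF : Measurable fun y : Euc n => (ENNReal.ofReal (jap y ^ 4) * ‖besselD β (⇑q) y‖ₑ) ^ 2 :=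
    ((measurable_jap.pow_const 4).ennreal_ofReal.mul hbc.enorm.measurable).pow_const 2
  calc ∫⁻ x, (ENNReal.ofReal (jap x ^ 4) * ‖(𝓕⁻ g : 𝓢(Euc n, ℂ)) x‖ₑ) ^ 2
      ≤ ∫⁻ x, c ^ 2 * (ENNReal.ofReal (jap ((2 * Real.pi) • x) ^ 4) * ‖besselD β (⇑q) ((2 * Real.pi) • x)‖ₑ) ^ 2 := by
        refine lintegral_mono fun x => ?_
        rw [← mul_pow]
        refine pow_le_pow_left' ?_ 2
        rw [bessel_v β q g hg, enorm_mul]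
        have h1 : ‖(((2 * Real.pi) ^ n : ℝ) : ℂ)‖ₑ = c := by
          rw [hc, ← ofReal_norm, Complex.norm_real, Real.norm_of_nonneg (by positivity)]
        rw [h1, mul_left_comm]
        gcongr
        · exact (jap_pos x).le
        have := jap_le_mul x ((2 * Real.pi) • x) 1 le_rfl (by
          rw [norm_smul, Real.norm_of_nonneg (by positivity), one_mul]
          nlinarith [norm_nonneg x])
        simpa using this
    _ = c ^ 2 * (d * ∫⁻ y, (ENNReal.ofReal (jap y ^ 4) * ‖besselD β (⇑q) y‖ₑ) ^ 2) := by
        rw [lintegral_const_mul' _ _ hcf,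
          lint_scale (2 * Real.pi) (by positivity) (fun y : Euc n => (ENNReal.ofReal (jap y ^ 4) * ‖besselD β (⇑q) y‖ₑ) ^ 2) hF, hd]
    _ = c ^ 2 * d * wSobNorm β 4 (⇑q) ^ 2 := by
        rw [wSobNorm, eLpNorm_two_sq, mul_assoc]
        congr 3
        ext x
        rw [enorm_smul]
        congr 2
        rw [← ofReal_norm, Real.norm_of_nonneg (Real.rpow_nonneg (jap_pos x).le _)]
        rw [← Real.rpow_natCast]; norm_num

end

section

open scoped FourierTransform SchwartzMap

lemma four_main (n : ℕ) (β : ℝ) : ∃ C : NNReal, ∀ q : 𝓢(Euc n, ℂ),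
    ContDiff ℝ (⊤ : ℕ∞) (ft (⇑q)) ∧ BddF (ft (⇑q)) ∧ ∃ h : Euc n → ℝ≥0∞, Measurable h ∧
      (∀ x, Gf (ft (⇑q)) x ≤ ENNReal.ofReal (jap x ^ (-β)) * h x) ∧
      ∫⁻ x, h x ^ 2 ≤ C * wSobNorm β 4 (⇑q) ^ 2 := by
  choose c hc0 hc using fun N => weight_deriv n (-β / 2) N
  obtain ⟨C1, hC1⟩ := v_bound n β
  choose D hD using fun N : Fin 5 => deriv_L2 n N (by omega)
  obtain ⟨A, hA⟩ : ∃ A : ℝ, A = ∑ N ∈ Finset.range 5, ∑ i ∈ Finset.range (N + 1), (N.choose i : ℝ) * c i := ⟨_, rfl⟩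
  have hA0 : 0 ≤ A := by
    rw [hA]; exact Finset.sum_nonneg fun N _ => Finset.sum_nonneg fun i _ => mul_nonneg (by positivity) (hc0 i)
  have hfin : ENNReal.ofReal A ^ 2 * (5 * ((∑ N, (D N : ℝ≥0∞)) * C1)) ≠ ∞ := by
    refine ENNReal.mul_ne_top (ENNReal.pow_ne_top ENNReal.ofReal_ne_top) (ENNReal.mul_ne_top (by norm_num)
      (ENNReal.mul_ne_top ?_ ENNReal.coe_ne_top))
    exact (ENNReal.sum_lt_top.2 fun N _ => ENNReal.coe_lt_top).ne
  refine ⟨(ENNReal.ofReal A ^ 2 * (5 * ((∑ N, (D N : ℝ≥0∞)) * C1))).toNNReal, fun q => ?_⟩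
  rw [ENNReal.coe_toNNReal hfin]
  obtain ⟨F, hF⟩ := ft_schwartz q
  have hwt : Function.HasTemperateGrowth fun x : Euc n => (1 + ‖x‖ ^ 2) ^ (β / 2) :=
    Function.hasTemperateGrowth_one_add_norm_sq_rpow (Euc n) (β / 2)
  obtain ⟨g, hg⟩ : ∃ g : 𝓢(Euc n, ℂ), g = SchwartzMap.smulLeftCLM ℂ (fun x : Euc n => (1 + ‖x‖ ^ 2) ^ (β / 2)) F := ⟨_, rfl⟩
  have hgx : ∀ x, g x = ((1 + ‖x‖ ^ 2) ^ (β / 2) : ℝ) • F x := fun x => by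
    rw [hg, SchwartzMap.smulLeftCLM_apply_apply hwt]
  have hgj : ∀ x, g x = ((jap x ^ β : ℝ) : ℂ) * ft (⇑q) x := fun x => by
    rw [hgx, hF, jap_rpow, Complex.real_smul]
  have hFg : ⇑F = fun x => ((1 + ‖x‖ ^ 2) ^ (-β / 2) : ℝ) • g x := by
    ext x
    rw [hgx, smul_smul, ← Real.rpow_add (by positivity)]
    simp [neg_div]
  have hw : ContDiff ℝ (⊤ : ℕ∞) fun x : Euc n => (1 + ‖x‖ ^ 2) ^ (-β / 2) :=
    (Function.hasTemperateGrowth_one_add_norm_sq_rpow (Euc n) (-β / 2)).1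
  have hcont : ∀ i, Continuous fun x => ‖iteratedFDeriv ℝ i (⇑g) x‖ₑ := fun i =>
    ((g.smooth ⊤).continuous_iteratedFDeriv (by exact_mod_cast le_top)).enorm
  refine ⟨?_, ?_, fun x => ENNReal.ofReal A * ∑ i ∈ Finset.range 5, ‖iteratedFDeriv ℝ i (⇑g) x‖ₑ, ?_, ?_, ?_⟩
  · rw [← hF]; exact F.smooth ⊤
  · rw [← hF]
    intro N
    obtain ⟨B, hB⟩ := F.decay 0 N
    exact ⟨B, fun x => by simpa using hB.2 x⟩
  · exact (measurable_const).mul (continuous_finsetSum _ fun i _ => hcont i).measurable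
  · intro x
    obtain ⟨S, hS⟩ : ∃ S : ℝ, S = ∑ i ∈ Finset.range 5, ‖iteratedFDeriv ℝ i (⇑g) x‖ := ⟨_, rfl⟩
    have hS0 : 0 ≤ S := by rw [hS]; positivity
    obtain ⟨W, hW⟩ : ∃ W : ℝ, W = (1 + ‖x‖ ^ 2) ^ (-β / 2) := ⟨_, rfl⟩
    have hW0 : 0 ≤ W := by rw [hW]; positivity
    have h1 : ∀ N ∈ Finset.range 5, ‖iteratedFDeriv ℝ N (ft (⇑q)) x‖ ≤
        (∑ i ∈ Finset.range (N + 1), (N.choose i : ℝ) * c i) * (W * S) := by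
      intro N hN
      rw [← hF, hFg]
      refine (norm_iteratedFDeriv_smul_le hw (g.smooth ⊤) x (by exact_mod_cast le_top)).trans ?_
      rw [Finset.sum_mul]
      refine Finset.sum_le_sum fun i hi => ?_
      have ha := hc i x
      rw [← hW] at ha
      have hb : ‖iteratedFDeriv ℝ (N - i) (⇑g) x‖ ≤ S := by
        rw [hS]
        exact Finset.single_le_sum (f := fun i => ‖iteratedFDeriv ℝ i (⇑g) x‖) (fun _ _ => norm_nonneg _)
          (by simp at hN ⊢; omega)
      calc _ ≤ (N.choose i : ℝ) * (c i * W) * S := by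
            have := hc0 i
            gcongr
        _ = _ := by ring
    have h2 : ∑ N ∈ Finset.range 5, ‖iteratedFDeriv ℝ N (ft (⇑q)) x‖ ≤ W * (A * S) := by
      refine (Finset.sum_le_sum h1).trans (le_of_eq ?_)
      rw [← Finset.sum_mul, ← hA]; ring
    have h3 := ENNReal.ofReal_le_ofReal h2
    rw [ENNReal.ofReal_mul hW0, ENNReal.ofReal_mul hA0, hS,
      ENNReal.ofReal_sum_of_nonneg (fun _ _ => norm_nonneg _),
      ENNReal.ofReal_sum_of_nonneg (fun _ _ => norm_nonneg _)] at h3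
    simp_rw [ofReal_norm] at h3
    rw [jap_rpow, ← hW]
    exact h3
  · have e1 : ∀ x, (∑ i ∈ Finset.range 5, ‖iteratedFDeriv ℝ i (⇑g) x‖ₑ) ^ 2 ≤
        5 * ∑ i ∈ Finset.range 5, ‖iteratedFDeriv ℝ i (⇑g) x‖ₑ ^ 2 := by
      intro x
      have := ENNReal.rpow_sum_le_const_mul_sum_rpow (Finset.range 5) (fun i => ‖iteratedFDeriv ℝ i (⇑g) x‖ₑ) (p := 2) (by norm_num)
      norm_num at this
      exact this
    have e2 : ∀ i ∈ Finset.range 5, Measurable fun x => ‖iteratedFDeriv ℝ i (⇑g) x‖ₑ ^ 2 := fun i _ =>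
      (hcont i).measurable.pow_const 2
    have hgF : (𝓕 (𝓕⁻ g : 𝓢(Euc n, ℂ)) : 𝓢(Euc n, ℂ)) = g := FourierTransform.fourier_fourierInv_eq g
    calc ∫⁻ x, (ENNReal.ofReal A * ∑ i ∈ Finset.range 5, ‖iteratedFDeriv ℝ i (⇑g) x‖ₑ) ^ 2
        ≤ ∫⁻ x, ENNReal.ofReal A ^ 2 * (5 * ∑ i ∈ Finset.range 5, ‖iteratedFDeriv ℝ i (⇑g) x‖ₑ ^ 2) := by
          refine lintegral_mono fun x => ?_
          rw [mul_pow]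
          gcongr
          exact e1 x
      _ = ENNReal.ofReal A ^ 2 * (5 * ∑ i ∈ Finset.range 5, ∫⁻ x, ‖iteratedFDeriv ℝ i (⇑g) x‖ₑ ^ 2) := by
          rw [lintegral_const_mul' _ _ (ENNReal.pow_ne_top ENNReal.ofReal_ne_top),
            lintegral_const_mul' _ _ (by norm_num), lintegral_finsetSum _ e2]
      _ ≤ ENNReal.ofReal A ^ 2 * (5 * ∑ i : Fin 5, (D i : ℝ≥0∞) * (C1 * wSobNorm β 4 (⇑q) ^ 2)) := by
          rw [Finset.sum_range]
          gcongr with i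
          have h5 := hD i (𝓕⁻ g : 𝓢(Euc n, ℂ))
          rw [hgF] at h5
          refine h5.trans ?_
          gcongr
          exact hC1 q g hgj
      _ = _ := by rw [← Finset.sum_mul]; ring

end

section

lemma partialR_zero {k : ℕ} (l : List (Fin k)) : partialR l (fun _ => (0 : ℂ)) = fun _ => 0 := by
  induction l with
  | nil => rfl
  | cons j l ih =>
    have : partialR (j :: l) (fun _ => (0 : ℂ)) =
      fun r => deriv (fun t : ℝ => partialR l (fun _ => (0 : ℂ)) (Function.update r j t)) (r j) := rfl
    rw [this, ih]; simp

lemma G_tval {m k : ℕ} (q : Euc (m + 1) → ℂ) (hq : Continuous (ft q)) (η : Euc (m + 1)) (hη : η ≠ 0) (x : ℝ)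
    (s : Fin k → ℝ) (hs : ∀ i, 0 < s i) :
    (x : ℂ) * Sj k s q η = tval m (ft q) η s
      (x * (‖η‖ ^ (-(k : ℝ)) * ((‖η‖ / 2) ^ m) ^ k), fun _ => false, fun _ => []) := by
  rw [Sj_eq q hq η hη s hs, tval, II, Complex.real_smul, ← mul_assoc]
  congr 1
  simp only [pe]
  push_cast
  simp
  ring

lemma one_factor {m : ℕ} (N J r e : ℝ) (hN : 1 ≤ N) (hJ1 : 1 ≤ J) (hNJ : N ≤ J) (hJN : J ≤ 2 * N) (hr : 0 < r)
    (he : e ≤ 1) :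
    N⁻¹ * (N / 2) ^ m * PP m r * ((r * (N / 2)) ^ m)⁻¹ * (1 + r * (N / 2)) ^ (1 - e) ≤
      4 * J ^ (-e) * (1 + r) ^ (-e) := by
  have hN0 : 0 < N := by linarith
  have hJ0 : 0 < J := by linarith
  have e1 : N⁻¹ * (N / 2) ^ m * PP m r * ((r * (N / 2)) ^ m)⁻¹ = N⁻¹ * (2 / (1 + r)) := by
    unfold PP
    rw [mul_pow]
    field_simp
  rw [e1]
  have h1 : N⁻¹ ≤ 2 / J := by
    rw [inv_eq_one_div, div_le_div_iff₀ hN0 hJ0]; linarith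
  have h2 : (1 + r * (N / 2)) ^ (1 - e) ≤ ((1 + r) * J) ^ (1 - e) := by
    refine Real.rpow_le_rpow (by positivity) ?_ (by linarith)
    nlinarith
  calc N⁻¹ * (2 / (1 + r)) * (1 + r * (N / 2)) ^ (1 - e)
      ≤ 2 / J * (2 / (1 + r)) * ((1 + r) * J) ^ (1 - e) := by gcongr
    _ = 4 * J ^ (-e) * (1 + r) ^ (-e) := by
      rw [Real.mul_rpow (by positivity) hJ0.le, sub_eq_add_neg, Real.rpow_add (by positivity),
        Real.rpow_add hJ0, Real.rpow_one, Real.rpow_one]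
      field_simp
      ring

lemma jap_le_two {n : ℕ} (η : Euc n) (h : 1 ≤ ‖η‖) : jap η ≤ 2 * ‖η‖ := by
  unfold jap
  rw [Real.sqrt_le_left (by positivity)]
  nlinarith

lemma real_bound {m k : ℕ} (η : Euc (m + 1)) (hη : 1 ≤ ‖η‖) (x : ℝ) (hx : x ∈ Icc (0 : ℝ) 1) (r : Fin k → ℝ)
    (hr : ∀ i, 0 < r i) (e : ℝ) (he : e ≤ 1) (L : ℕ) (K : ℝ) (hK : 1 ≤ K) (α β : ℝ) (hα : α ≤ β + k * e) :
    jap η ^ (α - (L : ℝ)) * ((|x * (‖η‖ ^ (-(k : ℝ)) * ((‖η‖ / 2) ^ m) ^ k)| * jap η ^ L *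
      (K ^ k * ∏ i, PP m (r i))) * ((∏ i, ((r i * (‖η‖ / 2)) ^ m))⁻¹ * (jap η ^ (-β) *
        ∏ i, (1 + r i * (‖η‖ / 2)) ^ (1 - e)))) ≤ K ^ k * 4 ^ k * ∏ i, (1 + r i) ^ (-e) := by
  have hJ1 := jap_ge_one η
  have hJ0 := jap_pos η
  have hN0 : 0 < ‖η‖ := by linarith
  have hx0 := hx.1
  rw [abs_of_nonneg (by positivity)]
  have eprod : ∏ i, (‖η‖⁻¹ * (‖η‖ / 2) ^ m * PP m (r i) * ((r i * (‖η‖ / 2)) ^ m)⁻¹ *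
      (1 + r i * (‖η‖ / 2)) ^ (1 - e)) = ‖η‖ ^ (-(k : ℝ)) * ((‖η‖ / 2) ^ m) ^ k * (∏ i, PP m (r i)) *
      (∏ i, ((r i * (‖η‖ / 2)) ^ m))⁻¹ * ∏ i, (1 + r i * (‖η‖ / 2)) ^ (1 - e) := by
    simp only [Finset.prod_mul_distrib, Finset.prod_const, Finset.card_univ, Fintype.card_fin,
      Finset.prod_inv_distrib]
    rw [Real.rpow_neg hN0.le, Real.rpow_natCast, inv_pow]
  have hprod : ∏ i, (‖η‖⁻¹ * (‖η‖ / 2) ^ m * PP m (r i) * ((r i * (‖η‖ / 2)) ^ m)⁻¹ *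
      (1 + r i * (‖η‖ / 2)) ^ (1 - e)) ≤ ∏ i, (4 * jap η ^ (-e) * (1 + r i) ^ (-e)) := by
    refine Finset.prod_le_prod (fun i _ => ?_) fun i _ =>
      one_factor ‖η‖ (jap η) (r i) e hη hJ1 (jap_ge_norm η) (jap_le_two η hη) (hr i) he
    have := hr i
    unfold PP
    positivity
  rw [eprod] at hprod
  have e2 : ∏ i, (4 * jap η ^ (-e) * (1 + r i) ^ (-e)) =
      4 ^ k * jap η ^ (-(k * e)) * ∏ i, (1 + r i) ^ (-e) := by
    simp only [Finset.prod_mul_distrib, Finset.prod_const, Finset.card_univ, Fintype.card_fin]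
    rw [← Real.rpow_natCast (jap η ^ (-e)), ← Real.rpow_mul hJ0.le]
    congr 3; ring
  rw [e2] at hprod
  have hP0 : 0 ≤ ∏ i, (1 + r i) ^ (-e) :=
    Finset.prod_nonneg fun i _ => Real.rpow_nonneg (by have := hr i; linarith) _
  have hjj : jap η ^ (α - (L : ℝ)) * jap η ^ L * jap η ^ (-β) * jap η ^ (-(k * e)) ≤ 1 := by
    rw [← Real.rpow_natCast, ← Real.rpow_add hJ0, ← Real.rpow_add hJ0, ← Real.rpow_add hJ0]
    exact Real.rpow_le_one_of_one_le_of_nonpos hJ1 (by linarith)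
  calc _ = x * K ^ k * (jap η ^ (α - (L : ℝ)) * jap η ^ L * jap η ^ (-β)) *
        (‖η‖ ^ (-(k : ℝ)) * ((‖η‖ / 2) ^ m) ^ k * (∏ i, PP m (r i)) *
      (∏ i, ((r i * (‖η‖ / 2)) ^ m))⁻¹ * ∏ i, (1 + r i * (‖η‖ / 2)) ^ (1 - e)) := by ring
    _ ≤ 1 * K ^ k * (jap η ^ (α - (L : ℝ)) * jap η ^ L * jap η ^ (-β)) *
        (4 ^ k * jap η ^ (-(k * e)) * ∏ i, (1 + r i) ^ (-e)) := by
        have := hx.2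
        have hT : 0 ≤ ‖η‖ ^ (-(k : ℝ)) * ((‖η‖ / 2) ^ m) ^ k * (∏ i, PP m (r i)) *
      (∏ i, ((r i * (‖η‖ / 2)) ^ m))⁻¹ * ∏ i, (1 + r i * (‖η‖ / 2)) ^ (1 - e) := by
          rw [← eprod]
          refine Finset.prod_nonneg fun i _ => ?_
          have := hr i
          unfold PP
          positivity
        gcongr
    _ = K ^ k * 4 ^ k * (∏ i, (1 + r i) ^ (-e)) *
        (jap η ^ (α - (L : ℝ)) * jap η ^ L * jap η ^ (-β) * jap η ^ (-(k * e))) := by ring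
    _ ≤ K ^ k * 4 ^ k * (∏ i, (1 + r i) ^ (-e)) * 1 := by gcongr
    _ = _ := by ring

end

section

/-- the core estimate, with the exponent `e` as a parameter. -/
lemma core (m k : ℕ) (hm : 1 ≤ m) (δ : ℝ) (hδ1 : δ < 1) (β α e : ℝ) (hβ : 0 ≤ β) (he1 : e < 1)
    (hp : 0 ≤ (m : ℝ) - 2 + 2 * e) (hpβ : (m : ℝ) - 2 + 2 * e ≤ 2 * β) (hα : α ≤ β + k * e)
    (a : Fin k → Bool) (C₀ : ℝ) (hC₀ : 1 ≤ C₀) (χ : Euc (m + 1) → ℝ)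
    (hχ01 : ∀ ξ, χ ξ ∈ Set.Icc (0 : ℝ) 1)
    (hχ0 : ∀ ξ : Euc (m + 1), ‖ξ‖ < C₀ → χ ξ = 0) :
    ∃ C : NNReal, ∀ (q : SchwartzMap (Euc (m + 1)) ℂ) (r : Fin k → ℝ), (∀ i, 0 < r i) →
        (∀ i, a i = true → r i ∈ Set.Ioo (1 - δ) (1 + δ)) →
        eLpNorm (fun η : Euc (m + 1) => (jap η ^ (α - ((onesList a).length : ℝ)) : ℝ) •
            partialR (onesList a) (fun s => (χ η : ℂ) * Sj k s (⇑q) η) r) 2 volume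
          ≤ C * ENNReal.ofReal (∏ i : Fin k, (1 + r i) ^ (-e)) * (wSobNorm β 4 (⇑q)) ^ (k + 1) := by
  obtain ⟨K, hK1, hK⟩ := PP_deriv_bound m hδ1
  obtain ⟨C1, hC1⟩ := TT_int_bound m k
  obtain ⟨C2, hC2⟩ := P_bound m k hm β ((m : ℝ) - 2 + 2 * e) hβ hp (by linarith) hpβ
  obtain ⟨C3, hC3⟩ := four_main (m + 1) β
  obtain ⟨L, hL⟩ : ∃ L : ℕ, L = (onesList a).length := ⟨_, rfl⟩
  obtain ⟨A, hA⟩ : ∃ A : NNReal, A = 3 ^ L * (C1 * C2 * Real.toNNReal (K ^ k * 4 ^ k)) := ⟨_, rfl⟩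
  refine ⟨A * (C3 ^ (k + 1)) ^ (1/2 : ℝ), fun q r hr hra => ?_⟩
  obtain ⟨hsm, hbd, h, hhm, hG, hint⟩ := hC3 q
  obtain ⟨P, hP⟩ : ∃ P : ℝ≥0∞, P = ENNReal.ofReal (∏ i : Fin k, (1 + r i) ^ (-e)) := ⟨_, rfl⟩
  obtain ⟨Q, hQ⟩ : ∃ Q : Euc (m + 1) → ℝ≥0∞, Q = fun η => ∫⁻ y, ∏ i, h (chainDiff k η (fun j => (2 : ℝ)⁻¹ • η + y j) i) ^ 2
        ∂(Measure.pi fun _ : Fin k => (volume : Measure (Euc (m + 1)))) := ⟨_, rfl⟩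
  have hpt : ∀ η : Euc (m + 1), ‖(jap η ^ (α - (L : ℝ)) : ℝ) •
      partialR (onesList a) (fun s => (χ η : ℂ) * Sj k s (⇑q) η) r‖ₑ ≤ A * P * Q η ^ (1/2 : ℝ) := by
    intro η
    by_cases hη : ‖η‖ < C₀
    · have : (fun s : Fin k → ℝ => (χ η : ℂ) * Sj k s (⇑q) η) = fun _ => 0 := by
        ext s; rw [hχ0 η hη]; simp
      rw [this, partialR_zero]
      simp
    have hη1 : 1 ≤ ‖η‖ := by linarith [not_lt.1 hη]
    have hη0 : η ≠ 0 := by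
      rw [← norm_pos_iff]; linarith
    have hN0 : 0 < ‖η‖ := by linarith
    have hJ1 := jap_ge_one η
    have hρ : ∀ i, 0 < r i * (‖η‖ / 2) := fun i => by have := hr i; positivity
    have hM := hC2 η (fun i => r i * (‖η‖ / 2)) hρ (Gf (ft (⇑q))) h hhm hG
    have hexp : ((m : ℝ) - ((m : ℝ) - 2 + 2 * e)) / 2 = 1 - e := by ring
    rw [hexp] at hM
    obtain ⟨R1, hR1⟩ : ∃ R : ℝ, R = (∏ i, ((r i * (‖η‖ / 2)) ^ m))⁻¹ := ⟨_, rfl⟩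
    obtain ⟨R2, hR2⟩ : ∃ R : ℝ, R = jap η ^ (-β) * ∏ i, (1 + r i * (‖η‖ / 2)) ^ (1 - e) := ⟨_, rfl⟩
    have hR1n : 0 ≤ R1 := by rw [hR1]; exact inv_nonneg.2 (Finset.prod_nonneg fun i _ => pow_nonneg (hρ i).le _)
    have hR2n : 0 ≤ R2 := by
      rw [hR2]
      exact mul_nonneg (Real.rpow_nonneg (jap_pos η).le _)
        (Finset.prod_nonneg fun i _ => Real.rpow_nonneg (by linarith [hρ i]) _)
    have hpb := partialR_bound hsm hbd η (χ η * (‖η‖ ^ (-(k : ℝ)) * ((‖η‖ / 2) ^ m) ^ k))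
      (fun s => (χ η : ℂ) * Sj k s (⇑q) η)
      (fun s hs => G_tval (⇑q) hsm.continuous η hη0 (χ η) s hs) (onesList a)
      ((List.nodup_finRange k).filter _) r hr (jap η) hJ1 (by linarith [jap_ge_norm η]) K hK1
      (fun i hi => hK _ (hra i (by simpa [onesList] using hi)))
      (C1 * ENNReal.ofReal R1 * (C2 * ENNReal.ofReal R2 * Q η ^ (1/2 : ℝ)))
      (fun w hw => by
        refine (hC1 (ft (⇑q)) hsm η ((2 : ℝ)⁻¹ • η) w hw (fun i => r i * (‖η‖ / 2)) hρ).trans ?_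
        rw [hR1, hR2, hQ]
        gcongr)
    rw [← hL] at hpb
    have hrb := real_bound (m := m) η hη1 (χ η) (hχ01 η) r hr e he1.le L K hK1 α β hα
    rw [← hR1, ← hR2] at hrb
    obtain ⟨R3, hR3⟩ : ∃ R : ℝ, R = |χ η * (‖η‖ ^ (-(k : ℝ)) * ((‖η‖ / 2) ^ m) ^ k)| * jap η ^ L *
      (K ^ k * ∏ i, PP m (r i)) := ⟨_, rfl⟩
    rw [← hR3] at hrb hpb
    have hR3n : 0 ≤ R3 := by
      rw [hR3]
      have : 0 ≤ ∏ i, PP m (r i) := Finset.prod_nonneg fun i _ => by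
        have := hr i
        unfold PP; positivity
      have := jap_pos η
      positivity
    have hj0 : 0 ≤ jap η ^ (α - (L : ℝ)) := Real.rpow_nonneg (jap_pos η).le _
    rw [enorm_smul]
    have hj : ‖jap η ^ (α - (L : ℝ))‖ₑ = ENNReal.ofReal (jap η ^ (α - (L : ℝ))) := by
      rw [← ofReal_norm, Real.norm_of_nonneg hj0]
    rw [hj]
    have hrb' := ENNReal.ofReal_le_ofReal hrb
    rw [ENNReal.ofReal_mul hj0, ENNReal.ofReal_mul hR3n, ENNReal.ofReal_mul hR1n,
      ENNReal.ofReal_mul (by positivity), ← hP] at hrb'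
    calc ENNReal.ofReal (jap η ^ (α - (L : ℝ))) *
          ‖partialR (onesList a) (fun s => (χ η : ℂ) * Sj k s (⇑q) η) r‖ₑ
        ≤ ENNReal.ofReal (jap η ^ (α - (L : ℝ))) * (3 ^ L * (ENNReal.ofReal R3 *
          (C1 * ENNReal.ofReal R1 * (C2 * ENNReal.ofReal R2 * Q η ^ (1/2 : ℝ))))) := by gcongr
      _ = 3 ^ L * (C1 * C2) * (ENNReal.ofReal (jap η ^ (α - (L : ℝ))) * (ENNReal.ofReal R3 *
          (ENNReal.ofReal R1 * ENNReal.ofReal R2))) * Q η ^ (1/2 : ℝ) := by ring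
      _ ≤ 3 ^ L * (C1 * C2) * (ENNReal.ofReal (K ^ k * 4 ^ k) * P) * Q η ^ (1/2 : ℝ) := by gcongr
      _ = A * P * Q η ^ (1/2 : ℝ) := by
        rw [hA, ENNReal.ofReal]; push_cast; ring
  have hPf : P ≠ ∞ := by rw [hP]; exact ENNReal.ofReal_ne_top
  have hQint : ∫⁻ η, Q η ≤ (C3 * wSobNorm β 4 (⇑q) ^ 2) ^ (k + 1) := by
    rw [hQ]
    refine (full_int (fun x => h x ^ 2) (hhm.pow_const 2)).trans ?_
    gcongr
  rw [eLpNorm_two_eq, ← hP, ← hL]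
  calc (∫⁻ η, ‖(jap η ^ (α - (L : ℝ)) : ℝ) •
      partialR (onesList a) (fun s => (χ η : ℂ) * Sj k s (⇑q) η) r‖ₑ ^ 2) ^ (1/2 : ℝ)
      ≤ (∫⁻ η, (A * P) ^ 2 * Q η) ^ (1/2 : ℝ) := by
        refine ENNReal.rpow_le_rpow (lintegral_mono fun η => ?_) (by norm_num)
        refine (pow_le_pow_left' (hpt η) 2).trans (le_of_eq ?_)
        rw [mul_pow (_ * P), ← ENNReal.rpow_natCast (Q η ^ (1/2 : ℝ)), ← ENNReal.rpow_mul]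
        norm_num
    _ = (A * P) * (∫⁻ η, Q η) ^ (1/2 : ℝ) := by
        rw [lintegral_const_mul' _ _ (ENNReal.pow_ne_top (ENNReal.mul_ne_top ENNReal.coe_ne_top hPf)),
          ENNReal.mul_rpow_of_nonneg _ _ (by norm_num), ← ENNReal.rpow_natCast, ← ENNReal.rpow_mul]
        norm_num
    _ ≤ (A * P) * ((C3 * wSobNorm β 4 (⇑q) ^ 2) ^ (k + 1)) ^ (1/2 : ℝ) := by gcongr
    _ = _ := by
        have e5 : ((wSobNorm β 4 (⇑q) ^ 2) ^ (k + 1)) ^ (1/2 : ℝ) = wSobNorm β 4 (⇑q) ^ (k + 1) := by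
          rw [← pow_mul, mul_comm 2, pow_mul, ← ENNReal.rpow_natCast (_ ^ (k + 1)), ← ENNReal.rpow_mul]
          norm_num
        rw [mul_pow, ENNReal.mul_rpow_of_nonneg _ _ (by norm_num), e5, ENNReal.coe_mul,
          ENNReal.coe_rpow_of_nonneg _ (by norm_num), ENNReal.coe_pow]
        ring

end

/-- the spherical operators `χ·S_{j,𝐫}(q)` (`j = k + 1 ≥ 3`) are smooth in
`𝐫` on `(0,∞)^{j-1}` and their derivatives `∂_𝐫^𝐚` satisfy the weighted `L²_{α-|𝐚|}`
estimate with constant `C ∏(1+rᵢ)^{-γ}` against `‖q‖ʲ_{W^{β,2}_4}`. -/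
theorem stmt10 (n k : ℕ) (hn : 2 ≤ n) (hk : 2 ≤ k) (δ : ℝ) (hδ0 : 0 < δ) (hδ1 : δ < 1)
    (β α : ℝ) (hβ : 0 ≤ β)
    (hrange : (((n : ℝ) - 3) / 2 < β ∧ β < ((n : ℝ) - 1) / 2 ∧
        α ≤ β + (k : ℝ) * (β - ((n : ℝ) - 3) / 2)) ∨
      (((n : ℝ) - 1) / 2 ≤ β ∧ α < β + (k : ℝ)))
    (a : Fin k → Bool)
    (C₀ : ℝ) (hC₀ : 1 ≤ C₀) (χ : Euc n → ℝ) (hχsm : ContDiff ℝ (⊤ : ℕ∞) χ)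
    (hχ01 : ∀ ξ, χ ξ ∈ Set.Icc (0 : ℝ) 1)
    (hχ1 : ∀ ξ : Euc n, 2 * C₀ < ‖ξ‖ → χ ξ = 1)
    (hχ0 : ∀ ξ : Euc n, ‖ξ‖ < C₀ → χ ξ = 0) :
    ∃ γ C : ℝ, 0 < γ ∧ 0 < C ∧
      (∀ (q : SchwartzMap (Euc n) ℂ) (η : Euc n), η ≠ 0 →
        ContDiffOn ℝ (⊤ : ℕ∞) (fun s : Fin k → ℝ => (χ η : ℂ) * Sj k s (⇑q) η)
          {s : Fin k → ℝ | ∀ i, 0 < s i}) ∧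
      ∀ (q : SchwartzMap (Euc n) ℂ) (r : Fin k → ℝ),
        (∀ i, a i = true → r i ∈ Set.Ioo (1 - δ) (1 + δ)) →
        (∀ i, a i = false → 0 < r i) →
        eLpNorm (fun η : Euc n => (jap η ^ (α - ((onesList a).length : ℝ)) : ℝ) •
            partialR (onesList a) (fun s => (χ η : ℂ) * Sj k s (⇑q) η) r) 2 volume
          ≤ ENNReal.ofReal (C * ∏ i : Fin k, (1 + r i) ^ (-γ)) *
            (wSobNorm β 4 (⇑q)) ^ (k + 1) := by
  obtain ⟨m, rfl⟩ : ∃ m, n = m + 1 := ⟨n - 1, by omega⟩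
  have hm : 1 ≤ m := by omega
  have hmR : (1 : ℝ) ≤ m := by exact_mod_cast hm
  have hkR : (2 : ℝ) ≤ k := by exact_mod_cast hk
  obtain ⟨e, he0, he1, hp, hpβ, hα⟩ : ∃ e : ℝ, 0 < e ∧ e < 1 ∧ 0 ≤ (m : ℝ) - 2 + 2 * e ∧
      (m : ℝ) - 2 + 2 * e ≤ 2 * β ∧ α ≤ β + k * e := by
    push_cast at hrange
    rcases hrange with ⟨h1, h2, h3⟩ | ⟨h1, h2⟩
    · exact ⟨β - ((m : ℝ) + 1 - 3) / 2, by linarith, by linarith, by linarith, by linarith, h3⟩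
    · have hlt : (α - β) / k < 1 := by rw [div_lt_one (by linarith)]; linarith
      refine ⟨max (1/2) ((α - β) / k), lt_max_of_lt_left (by norm_num), max_lt (by norm_num) hlt, ?_, ?_, ?_⟩
      · linarith [le_max_left (1/2 : ℝ) ((α - β) / k)]
      · linarith [max_lt (by norm_num : (1/2 : ℝ) < 1) hlt]
      · have h4 := le_max_right (1/2 : ℝ) ((α - β) / k)
        rw [div_le_iff₀ (by linarith)] at h4
        linarith
  obtain ⟨C, hC⟩ := core m k hm δ hδ1 β α e hβ he1 hp hpβ hα a C₀ hC₀ χ hχ01 hχ0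
  refine ⟨e, (C : ℝ) + 1, he0, by positivity, fun q η hη => ?_, fun q r hr1 hr2 => ?_⟩
  · obtain ⟨C3, hC3⟩ := four_main (m + 1) β
    exact Sj_contDiffOn (⇑q) (hC3 q).1 η hη (χ η)
  · have hr : ∀ i, 0 < r i := fun i => by
      cases h : a i
      · exact hr2 i h
      · have := (hr1 i h).1; linarith
    refine (hC q r hr hr1).trans ?_
    gcongr
    rw [ENNReal.ofReal_mul (by positivity)]
    gcongr
    rw [← ENNReal.ofReal_coe_nnreal]
    exact ENNReal.ofReal_le_ofReal (by linarith)
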